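/- Every 3-connected nonbipartite graph of minimum degree at least 5 and order at least 7 contains 5 cycles of consecutive lengths. -/

import Mathlib

open SimpleGraph

/-- `G` is `k`-connected: more than `k` vertices, and deleting any set of fewer than
`k` vertices leaves a connected graph. -/
def KConnected {V : Type*} (G : SimpleGraph V) (k : ℕ) : Prop :=
  k < Nat.card V ∧ ∀ S : Set V, S.Finite → S.ncard < k → (G.induce Sᶜ).Connected

/-- `G + xy`: the graph `G` with the edge `xy` added (equal to `G` if already present). -/
def AddEdge {V : Type*} (G : SimpleGraph V) (x y : V) : SimpleGraph V :=
  G ⊔ SimpleGraph.fromEdgeSet {s(x, y)}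

/-- `G` has a cycle of length `n`. -/
def HasCycleLength {V : Type*} (G : SimpleGraph V) (n : ℕ) : Prop :=
  ∃ (v : V) (c : G.Walk v v), c.IsCycle ∧ c.length = n

/-- `G` contains `k` cycles of consecutive lengths. -/
def HasConsecCycles {V : Type*} (G : SimpleGraph V) (k : ℕ) : Prop :=
  ∃ m : ℕ, ∀ i < k, HasCycleLength G (m + i)

namespace ConsecCycles

set_option linter.unusedSectionVars false

/-- `S` contains a sequence of integers with gaps at most two that stretches over at least `t`. -/
def Span (S : ℕ → Prop) (t : ℕ) : Prop :=
  ∃ a b, a + t ≤ b ∧ S a ∧ S b ∧ ∀ i, a ≤ i → i < b → S i ∨ S (i + 1)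

theorem Span.mono {S T : ℕ → Prop} {s t : ℕ} (h : Span S s) (hST : ∀ n, S n → T n)
    (hts : t ≤ s) : Span T t := by
  obtain ⟨a, b, hab, ha, hb, h⟩ := h
  exact ⟨a, b, by omega, hST _ ha, hST _ hb, fun i h1 h2 => (h i h1 h2).imp (hST _) (hST _)⟩

theorem Span.add {S R T : ℕ → Prop} {s t : ℕ} (hS : Span S s) (hR : Span R t)
    (h : ∀ n m, S n → R m → T (n + m)) : Span T (s + t) := by
  obtain ⟨a, b, hab, ha, hb, h1⟩ := hS
  obtain ⟨c, d, hcd, hc, hd, h2⟩ := hR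
  refine ⟨a + c, b + d, by omega, h _ _ ha hc, h _ _ hb hd, fun i hi hi' => ?_⟩
  rcases Nat.lt_or_ge i (b + c) with hlt | hge
  · rcases h1 (i - c) (by omega) (by omega) with h3 | h3
    · left; convert h _ _ h3 hc using 1; omega
    · right; convert h _ _ h3 hc using 1; omega
  · rcases h2 (i - b) (by omega) (by omega) with h3 | h3
    · left; convert h _ _ hb h3 using 1; omega
    · right; convert h _ _ hb h3 using 1; omega

theorem Span.shift {S T : ℕ → Prop} {t : ℕ} (k : ℕ) (hS : Span S t)
    (h : ∀ n, S n → T (n + k)) : Span T t := by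
  have : Span (fun n => n = k) 0 := ⟨k, k, by omega, rfl, rfl, by omega⟩
  exact hS.add this (by rintro n m h1 rfl; exact h _ h1)

theorem Span.of_step {S : ℕ → Prop} {n : ℕ} (h1 : S n) (h2 : S (n + 1)) : Span S 1 :=
  ⟨n, n + 1, by omega, h1, h2, fun i _ _ => by
    obtain rfl : i = n := by omega
    exact .inl h1⟩

theorem Span.of_skip {S : ℕ → Prop} {n : ℕ} (h1 : S n) (h2 : S (n + 2)) : Span S 2 :=
  ⟨n, n + 2, by omega, h1, h2, fun i _ _ => by
    obtain rfl | rfl : i = n ∨ i = n + 1 := by omega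
    · exact .inl h1
    · exact .inr h2⟩

variable {V : Type*} [DecidableEq V] {G : SimpleGraph V}

/-- `PathIn G D u v n`: there is a path of `G` from `u` to `v` on `n` vertices, all in `D`. -/
inductive PathIn (G : SimpleGraph V) : Finset V → V → V → ℕ → Prop
  | single {D : Finset V} {u : V} : u ∈ D → PathIn G D u u 1
  | cons {D : Finset V} {u w v : V} {n : ℕ} :
      u ∈ D → G.Adj u w → PathIn G (D.erase u) w v n → PathIn G D u v (n + 1)

namespace PathIn

theorem mono {D E : Finset V} {u v : V} {n : ℕ} (h : PathIn G D u v n) (hDE : D ⊆ E) :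
    PathIn G E u v n := by
  induction h generalizing E with
  | single h => exact .single (hDE h)
  | cons h a _ ih => exact .cons (hDE h) a (ih (Finset.erase_subset_erase _ hDE))

theorem left_mem {D : Finset V} {u v : V} {n : ℕ} (h : PathIn G D u v n) : u ∈ D := by
  cases h <;> assumption

theorem pos {D : Finset V} {u v : V} {n : ℕ} (h : PathIn G D u v n) : 1 ≤ n := by
  cases h <;> omega

theorem cons' {D E : Finset V} {u w v : V} {n : ℕ} (h : PathIn G D w v n) (hu : u ∉ D)
    (hE : u ∈ E) (hDE : D ⊆ E) (ha : G.Adj u w) : PathIn G E u v (n + 1) :=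
  .cons hE ha (h.mono fun x hx => by grind)

theorem append {D E F : Finset V} {u v w x : V} {n m : ℕ} (h : PathIn G D u v n)
    (h' : PathIn G E w x m) (ha : G.Adj v w) (hDE : Disjoint D E) (hD : D ⊆ F) (hE : E ⊆ F) :
    PathIn G F u x (n + m) := by
  induction h generalizing F with
  | single hu =>
    rw [add_comm]
    exact h'.cons' (Finset.disjoint_left.1 hDE hu) (hD hu) hE ha
  | @cons D u y v n hu ha' _ ih =>
    have h1 : u ∉ E := Finset.disjoint_left.1 hDE hu
    rw [show n + 1 + m = n + m + 1 by omega]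
    refine .cons (hD hu) ha' (ih ha (hDE.mono_left (Finset.erase_subset _ _)) ?_ ?_)
    · exact Finset.erase_subset_erase _ hD
    · intro z hz
      grind

theorem symm {D : Finset V} {u v : V} {n : ℕ} (h : PathIn G D u v n) : PathIn G D v u n := by
  induction h with
  | single h => exact .single h
  | @cons D u w v n hu ha _ ih =>
    refine ih.append (.single (Finset.mem_singleton_self u)) ha.symm ?_
      (Finset.erase_subset _ _) (by simpa using hu)
    simp

theorem avoid_or {D : Finset V} {u v : V} {n : ℕ} (h : PathIn G D u v n) (P : Finset V) :
    PathIn G (D \ P) u v n ∨ ∃ p ∈ P, p ∈ D ∧ ∃ m, PathIn G (insert p (D \ P)) p v m := by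
  induction h with
  | @single D u hu =>
    by_cases hP : u ∈ P
    · exact .inr ⟨u, hP, hu, 1, .single (by simp)⟩
    · exact .inl (.single (by grind))
  | @cons D u w v n hu ha _ ih =>
    rcases ih with ih | ⟨p, hp, hpD, m, ih⟩
    · by_cases hP : u ∈ P
      · exact .inr ⟨u, hP, hu, n + 1, ih.cons' (by simp) (by simp)
          (by intro x; grind) ha⟩
      · exact .inl (ih.cons' (by simp) (by grind) (by intro x; grind) ha)
    · exact .inr ⟨p, hp, Finset.mem_of_mem_erase hpD, m, ih.mono (by intro x; grind)⟩

theorem exists_walk {D : Finset V} {u v : V} {n : ℕ} (h : PathIn G D u v n) :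
    ∃ p : G.Walk u v, p.IsPath ∧ p.length + 1 = n ∧ ∀ x ∈ p.support, x ∈ D := by
  induction h with
  | @single D u hu => exact ⟨.nil, by simp, by simp, by simpa using hu⟩
  | @cons D u w v n hu ha _ ih =>
    obtain ⟨p, hp, hl, hs⟩ := ih
    refine ⟨.cons ha p, ?_, by simp [hl], ?_⟩
    · rw [Walk.cons_isPath_iff]
      exact ⟨hp, fun h => by simpa using hs _ h⟩
    · intro x hx
      rw [Walk.support_cons, List.mem_cons] at hx
      rcases hx with rfl | hx
      · exact hu
      · exact Finset.mem_of_mem_erase (hs _ hx)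

theorem hasCycleLength {D : Finset V} {u v : V} {n : ℕ} (h : PathIn G D u v n) (hn : 3 ≤ n)
    (ha : G.Adj v u) : HasCycleLength G n := by
  obtain ⟨p, hp, hl, -⟩ := h.exists_walk
  refine ⟨v, .cons ha p, ?_, by simpa using hl⟩
  rw [Walk.cons_isCycle_iff]
  refine ⟨hp, fun he => ?_⟩
  have := hp.length_eq_one_of_mem_edges (by rwa [Sym2.eq_swap])
  omega

end PathIn

/-- `Conn G D`: the set `D` is nonempty and induces a connected subgraph of `G`. -/
def Conn (G : SimpleGraph V) (D : Finset V) : Prop :=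
  D.Nonempty ∧ ∀ S ⊆ D, S.Nonempty → (∀ u ∈ S, ∀ v ∈ D, G.Adj u v → v ∈ S) → D ⊆ S

/-- `Cl G D Q F`: `F` is a nonempty union of components of the subgraph induced by `D \ Q`. -/
def Cl (G : SimpleGraph V) (D Q F : Finset V) : Prop :=
  F.Nonempty ∧ (∀ u ∈ F, u ∈ D ∧ u ∉ Q ∧ ∀ v ∈ D, G.Adj u v → v ∈ F ∨ v ∈ Q)

theorem Conn.exists_adj {D S : Finset V} (hD : Conn G D) {u v : V} (hu : u ∈ D) (hv : v ∈ D)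
    (huS : u ∈ S) (hvS : v ∉ S) : ∃ x ∈ D, ∃ y ∈ D, x ∈ S ∧ y ∉ S ∧ G.Adj x y := by
  by_contra! h
  exact hvS (Finset.mem_of_mem_inter_left
    (hD.2 (S ∩ D) (Finset.inter_subset_right) ⟨u, by grind⟩ (fun x hx y hy hxy => by grind) hv))

theorem Conn.singleton (u : V) : Conn G {u} := by
  refine ⟨by simp, fun S hS hne _ => ?_⟩
  rcases Finset.subset_singleton_iff.1 hS with h | h
  · simp [h] at hne
  · simp [h]

theorem Conn.union {D E : Finset V} (hD : Conn G D) (hE : Conn G E)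
    (h : ∃ u ∈ D, ∃ v ∈ E, G.Adj u v) : Conn G (D ∪ E) := by
  obtain ⟨x, hx, y, hy, hxy⟩ := h
  refine ⟨hD.1.mono Finset.subset_union_left, fun S hS hne hcl => ?_⟩
  have h1 : ∀ z ∈ D, z ∈ S → D ⊆ S := fun z hz hzS w hw => by
    by_contra hwS
    obtain ⟨a, ha, b, hb, haS, hbS, hab⟩ := hD.exists_adj hz hw hzS hwS
    exact hbS (hcl a haS b (by grind) hab)
  have h2 : ∀ z ∈ E, z ∈ S → E ⊆ S := fun z hz hzS w hw => by
    by_contra hwS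
    obtain ⟨a, ha, b, hb, haS, hbS, hab⟩ := hE.exists_adj hz hw hzS hwS
    exact hbS (hcl a haS b (by grind) hab)
  obtain ⟨z, hz⟩ := hne
  have h3 : D ⊆ S := by
    rcases Finset.mem_union.1 (hS hz) with h | h
    · exact h1 z h hz
    · exact h1 x hx (hcl y (h2 z h hz hy) x (by grind) hxy.symm)
  have h4 : E ⊆ S := h2 y hy (hcl x (h3 hx) y (by grind) hxy)
  exact Finset.union_subset h3 h4

theorem Conn.insert_adj {D : Finset V} {x : V} (hD : Conn G D)
    (h : ∃ v ∈ D, G.Adj x v) : Conn G (insert x D) := by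
  rw [Finset.insert_eq]
  exact (Conn.singleton x).union hD ⟨x, by simp, h⟩

theorem Conn.exists_path {D : Finset V} (hD : Conn G D) {u v : V} (hu : u ∈ D) (hv : v ∈ D) :
    ∃ n, PathIn G D u v n := by
  classical
  have := hD.2 (D.filter fun u => ∃ n, PathIn G D u v n) (Finset.filter_subset _ _)
    ⟨v, by simpa [hv] using ⟨1, .single hv⟩⟩ (fun x hx y hy hxy => ?_) hu
  · exact (Finset.mem_filter.1 this).2
  · obtain ⟨hx, n, hn⟩ := Finset.mem_filter.1 hx
    refine Finset.mem_filter.2 ⟨hy, ?_⟩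
    rcases hn.avoid_or {y} with h | ⟨p, hp, -, m, h⟩
    · exact ⟨n + 1, h.cons' (by simp) hy Finset.sdiff_subset hxy.symm⟩
    · obtain rfl := Finset.mem_singleton.1 hp
      exact ⟨m, h.mono (by intro z; grind)⟩

theorem exists_comp {D Q F : Finset V} (hF : Cl G D Q F) {u : V} (hu : u ∈ F) :
    ∃ K ⊆ F, Cl G D Q K ∧ Conn G K ∧ u ∈ K := by
  classical
  obtain ⟨K, hK⟩ := ((F.powerset.filter fun K => u ∈ K ∧ Cl G D Q K)).exists_minimal
    ⟨F, by simp [hu, hF]⟩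
  obtain ⟨h1, h2, h3⟩ : K ⊆ F ∧ u ∈ K ∧ Cl G D Q K := by simpa using hK.1
  have key : ∀ S ⊆ K, u ∈ S → (∀ u ∈ S, ∀ v ∈ K, G.Adj u v → v ∈ S) → K ⊆ S := by
    intro S hS huS hcl
    refine hK.2 (y := S) (by
      simp only [Finset.mem_filter, Finset.mem_powerset]
      refine ⟨hS.trans h1, huS, ⟨u, huS⟩, fun x hx => ?_⟩
      have := h3.2 x (hS hx)
      grind) hS
  refine ⟨K, h1, h3, ⟨⟨u, h2⟩, fun S hS hne hcl => ?_⟩, h2⟩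
  by_cases huS : u ∈ S
  · exact key S hS huS hcl
  · have h4 := key (K \ S) Finset.sdiff_subset (by grind) (fun x hx y hy hxy => by
      have := hcl y
      have := hxy.symm
      grind)
    obtain ⟨z, hz⟩ := hne
    have := h4 (hS hz)
    grind

theorem exists_comp_of_mem {D Q : Finset V} {u : V} (hu : u ∈ D) (hQ : u ∉ Q) :
    ∃ K, Cl G D Q K ∧ Conn G K ∧ u ∈ K := by
  obtain ⟨K, -, hK⟩ := exists_comp (G := G) (D := D) (Q := Q) (F := D \ Q) (u := u)
    ⟨⟨u, by grind⟩, fun x hx => by grind⟩ (by grind)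
  exact ⟨K, hK⟩

theorem Conn.exists_path_from {D P B : Finset V} (hD : Conn G D) (hP : ∃ p ∈ P, p ∈ D)
    (hB : ∃ b ∈ B, b ∈ D) :
    ∃ p ∈ P, ∃ b ∈ B, ∃ m, p ∈ D ∧ b ∈ D ∧ PathIn G (insert p (D \ P)) p b m := by
  obtain ⟨p, hp, hpD⟩ := hP
  obtain ⟨b, hb, hbD⟩ := hB
  obtain ⟨n, hn⟩ := hD.exists_path hpD hbD
  rcases hn.avoid_or P with h | ⟨q, hq, hqD, m, h⟩
  · exact absurd h.left_mem (by grind)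
  · exact ⟨q, hq, b, hb, m, hqD, hbD, h⟩

variable {V : Type*} [DecidableEq V] {G : SimpleGraph V}

open Classical in
/-- The number of neighbours of `v` in `D`. -/
noncomputable def dg (G : SimpleGraph V) (D : Finset V) (v : V) : ℕ := (D.filter (G.Adj v)).card

open Classical in
/-- The vertices with a neighbour in `P`. -/
noncomputable def nb [Fintype V] (G : SimpleGraph V) (P : Finset V) : Finset V :=
  Finset.univ.filter fun v => ∃ p ∈ P, G.Adj v p

@[simp] theorem mem_nb [Fintype V] {P : Finset V} {v : V} :
    v ∈ nb G P ↔ ∃ p ∈ P, G.Adj v p := by simp [nb]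

theorem mem_nb_singleton [Fintype V] {p : V} {v : V} : v ∈ nb G {p} ↔ G.Adj v p := by simp

/-- The degree of `v` in `D` after adding one vertex joined to `A` and another joined to `B`. -/
noncomputable def rdeg (G : SimpleGraph V) (D A B : Finset V) (v : V) : ℕ :=
  dg G D v + (if v ∈ A then 1 else 0) + (if v ∈ B then 1 else 0)

theorem rdeg_comm {D A B : Finset V} {v : V} : rdeg G D A B v = rdeg G D B A v := by
  unfold rdeg; omega

theorem dg_le {D E Q : Finset V} {v : V} (h : ∀ w ∈ D, G.Adj v w → w ∈ E ∨ w ∈ Q) :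
    dg G D v ≤ dg G E v + dg G Q v := by
  unfold dg
  refine le_trans (Finset.card_le_card ?_) (Finset.card_union_le _ _)
  intro w
  simp only [Finset.mem_filter, Finset.mem_union]
  intro hw
  have := h w hw.1 hw.2
  tauto

theorem dg_mono {D E : Finset V} {v : V} (h : ∀ w ∈ D, G.Adj v w → w ∈ E) :
    dg G D v ≤ dg G E v := by
  have := dg_le (G := G) (Q := ∅) (v := v) (fun w hw ha => Or.inl (h w hw ha))
  simpa [dg] using this

open Classical in
theorem dg_le_card {D E : Finset V} {v : V} (h : ∀ w ∈ D, G.Adj v w → w ∈ E) :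
    dg G D v ≤ E.card :=
  (dg_mono h).trans (Finset.card_filter_le _ _)

open Classical in
theorem dg_lt_card {D : Finset V} {v : V} (hv : v ∈ D) : dg G D v < D.card :=
  Finset.card_lt_card ⟨Finset.filter_subset _ _, fun h => by simpa using h hv⟩

theorem dg_eq_zero {D : Finset V} {v : V} (h : ∀ w ∈ D, ¬ G.Adj v w) : dg G D v = 0 := by
  simpa [dg] using h

theorem exists_adj_of_dg {D : Finset V} {v : V} (h : 1 ≤ dg G D v) : ∃ w ∈ D, G.Adj v w := by
  obtain ⟨w, hw⟩ := Finset.card_pos.1 h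
  exact ⟨w, by simpa using hw⟩

open Classical in
theorem exists_adj_ne_of_dg {D : Finset V} {v : V} (h : 2 ≤ dg G D v) (x : V) :
    ∃ w ∈ D, G.Adj v w ∧ w ≠ x := by
  obtain ⟨w, hw, hx⟩ := Finset.exists_mem_ne (s := D.filter (G.Adj v)) h x
  exact ⟨w, by grind⟩

theorem dg_le_one {D : Finset V} {v : V}
    (h : ∀ x ∈ D, ∀ y ∈ D, G.Adj v x → G.Adj v y → x = y) : dg G D v ≤ 1 :=
  Finset.card_le_one.2 fun x hx y hy => by
    simp only [Finset.mem_filter] at hx hy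
    exact h x hx.1 y hy.1 hx.2 hy.2

theorem dg_le_nb [Fintype V] {D : Finset V} {v : V}
    (h : ∀ x ∈ D, ∀ y ∈ D, G.Adj v x → G.Adj v y → x = y) :
    dg G D v ≤ if v ∈ nb G D then 1 else 0 := by
  split_ifs with hv
  · exact dg_le_one h
  · exact (dg_eq_zero fun w hw ha => hv (mem_nb.2 ⟨w, hw, ha⟩)).le

theorem dg_singleton_le [Fintype V] {e v : V} :
    dg G {e} v ≤ if v ∈ nb G {e} then 1 else 0 := dg_le_nb (by grind)

/-- There is a path on `n` vertices in `D` from `A` to `B`. -/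
def Len (G : SimpleGraph V) (D A B : Finset V) (n : ℕ) : Prop :=
  ∃ u ∈ A, ∃ v ∈ B, PathIn G D u v n

theorem Len.symm {D A B : Finset V} {n : ℕ} (h : Len G D A B n) : Len G D B A n := by
  obtain ⟨u, hu, v, hv, h⟩ := h
  exact ⟨v, hv, u, hu, h.symm⟩

theorem spanLen_comm {D A B : Finset V} {t : ℕ} (h : Span (Len G D A B) t) :
    Span (Len G D B A) t := h.mono (fun _ => Len.symm) le_rfl

namespace Cl

variable {D Q F : Finset V}

theorem subset (h : Cl G D Q F) : F ⊆ D := fun _ hx => (h.2 _ hx).1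

theorem notMem (h : Cl G D Q F) {x : V} (hx : x ∈ Q) : x ∉ F := fun hF => (h.2 _ hF).2.1 hx

theorem adj (h : Cl G D Q F) {u v : V} (hu : u ∈ F) (hv : v ∈ D) (ha : G.Adj u v) :
    v ∈ F ∨ v ∈ Q := (h.2 _ hu).2.2 _ hv ha

/-- Some vertex of `F` is adjacent to a vertex of `Q`, if `D` is connected and meets `Q`. -/
theorem exists_adj (h : Cl G D Q F) (hD : Conn G D) {x : V} (hxD : x ∈ D) (hx : x ∉ F) :
    ∃ u ∈ F, ∃ v ∈ D, v ∈ Q ∧ G.Adj u v := by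
  obtain ⟨z, hz⟩ := h.1
  obtain ⟨u, -, v, hv, huF, hvF, ha⟩ := hD.exists_adj (h.subset hz) hxD hz hx
  exact ⟨u, huF, v, hv, (h.adj huF hv ha).resolve_left hvF, ha⟩

/-- In a connected set, a cut vertex is adjacent to everything it cuts off. -/
theorem adj_cut {e : V} (h : Cl G D {e} F) (hD : Conn G D) {x : V} (hxD : x ∈ D) (hx : x ∉ F) :
    e ∈ D ∧ ∃ u ∈ F, G.Adj u e := by
  obtain ⟨u, hu, v, hv, hvQ, ha⟩ := h.exists_adj hD hxD hx
  obtain rfl := Finset.mem_singleton.1 hvQ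
  exact ⟨hv, u, hu, ha⟩

theorem conn_sdiff {e : V} (h : Cl G D {e} F) (hD : Conn G D) (he : e ∈ D) :
    Conn G (D \ F) := by
  have heF : e ∉ F := h.notMem (by simp)
  refine ⟨⟨e, by grind⟩, fun S hS hne hcl => ?_⟩
  have key : ∀ S ⊆ D \ F, e ∈ S → (∀ u ∈ S, ∀ v ∈ D \ F, G.Adj u v → v ∈ S) → D \ F ⊆ S := by
    intro S hS heS hcl x hx
    by_contra hxS
    obtain ⟨u, huD, v, hvD, hu, hv, ha⟩ :=
      hD.exists_adj (S := S ∪ F) he (Finset.mem_sdiff.1 hx).1 (by grind) (by grind)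
    have := h.adj (u := u) (v := v)
    grind
  by_cases heS : e ∈ S
  · exact key S hS heS hcl
  · obtain ⟨z, hz⟩ := hne
    have := key ((D \ F) \ S) Finset.sdiff_subset (by grind) (fun u hu v hv ha => by
      have := hcl v
      have := ha.symm
      grind) (hS hz)
    grind

theorem dg_le_nb [Fintype V] {e : V} (h : Cl G D {e} F) {v : V} (hv : v ∈ F) :
    dg G D v ≤ dg G F v + if v ∈ nb G {e} then 1 else 0 :=
  (dg_le fun _ hw ha => h.adj hv hw ha).trans (Nat.add_le_add_left dg_singleton_le _)

end Cl

/-- Cutting off a piece at a single vertex: extend paths out of the piece. -/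
theorem Len.through [Fintype V] {D K E A B : Finset V} {e : V} {t : ℕ}
    (h : Span (Len G K A (nb G {e})) t) (hE : Conn G E) (he : e ∈ E) (hB : ∃ b ∈ B, b ∈ E)
    (hKE : Disjoint K E) (hK : K ⊆ D) (hE' : E ⊆ D) : Span (Len G D A B) t := by
  obtain ⟨b, hb, hbE⟩ := hB
  obtain ⟨m, hm⟩ := hE.exists_path he hbE
  refine h.shift m fun n ⟨u, hu, v, hv, hp⟩ => ⟨u, hu, b, hb, ?_⟩
  exact hp.append hm (mem_nb_singleton.1 hv) hKE hK hE'

/-- Prefixing paths by a neighbour in `A`. -/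
theorem Len.prepend [Fintype V] {D K A P B : Finset V} {n : ℕ}
    (h : Len G K (nb G P) B n) (hP : ∀ p ∈ P, p ∈ A ∧ p ∈ D ∧ p ∉ K) (hK : K ⊆ D) :
    Len G D A B (n + 1) := by
  obtain ⟨u, hu, v, hv, hp⟩ := h
  obtain ⟨p, hpP, ha⟩ := mem_nb.1 hu
  obtain ⟨h1, h2, h3⟩ := hP p hpP
  exact ⟨p, h1, v, hv, hp.cons' h3 h2 hK ha.symm⟩

/-- Suffixing paths by a neighbour in `B`. -/
theorem Len.extend [Fintype V] {D K A P B : Finset V} {n : ℕ}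
    (h : Len G K A (nb G P) n) (hP : ∀ p ∈ P, p ∈ B ∧ p ∈ D ∧ p ∉ K) (hK : K ⊆ D) :
    Len G D A B (n + 1) := (h.symm.prepend hP hK).symm

theorem span_of_adj {D A B : Finset V} (hD : Conn G D) {u v : V} (hu : u ∈ D) (hv : v ∈ D)
    (huA : u ∈ A) (hvA : v ∈ A) (ha : G.Adj u v) (hB : ∃ b ∈ B, b ∈ D) :
    Span (Len G D A B) 1 := by
  obtain ⟨p, hp, b, hb, m, hpD, hbD, hm⟩ :=
    hD.exists_path_from (P := {u, v}) ⟨u, by simp, hu⟩ hB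
  obtain ⟨q, hq, hqp⟩ : ∃ q ∈ ({u, v} : Finset V), G.Adj q p ∧ q ≠ p := by
    have := ha.symm
    have := ha.ne
    grind
  refine Span.of_step (n := m) ⟨p, by grind, b, hb, hm.mono (by intro x; grind)⟩
    ⟨q, by grind, b, hb, hm.cons' (by grind) (by grind) (by intro x; grind) hqp.1⟩

theorem span_of_two {D K A B : Finset V} (hK : Conn G K) (hKD : K ⊆ D) {q p r : V} (hq : q ∈ D)
    (hqK : q ∉ K) (hp : p ∈ K) (hr : r ∈ D) (hpA : p ∈ A) (hrA : r ∈ A) (hpr : p ≠ r)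
    (hqp : G.Adj q p) (hqr : G.Adj q r) (hB : ∃ b ∈ B, b ∈ K) : Span (Len G D A B) 2 := by
  obtain ⟨x, hx, b, hb, m, hxK, hbK, hm⟩ :=
    hK.exists_path_from (P := {p, r}) ⟨p, by simp, hp⟩ hB
  obtain ⟨y, hy, hyq, hyx, hxq⟩ : ∃ y ∈ ({p, r} : Finset V), G.Adj y q ∧ y ≠ x ∧ G.Adj q x := by
    have := hqp.symm
    have := hqr.symm
    grind
  refine Span.of_skip (n := m) ⟨x, by grind, b, hb, hm.mono (by intro x; grind)⟩
    ⟨y, by grind, b, hb, ?_⟩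
  have := hyq.ne
  exact (hm.cons' (u := q) (E := insert q (insert x (K \ {p, r}))) (by grind) (by grind)
    (by intro x; grind) hxq).cons' (by grind) (by grind) (by intro x; grind) hyq

section Contract

variable {V : Type*} [DecidableEq V] [Fintype V] {G : SimpleGraph V}

/-- Every vertex of `D` has at most one neighbour in `A ∩ D`. -/
def AtMostOne (G : SimpleGraph V) (D A : Finset V) : Prop :=
  ∀ v ∈ D, ∀ x ∈ A, ∀ y ∈ A, x ∈ D → y ∈ D → G.Adj v x → G.Adj v y → x = y

/-- Every set cut off by a single vertex meets `A`. -/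
def Strong (G : SimpleGraph V) (D A : Finset V) : Prop :=
  ∀ e F, Cl G D {e} F → ∃ u ∈ F, u ∈ A

variable {D A B K : Finset V}

theorem Strong.exists_ne (h : Strong G D A) {e x : V} (hx : x ∈ D) (hxe : x ≠ e) :
    ∃ a ∈ A, a ∈ D ∧ a ≠ e := by
  obtain ⟨K, hK, -, -⟩ := exists_comp_of_mem (G := G) (Q := {e}) hx (by simpa using hxe)
  obtain ⟨a, ha, haA⟩ := h e K hK
  exact ⟨a, haA, hK.subset ha, by rintro rfl; exact hK.notMem (by simp) ha⟩

theorem dg_le_contract (h1 : AtMostOne G D A) (hK : Cl G D A K) {v : V} (hv : v ∈ K) :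
    dg G D v ≤ dg G K v + if v ∈ nb G (A ∩ D) then 1 else 0 := by
  refine (dg_le (Q := A ∩ D) fun w hw ha => ?_).trans
    (Nat.add_le_add_left (dg_le_nb fun x hx y hy => ?_) _)
  · have := hK.adj hv hw ha
    grind
  · exact h1 v (hK.subset hv) x (by grind) y (by grind) (by grind) (by grind)

theorem rdeg_le_contract (h1 : AtMostOne G D A) (hK : Cl G D A K) {v : V} (hv : v ∈ K) :
    rdeg G D A B v ≤ rdeg G K (nb G (A ∩ D)) B v := by
  have h := dg_le_contract h1 hK hv
  have h2 : v ∉ A := fun h => hK.notMem h hv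
  simp only [rdeg, h2, if_false]
  omega

theorem rdeg_le_contract_pair (h1 : AtMostOne G D A) (hBA : ∀ b ∈ B, b ∈ D → b ∈ A)
    (hK : Cl G D A K) (a : V) {v : V} (hv : v ∈ K) :
    rdeg G D A B v ≤ rdeg G K (nb G ((A ∩ D).erase a)) (nb G {a}) v := by
  have h := dg_le_contract h1 hK hv
  have h2 : v ∉ A := fun h => hK.notMem h hv
  have h3 : v ∉ B := fun h => h2 (hBA v h (hK.subset hv))
  have h4 : v ∈ nb G (A ∩ D) → v ∈ nb G ((A ∩ D).erase a) ∨ v ∈ nb G {a} := by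
    intro h
    obtain ⟨p, hp, ha⟩ := mem_nb.1 h
    by_cases hpa : p = a
    · subst hpa; exact .inr (by simpa)
    · exact .inl (mem_nb.2 ⟨p, by grind, ha⟩)
  simp only [rdeg, h2, h3, if_false]
  split_ifs at * <;> first | omega | tauto

theorem exists_nb_contract (hD : Conn G D) (hA : ∃ a ∈ A, a ∈ D) (hK : Cl G D A K) :
    ∃ u ∈ nb G (A ∩ D), u ∈ K := by
  obtain ⟨a, ha, haD⟩ := hA
  obtain ⟨u, hu, v, hv, hvA, hav⟩ := hK.exists_adj hD haD (hK.notMem ha)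
  exact ⟨u, mem_nb.2 ⟨v, by grind, hav⟩, hu⟩

theorem strong_contract (hs : Strong G D A) (hK : Cl G D A K) :
    Strong G K (nb G (A ∩ D)) := by
  intro e F hF
  by_contra! h
  obtain ⟨u, hu, huA⟩ := hs e F ⟨hF.1, fun u hu => ⟨hK.subset (hF.subset hu),
    fun he => hF.notMem he hu, fun v hv ha => by
      rcases hK.adj (hF.subset hu) hv ha with h2 | h2
      · exact hF.adj hu h2 ha
      · exact absurd (mem_nb.2 ⟨v, by grind, ha⟩) (h u hu)⟩⟩
  exact hK.notMem huA (hF.subset hu)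

theorem cond_contract_pair (hs : Strong G D A) (hK : Cl G D A K) (a : V) (e : V) (F : Finset V)
    (hF : Cl G K {e} F) : ∃ u ∈ F, u ∈ nb G ((A ∩ D).erase a) ∨ u ∈ nb G {a} := by
  obtain ⟨u, hu, h⟩ := strong_contract hs hK e F hF
  obtain ⟨p, hp, ha⟩ := mem_nb.1 h
  refine ⟨u, hu, ?_⟩
  by_cases hpa : p = a
  · subst hpa; exact .inr (by simpa)
  · exact .inl (mem_nb.2 ⟨p, by grind, ha⟩)

theorem exists_nb_contract_pair (hs : Strong G D A) (hK : Cl G D A K) {a : V} (ha : a ∈ A) :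
    ∃ u ∈ nb G ((A ∩ D).erase a), u ∈ K := by
  by_contra! h
  have hcl : Cl G D {a} K := by
    refine ⟨hK.1, fun u hu => ⟨hK.subset hu, fun hua => ?_, fun v hv hav => ?_⟩⟩
    · obtain rfl := Finset.mem_singleton.1 hua
      exact hK.notMem ha hu
    · rcases hK.adj hu hv hav with h2 | h2
      · exact .inl h2
      · right
        by_contra hva
        exact h u (mem_nb.2 ⟨v, by grind, hav⟩) hu
  obtain ⟨u, hu, huA⟩ := hs a K hcl
  exact hK.notMem huA hu

theorem card_lt_contract (hA : ∃ a ∈ A, a ∈ D) (hK : Cl G D A K) : K.card < D.card := by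
  obtain ⟨a, ha, haD⟩ := hA
  exact Finset.card_lt_card ⟨hK.subset, fun h => hK.notMem ha (h haD)⟩

theorem span_contract (hK : Cl G D A K) {t : ℕ} (h : Span (Len G K (nb G (A ∩ D)) B) t) :
    Span (Len G D A B) t :=
  h.shift 1 fun _ hn => hn.prepend (fun p hp =>
    ⟨by grind, by grind, hK.notMem (by grind)⟩) hK.subset

theorem span_contract_pair (hK : Cl G D A K) {a : V} (haA : a ∈ A) (haB : a ∈ B) (haD : a ∈ D)
    {t : ℕ} (h : Span (Len G K (nb G ((A ∩ D).erase a)) (nb G {a})) t) :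
    Span (Len G D A B) t :=
  h.shift 2 fun n hn => by
    have h1 : Len G (insert a K) _ B (n + 1) := hn.extend (by
      have := hK.notMem haA
      simp [haB, this]) (Finset.subset_insert _ _)
    exact h1.prepend (fun p hp => ⟨by grind, by grind, by
      have := hK.notMem (x := p)
      grind⟩) (by have := hK.subset; grind)

/-- A set `K` cut off by `e` and missing `B` inherits the separation condition. -/
theorem cond_cut {e : V} (hK : Cl G D {e} K)
    (hB : ∀ b ∈ B, b ∉ K) {f : V} {F : Finset V} (hF : Cl G K {f} F)
    (hc : Cl G D {f} F → ∃ u ∈ F, u ∈ A ∨ u ∈ B) : ∃ u ∈ F, u ∈ A ∨ u ∈ nb G {e} := by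
  by_contra! h
  obtain ⟨u, hu, huAB⟩ := hc ⟨hF.1, fun u hu => ⟨hK.subset (hF.subset hu),
    fun he => hF.notMem he hu, fun v hv ha => by
      rcases hK.adj (hF.subset hu) hv ha with h2 | h2
      · exact hF.adj hu h2 ha
      · exact absurd (mem_nb.2 ⟨v, h2, ha⟩) (h u hu).2⟩⟩
  rcases huAB with h2 | h2
  · exact (h u hu).1 h2
  · exact hB u h2 (hF.subset hu)

theorem rdeg_le_cut {e : V} (hK : Cl G D {e} K) (hB : ∀ b ∈ B, b ∉ K) {v : V} (hv : v ∈ K) :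
    rdeg G D A B v ≤ rdeg G K A (nb G {e}) v := by
  have := hK.dg_le_nb hv
  have h3 : v ∉ B := fun h => hB v h hv
  simp only [rdeg, h3, if_false]
  omega

end Contract

section Simple

variable {V : Type*} [DecidableEq V] [Fintype V] {G : SimpleGraph V}

/-- Hypotheses under which two paths from `A` to `B` in `D` of lengths differing by one or two
exist. The vertex `s` is exempt from the degree condition. -/
structure Base (G : SimpleGraph V) (D A B : Finset V) (s : V) : Prop where
  conn : Conn G D
  left : ∃ a ∈ A, a ∈ D
  right : ∃ b ∈ B, b ∈ D
  two : ∃ x ∈ D, ∃ y ∈ D, x ≠ y ∧ (x ∈ A ∨ x ∈ B) ∧ (y ∈ A ∨ y ∈ B)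
  deg : ∀ v ∈ D, v ≠ s → 3 ≤ rdeg G D A B v
  cond : ∀ e F, Cl G D {e} F → s ∉ F → ∃ u ∈ F, u ∈ A ∨ u ∈ B

namespace Base

variable {D A B K : Finset V} {s : V}

theorem symm (h : Base G D A B s) : Base G D B A s where
  conn := h.conn
  left := h.right
  right := h.left
  two := by
    obtain ⟨x, hx, y, hy, hxy, h1, h2⟩ := h.two
    exact ⟨x, hx, y, hy, hxy, h1.symm, h2.symm⟩
  deg v hv hvs := by rw [rdeg_comm]; exact h.deg v hv hvs
  cond e F hF hs := by
    obtain ⟨u, hu, h⟩ := h.cond e F hF hs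
    exact ⟨u, hu, h.symm⟩

/-- The inductive hypothesis. -/
def Smaller (G : SimpleGraph V) (D : Finset V) : Prop :=
  ∀ D' A' B' : Finset V, ∀ s', D'.card < D.card → Base G D' A' B' s' → Span (Len G D' A' B') 1

theorem Smaller.cl (ih : Smaller G D) {Q : Finset V} (hK : Cl G D Q K) (hQ : ∃ q ∈ Q, q ∈ D)
    {A' B' : Finset V} {s' : V} (h : Base G K A' B' s') : Span (Len G K A' B') 1 :=
  ih K A' B' s' (card_lt_contract hQ hK) h

theorem sdiff_card_lt {F : Finset V} {Q : Finset V} (hF : Cl G D Q F) : (D \ F).card < D.card := by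
  obtain ⟨z, hz⟩ := hF.1
  exact Finset.card_lt_card ⟨Finset.sdiff_subset, fun h => by
    have := h (hF.subset hz)
    grind⟩

theorem span_or_cond (h : Base G D A B s) (ih : Smaller G D) :
    Span (Len G D A B) 1 ∨ ∀ e F, Cl G D {e} F → ∃ u ∈ F, u ∈ A ∨ u ∈ B := by
  by_contra! hcon
  obtain ⟨hn, e, F, hF, hm⟩ := hcon
  have hs : s ∈ F := by
    by_contra hs
    obtain ⟨u, hu, h1⟩ := h.cond e F hF hs
    have := hm u hu
    tauto
  obtain ⟨a, ha, haD⟩ := h.left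
  have heD := (hF.adj_cut h.conn haD fun h => (hm a h).1 ha).1
  have heF : e ∉ F := hF.notMem (by simp)
  refine hn ((ih (D \ F) A B e (sdiff_card_lt hF) ⟨hF.conn_sdiff h.conn heD, ?_, ?_, ?_, ?_,
    ?_⟩).mono (fun n ⟨u, hu, v, hv, hp⟩ => ⟨u, hu, v, hv, hp.mono Finset.sdiff_subset⟩) le_rfl)
  · exact ⟨a, ha, by have := hm a; grind⟩
  · obtain ⟨b, hb, hbD⟩ := h.right
    exact ⟨b, hb, by have := hm b; grind⟩
  · obtain ⟨x, hx, y, hy, hxy, h1, h2⟩ := h.two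
    exact ⟨x, by have := hm x; grind, y, by have := hm y; grind, hxy, h1, h2⟩
  · intro v hv hve
    refine (h.deg v (by grind) (by rintro rfl; grind)).trans ?_
    have : dg G D v ≤ dg G (D \ F) v := dg_mono fun w hw ha => by
      have := hF.adj (u := w) (v := v)
      have := ha.symm
      grind
    unfold rdeg; omega
  · intro f F' hF' he
    refine h.cond f F' ⟨hF'.1, fun u hu => ⟨?_, ?_, fun v hv ha => ?_⟩⟩ ?_
    · have := hF'.subset hu; grind
    · exact (hF'.2 u hu).2.1
    · by_cases hvF : v ∈ F
      · have := hF'.subset hu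
        have := hF.adj hvF (by grind) ha.symm
        grind
      · exact hF'.adj hu (by grind) ha
    · intro hs'
      have := hF'.subset hs'
      grind

theorem span_of_cut (h : Base G D A B s) (ih : Smaller G D)
    (hc : ∀ e F, Cl G D {e} F → ∃ u ∈ F, u ∈ A ∨ u ∈ B) {e : V} (hK : Cl G D {e} K)
    (hKc : Conn G K) (hB : ∀ b ∈ B, b ∉ K) (hs : K ≠ {s}) : Span (Len G D A B) 1 := by
  obtain ⟨b, hb, hbD⟩ := h.right
  obtain ⟨heD, u, hu, hue⟩ := hK.adj_cut h.conn hbD (hB b hb)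
  have heK : e ∉ K := hK.notMem (by simp)
  have hcK : ∀ f F, Cl G K {f} F → ∃ u ∈ F, u ∈ A ∨ u ∈ nb G {e} := fun f F hF =>
    cond_cut hK hB hF (hc f F)
  refine Len.through (e := e) ?_ (hK.conn_sdiff h.conn heD) (by grind)
    ⟨b, hb, by grind⟩ Finset.disjoint_sdiff hK.subset Finset.sdiff_subset
  have hdeg : ∀ v ∈ K, v ≠ s → 3 ≤ rdeg G K A (nb G {e}) v := fun v hv hvs =>
    (h.deg v (hK.subset hv) hvs).trans (rdeg_le_cut hK hB hv)
  have hKA : ∃ a ∈ A, a ∈ K := by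
    obtain ⟨a, ha, h1⟩ := hc e K hK
    exact ⟨a, h1.resolve_right fun h => hB a h ha, ha⟩
  refine ih.cl hK ⟨e, by simp, heD⟩ (s' := s)
    ⟨hKc, hKA, ⟨u, by simpa, hu⟩, ?_, hdeg, fun f F hF _ => hcK f F hF⟩
  obtain ⟨a, haA, ha⟩ := hKA
  by_contra! hcon
  have hcon' : ∀ y ∈ K, y ≠ a → y ∉ A ∧ y ∉ nb G {e} := fun y hy hya => by
    have := hcon a ha y hy (Ne.symm hya) (.inl haA)
    tauto
  by_cases hKa : K = {a}
  · have has : a ≠ s := by rintro rfl; exact hs hKa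
    have := hdeg a ha has
    have h0 : dg G K a = 0 := by
      rw [hKa]; exact dg_eq_zero (by simp)
    unfold rdeg at this
    split_ifs at this <;> omega
  · obtain ⟨y, hy, hya⟩ : ∃ y ∈ K, y ≠ a := by
      by_contra! h
      exact hKa (Finset.eq_singleton_iff_unique_mem.2 ⟨ha, h⟩)
    obtain ⟨F, hF, -, -⟩ := exists_comp_of_mem (G := G) (Q := {a}) hy (by simpa using hya)
    obtain ⟨z, hz, hz'⟩ := hcK a F hF
    have := hcon' z (hF.subset hz) (by rintro rfl; exact hF.notMem (by simp) hz)
    tauto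

theorem span_of_leaf (h : Base G D A B s) (ih : Smaller G D)
    (hc : ∀ e F, Cl G D {e} F → ∃ u ∈ F, u ∈ A ∨ u ∈ B) {e : V} (hK : Cl G D {e} {s})
    (hsB : s ∉ B) : Span (Len G D A B) 1 := by
  have hc' : ∀ e F, Cl G D {e} F → ∃ u ∈ F, u ∈ B ∨ u ∈ A := fun e F hF => by
    obtain ⟨u, hu, h⟩ := hc e F hF
    exact ⟨u, hu, h.symm⟩
  have hsA : s ∈ A := by
    obtain ⟨u, hu, h⟩ := hc e _ hK
    obtain rfl := Finset.mem_singleton.1 hu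
    tauto
  obtain ⟨b, hb, hbD⟩ := h.right
  obtain ⟨heD, u, hu, hue⟩ := hK.adj_cut h.conn hbD
    (by rintro h; obtain rfl := Finset.mem_singleton.1 h; exact hsB hb)
  obtain rfl := Finset.mem_singleton.1 hu
  have hsD : u ∈ D := hK.subset hu
  have hse : u ≠ e := hue.ne
  have hsn : ∀ w ∈ D, G.Adj u w → w = e := fun w hw ha => by
    rcases hK.adj hu hw ha with h | h
    · exact absurd (Finset.mem_singleton.1 h) ha.ne'
    · simpa using h
  by_cases hA : ∃ a ∈ A, a ∈ D ∧ a ≠ u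
  swap
  · push Not at hA
    obtain ⟨F, hF, hFc, heF⟩ := exists_comp_of_mem (G := G) (Q := {u}) heD (by simpa using hse.symm)
    refine spanLen_comm (h.symm.span_of_cut ih hc' hF hFc (fun a ha haF => ?_) ?_)
    · have := hA a ha (hF.subset haF)
      subst this
      exact hF.notMem (by simp) haF
    · rintro rfl
      exact hF.notMem (by simp) (Finset.mem_singleton_self u)
  · obtain ⟨a, haA, haD, has⟩ := hA
    have hcE := hK.conn_sdiff h.conn heD
    by_cases htwo : ∃ x ∈ D \ {u}, ∃ y ∈ D \ {u}, x ≠ y ∧ (x ∈ A ∨ x ∈ B) ∧ (y ∈ A ∨ y ∈ B)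
    · refine (ih (D \ {u}) A B e (sdiff_card_lt hK) ⟨hcE, ⟨a, haA, by grind⟩,
        ⟨b, hb, by grind⟩, htwo, fun v hv hve => ?_, fun f F hF he => ?_⟩).mono
        (fun n ⟨u, hu, v, hv, hp⟩ => ⟨u, hu, v, hv, hp.mono Finset.sdiff_subset⟩) le_rfl
      · refine (h.deg v (by grind) (by grind)).trans ?_
        have : dg G D v ≤ dg G (D \ {u}) v := dg_mono fun w hw ha => by
          have := hsn v (by grind)
          have := ha.symm
          grind
        unfold rdeg; omega
      · refine hc f F ⟨hF.1, fun x hx => ?_⟩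
        have h1 := hF.2 x hx
        refine ⟨by grind, h1.2.1, fun v hv ha => ?_⟩
        by_cases hvu : v = u
        · subst hvu
          have := hsn x (by grind) ha.symm
          grind
        · exact h1.2.2 v (by grind) ha
    · push Not at htwo
      have hba : b = a := by
        by_contra hba
        have := htwo b (by grind) a (by grind) hba (.inr hb)
        tauto
      subst hba
      have hall : ∀ y ∈ D, y ≠ u → y ≠ b → y ∉ A ∧ y ∉ B := fun y hy hyu hyb => by
        have := htwo b (by grind) y (by grind) (Ne.symm hyb) (.inl haA)
        tauto
      by_cases hbe : b = e
      · subst hbe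
        refine Span.of_step (n := 1) ⟨b, haA, b, hb, .single hbD⟩ ⟨u, hsA, b, hb, ?_⟩
        exact .cons hsD hue (.single (by grind))
      · obtain ⟨F, hF, hFc, hsF⟩ :=
          exists_comp_of_mem (G := G) (D := D) (Q := {b}) hsD (by simpa using has.symm)
        refine h.span_of_cut ih hc hF hFc (fun x hx hxF => ?_) ?_
        · have h1 := hF.notMem (x := x)
          have h2 := hall x (hF.subset hxF)
          grind
        · rintro rfl
          have := hF.adj hsF heD hue
          grind

theorem strong_of_not_span (h : Base G D A B s) (ih : Smaller G D)
    (hn : ¬ Span (Len G D A B) 1) : Strong G D B := by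
  have hc := (h.span_or_cond ih).resolve_left hn
  intro e F hF
  by_contra! hB
  obtain ⟨x, hx⟩ := hF.1
  obtain ⟨K, hKF, hK, hKc, -⟩ := exists_comp hF hx
  by_cases hs : K = {s}
  · subst hs
    exact hn (h.span_of_leaf ih hc hK fun hs => hB s (hKF (by simp)) hs)
  · exact hn (h.span_of_cut ih hc hK hKc (fun b hb hbK => hB b (hKF hbK) hb) hs)

theorem span_aux (h : Base G D A B s) (ih : Smaller G D) : Span (Len G D A B) 1 := by
  by_contra hn
  have hB := h.strong_of_not_span ih hn
  have hA := h.symm.strong_of_not_span ih fun h => hn (spanLen_comm h)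
  have h1 : AtMostOne G D A := by
    intro v hv x hx y hy hxD hyD hvx hvy
    by_contra hxy
    obtain ⟨K, hK, hKc, hxK⟩ := exists_comp_of_mem (G := G) (Q := {v}) hxD
      (by simpa using hvx.ne')
    obtain ⟨b, hb, hbB⟩ := hB v K hK
    exact hn ((span_of_two hKc hK.subset hv (hK.notMem (by simp)) hxK hyD hx hy hxy hvx hvy
      ⟨b, hbB, hb⟩).mono (fun _ h => h) (by omega))
  have h2 : ∀ u ∈ D, ∀ v ∈ D, u ∈ A → v ∈ A → ¬ G.Adj u v := fun u hu v hv huA hvA ha =>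
    hn (span_of_adj h.conn hu hv huA hvA ha h.right)
  by_cases hBA : ∃ b ∈ B, b ∈ D ∧ b ∉ A
  · obtain ⟨b, hb, hbD, hbA⟩ := hBA
    obtain ⟨K, hK, hKc, hbK⟩ := exists_comp_of_mem (G := G) hbD hbA
    refine hn (span_contract hK (ih.cl hK h.left (s' := s) ⟨hKc,
      exists_nb_contract h.conn h.left hK, ⟨b, hb, hbK⟩, ?_, fun v hv hvs =>
        (h.deg v (hK.subset hv) hvs).trans (rdeg_le_contract h1 hK hv), fun e F hF _ => by
          obtain ⟨u, hu, h⟩ := strong_contract hA hK e F hF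
          exact ⟨u, hu, .inl h⟩⟩))
    by_contra! hcon
    have hcon' : ∀ y ∈ K, y ≠ b → y ∉ nb G (A ∩ D) := fun y hy hyb => by
      have := hcon b hbK y hy (Ne.symm hyb) (.inr hb)
      tauto
    have hKb : K = {b} := by
      by_contra hne
      obtain ⟨y, hy, hyb⟩ : ∃ y ∈ K, y ≠ b := by
        by_contra! h
        exact hne (Finset.eq_singleton_iff_unique_mem.2 ⟨hbK, h⟩)
      obtain ⟨u, hu, huA⟩ := hA b (K.erase b) ⟨⟨y, by grind⟩, fun u hu => ⟨hK.subset (by grind),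
        by grind, fun v hv ha => by
          have := hK.adj (u := u) (by grind) hv ha
          have := hcon' u (by grind) (by grind)
          grind [mem_nb]⟩⟩
      exact hK.notMem huA (by grind)
    subst hKb
    have hdg := dg_le_contract h1 hK (v := b) (by simp)
    have h0 : dg G {b} b = 0 := dg_eq_zero (by simp)
    by_cases hbs : b = s
    · subst hbs
      obtain ⟨u, hu, huK⟩ := exists_nb_contract h.conn h.left hK
      obtain rfl := Finset.mem_singleton.1 huK
      obtain ⟨p, hp, hup⟩ := mem_nb.1 hu
      obtain ⟨w, hw, hwA⟩ := hA p {u} ⟨by simp, fun w hw => by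
        obtain rfl := Finset.mem_singleton.1 hw
        refine ⟨hbD, by simpa using hup.ne, fun v hv ha => .inr ?_⟩
        have := hK.adj huK hv ha
        have := h1 w hbD v (by have := ha.ne; grind) p (by grind) hv (by grind) ha hup
        simpa⟩
      grind
    · have := h.deg b hbD hbs
      simp only [rdeg, hbA, if_false] at this
      split_ifs at * <;> omega
  · push Not at hBA
    obtain ⟨a, haB, haD, has⟩ : ∃ a ∈ B, a ∈ D ∧ a ≠ s := by
      obtain ⟨x, hx, y, hy, hxy, -⟩ := h.two
      by_cases hxs : x = s
      · exact hB.exists_ne hy (by rw [← hxs]; exact hxy.symm)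
      · exact hB.exists_ne hx hxs
    have haA := hBA a haB haD
    obtain ⟨g, hg, hag⟩ : ∃ g ∈ D, G.Adj a g := exists_adj_of_dg (by
      have := h.deg a haD has
      unfold rdeg at this
      split_ifs at this; omega)
    obtain ⟨K, hK, hKc, hgK⟩ := exists_comp_of_mem (G := G) hg fun hgA => h2 a haD g hg haA hgA hag
    obtain ⟨w, hw, hwK⟩ := exists_nb_contract_pair hA hK haA
    have hgn : g ∈ nb G {a} := by simpa using hag.symm
    refine hn (span_contract_pair hK haA haB haD (ih.cl hK h.left (s' := s) ⟨hKc, ⟨w, hw, hwK⟩,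
      ⟨g, hgn, hgK⟩, ⟨w, hwK, g, hgK, ?_, .inl hw, .inr hgn⟩, fun v hv hvs =>
        (h.deg v (hK.subset hv) hvs).trans (rdeg_le_contract_pair h1 hBA hK a hv),
      fun e F hF _ => cond_contract_pair hA hK a e F hF⟩))
    rintro rfl
    obtain ⟨p, hp, hwp⟩ := mem_nb.1 hw
    have := h1 w hg p (by grind) a haA (by grind) haD hwp hag.symm
    grind

theorem span (h : Base G D A B s) : Span (Len G D A B) 1 := by
  induction hN : D.card using Nat.strong_induction_on generalizing D A B s with
  | _ N ih =>
    exact h.span_aux fun D' A' B' s' hc h' => ih D'.card (hN ▸ hc) h' rfl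

end Base

end Simple

section Instances

variable {V : Type*} [DecidableEq V] [Fintype V] {G : SimpleGraph V}

/-- `v` lies in a triangle whose vertices are in `D` (apart from possibly `v`). -/
def Tri (G : SimpleGraph V) (D : Finset V) (v : V) : Prop :=
  ∃ x ∈ D, ∃ y ∈ D, G.Adj v x ∧ G.Adj v y ∧ G.Adj x y

theorem Tri.mono {D E : Finset V} {v : V} (h : Tri G D v) (hDE : D ⊆ E) : Tri G E v := by
  obtain ⟨x, hx, y, hy, h⟩ := h
  exact ⟨x, hDE hx, y, hDE hy, h⟩

/-- All rooted degrees are at least `t`, and more than `t` at vertices of triangles. -/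
def HDeg (G : SimpleGraph V) (D A B : Finset V) (t : ℕ) : Prop :=
  ∀ v ∈ D, t ≤ rdeg G D A B v ∧ (Tri G D v → t + 1 ≤ rdeg G D A B v)

theorem HDeg.of_le {D A B D' A' B' : Finset V} {t k : ℕ} (h : HDeg G D A B (t + k)) (hD : D' ⊆ D)
    (hle : ∀ v ∈ D', rdeg G D A B v ≤ rdeg G D' A' B' v + k) : HDeg G D' A' B' t := by
  intro v hv
  have h1 := h v (hD hv)
  have h2 := hle v hv
  refine ⟨by omega, fun ht => ?_⟩
  have := h1.2 (ht.mono hD)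
  omega

/-- A connected set with two sets of roots satisfying the degree and separation conditions. -/
structure Inst (G : SimpleGraph V) (D A B : Finset V) (t : ℕ) : Prop where
  conn : Conn G D
  left : ∃ a ∈ A, a ∈ D
  right : ∃ b ∈ B, b ∈ D
  deg : HDeg G D A B t
  cond : ∀ e F, Cl G D {e} F → ∃ u ∈ F, u ∈ A ∨ u ∈ B

namespace Inst

variable {D A B K : Finset V} {t : ℕ}

theorem symm (h : Inst G D A B t) : Inst G D B A t where
  conn := h.conn
  left := h.right
  right := h.left
  deg v hv := by rw [rdeg_comm]; exact h.deg v hv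
  cond e F hF := by
    obtain ⟨u, hu, h⟩ := h.cond e F hF
    exact ⟨u, hu, h.symm⟩

theorem cut (h : Inst G D A B t) {e : V} (hK : Cl G D {e} K) (hKc : Conn G K)
    (hB : ∀ b ∈ B, b ∉ K) : Inst G K A (nb G {e}) t where
  conn := hKc
  left := by
    obtain ⟨u, hu, huAB⟩ := h.cond e K hK
    exact ⟨u, huAB.resolve_right fun hb => hB u hb hu, hu⟩
  right := by
    obtain ⟨b, hb, hbD⟩ := h.right
    obtain ⟨-, u, hu, ha⟩ := hK.adj_cut h.conn hbD (hB b hb)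
    exact ⟨u, by simpa, hu⟩
  deg := HDeg.of_le (k := 0) h.deg hK.subset fun _ hv => rdeg_le_cut hK hB hv
  cond f F hF := cond_cut hK hB hF (h.cond f F)

theorem span_of_cut (h : Inst G D A B t) {e : V} (hK : Cl G D {e} K)
    (hB : ∀ b ∈ B, b ∉ K) {k : ℕ} (hs : Span (Len G K A (nb G {e})) k) :
    Span (Len G D A B) k := by
  obtain ⟨b, hb, hbD⟩ := h.right
  have he := (hK.adj_cut h.conn hbD (hB b hb)).1
  have heK := hK.notMem (Finset.mem_singleton_self e)
  have := hB b hb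
  exact Len.through hs (hK.conn_sdiff h.conn he) (by grind) ⟨b, hb, by grind⟩
    Finset.disjoint_sdiff hK.subset Finset.sdiff_subset

theorem cut_card_lt (h : Inst G D A B t) {e : V} (hK : Cl G D {e} K)
    (hB : ∀ b ∈ B, b ∉ K) : K.card < D.card := by
  obtain ⟨b, hb, hbD⟩ := h.right
  exact card_lt_contract ⟨e, by simp, (hK.adj_cut h.conn hbD (hB b hb)).1⟩ hK

theorem three_le_card_cut (hd : HDeg G D A B 3) {e : V} (he : e ∈ D) (hK : Cl G D {e} K)
    (hB : ∀ b ∈ B, b ∉ K) : 3 ≤ K.card := by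
  by_contra hlt
  have key : ∀ u ∈ K, G.Adj u e ∧ 1 ≤ dg G K u ∧ rdeg G D A B u ≤ 3 := by
    intro u hu
    have h1 := (hd u (hK.subset hu)).1
    have h2 := hK.dg_le_nb hu
    have h3 := dg_lt_card (G := G) hu
    have h4 : u ∉ B := fun h => hB u h hu
    simp only [rdeg, h4, if_false] at *
    by_cases h5 : G.Adj u e
    · rw [if_pos (by simpa)] at h2
      refine ⟨h5, ?_, ?_⟩ <;> split_ifs at * <;> omega
    · rw [if_neg (by simpa)] at h2
      split_ifs at * <;> omega
  obtain ⟨u, hu⟩ := hK.1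
  obtain ⟨hue, hdu, hle⟩ := key u hu
  obtain ⟨w, hw, huw⟩ := exists_adj_of_dg hdu
  have := (hd u (hK.subset hu)).2 ⟨w, hK.subset hw, e, he, huw, hue, (key w hw).1⟩
  omega

theorem contract (h : Inst G D A B t) (h1 : AtMostOne G D A) (hA : Strong G D A)
    (hK : Cl G D A K) (hKc : Conn G K) (hB : ∃ b ∈ B, b ∈ K) :
    Inst G K (nb G (A ∩ D)) B t where
  conn := hKc
  left := exists_nb_contract h.conn h.left hK
  right := hB
  deg := HDeg.of_le (k := 0) h.deg hK.subset fun _ hv => rdeg_le_contract h1 hK hv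
  cond e F hF := by
    obtain ⟨u, hu, h⟩ := strong_contract hA hK e F hF
    exact ⟨u, hu, .inl h⟩

theorem contract_pair (h : Inst G D A B t) (h1 : AtMostOne G D A) (hA : Strong G D A)
    (hBA : ∀ b ∈ B, b ∈ D → b ∈ A) (hK : Cl G D A K) (hKc : Conn G K) {a : V} (ha : a ∈ A)
    (hg : ∃ g ∈ K, G.Adj a g) :
    Inst G K (nb G ((A ∩ D).erase a)) (nb G {a}) t where
  conn := hKc
  left := exists_nb_contract_pair hA hK ha
  right := by
    obtain ⟨g, hg, hag⟩ := hg
    exact ⟨g, by simpa using hag.symm, hg⟩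
  deg := HDeg.of_le (k := 0) h.deg hK.subset fun _ hv => rdeg_le_contract_pair h1 hBA hK a hv
  cond e F hF := cond_contract_pair hA hK a e F hF

theorem card_lt (h : Inst G D A B t) (hK : Cl G D A K) : K.card < D.card :=
  card_lt_contract h.left hK

theorem atMostOne_of_not_span (hB : Strong G D B) (hn : ¬ Span (Len G D A B) 2) :
    AtMostOne G D A := by
  intro v hv x hx y hy hxD hyD hvx hvy
  by_contra hxy
  obtain ⟨K, hK, hKc, hxK⟩ := exists_comp_of_mem (G := G) (Q := {v}) hxD
    (by simpa using hvx.ne')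
  obtain ⟨b, hb, hbB⟩ := hB v K hK
  exact hn (span_of_two hKc hK.subset hv (hK.notMem (by simp)) hxK hyD hx hy hxy hvx hvy
    ⟨b, hbB, hb⟩)

theorem three_le_card_contract (h : Inst G D A B 3) (h1 : AtMostOne G D A)
    (hBA : ∀ b ∈ B, b ∈ D → b ∈ A) (hK : Cl G D A K) : 3 ≤ K.card := by
  obtain ⟨v, hv⟩ := hK.1
  have h2 := (h.deg v (hK.subset hv)).1
  have h3 := dg_le_contract h1 hK hv
  have h4 : v ∉ A := fun h => hK.notMem h hv
  have h5 : v ∉ B := fun hvB => h4 (hBA v hvB (hK.subset hv))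
  have h6 := dg_lt_card (G := G) hv
  simp only [rdeg, h4, h5, if_false] at h2
  split_ifs at h3 <;> omega

/-- The inductive hypothesis for the two-step result. -/
def Smaller2 (G : SimpleGraph V) (D : Finset V) : Prop :=
  ∀ D' A' B' : Finset V, D'.card < D.card → 3 ≤ D'.card → Inst G D' A' B' 3 →
    Span (Len G D' A' B') 2

theorem strong_of_not_span2 (h : Inst G D A B 3) (ih : Smaller2 G D)
    (hn : ¬ Span (Len G D A B) 2) : Strong G D B := by
  intro e F hF
  by_contra! hB
  obtain ⟨x, hx⟩ := hF.1
  obtain ⟨K, hKF, hK, hKc, -⟩ := exists_comp hF hx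
  have hB' : ∀ b ∈ B, b ∉ K := fun b hb hbK => hB b (hKF hbK) hb
  obtain ⟨b, hb, hbD⟩ := h.right
  have he := (hK.adj_cut h.conn hbD (hB' b hb)).1
  exact hn (h.span_of_cut hK hB' (ih _ _ _ (h.cut_card_lt hK hB')
    (three_le_card_cut h.deg he hK hB') (h.cut hK hKc hB')))

theorem span2_of_contract (h : Inst G D A B 3) (ih : Smaller2 G D) (h1 : AtMostOne G D A)
    (hA : Strong G D A) (hK : Cl G D A K) (hKc : Conn G K) (hB : ∃ b ∈ B, b ∈ K)
    (h3 : 3 ≤ K.card) : Span (Len G D A B) 2 :=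
  span_contract hK (ih _ _ _ (h.card_lt hK) h3 (h.contract h1 hA hK hKc hB))

theorem span2_aux (h : Inst G D A B 3) (h3 : 3 ≤ D.card) (ih : Smaller2 G D) :
    Span (Len G D A B) 2 := by
  by_contra hn
  have hn' : ¬ Span (Len G D B A) 2 := fun h => hn (spanLen_comm h)
  have hB := h.strong_of_not_span2 ih hn
  have hA := h.symm.strong_of_not_span2 ih hn'
  have h1A := atMostOne_of_not_span hB hn
  have h1B := atMostOne_of_not_span hA hn'
  by_cases hBA : ∃ b ∈ B, b ∈ D ∧ b ∉ A
  · obtain ⟨u, huB, huD, huA⟩ := hBA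
    obtain ⟨K, hK, hKc, huK⟩ := exists_comp_of_mem (G := G) huD huA
    by_cases hK3 : 3 ≤ K.card
    · exact hn (h.span2_of_contract ih h1A hA hK hKc ⟨u, huB, huK⟩ hK3)
    have key : ∀ x ∈ K, x ∈ nb G (A ∩ D) ∧ 1 ≤ dg G K x ∧ x ∈ B ∧ rdeg G D A B x ≤ 3 := by
      intro x hx
      have h1 := (h.deg x (hK.subset hx)).1
      have h2 := dg_le_contract h1A hK hx
      have h4 := dg_lt_card (G := G) hx
      have h5 : x ∉ A := fun h => hK.notMem h hx
      simp only [rdeg, h5, if_false] at *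
      split_ifs at * <;> first | omega | (refine ⟨?_, ?_, ?_, ?_⟩ <;> first | assumption | omega)
    obtain ⟨hun, hud, -, hu3⟩ := key u huK
    obtain ⟨v, hv, huv⟩ := exists_adj_of_dg hud
    obtain ⟨a, haA, hua⟩ := mem_nb.1 hun
    have haD : a ∈ D := by grind
    replace haA : a ∈ A := by grind
    have hva : ¬ G.Adj v a := fun hva => by
      have := (h.deg u huD).2 ⟨v, hK.subset hv, a, haD, huv, hua, hva⟩
      omega
    have hvA : v ∉ A := fun h => hK.notMem h hv
    have haB : a ∉ B := fun haB => by
      have := h1B u huD a haB v (key v hv).2.2.1 haD (hK.subset hv) hua huv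
      subst this
      exact hvA haA
    obtain ⟨g, hgD, hag, hgu⟩ := exists_adj_ne_of_dg (G := G) (D := D) (v := a) (by
      have := (h.deg a haD).1
      unfold rdeg at this
      split_ifs at this; omega) u
    have hgB : g ∉ B := fun hgB => hgu (h1B a haD g hgB u huB hgD huD hag hua.symm)
    by_cases hgA : g ∈ A
    · have hne := hag.ne
      have hne2 := hua.ne
      have hne3 := huv.ne
      refine hn ⟨2, 4, le_rfl, ⟨a, haA, u, huB, ?_⟩, ⟨g, hgA, v, (key v hv).2.2.1, ?_⟩,
        fun i hi hi' => ?_⟩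
      · exact .cons haD hua.symm (.single (by grind))
      · refine .cons hgD hag.symm (.cons (by grind) hua.symm (.cons (by grind) huv (.single ?_)))
        have := hK.subset hv
        grind
      · have : i = 2 ∨ i + 1 = 3 + 1 := by omega
        rcases this with rfl | h
        · exact .inl ⟨a, haA, u, huB, .cons haD hua.symm (.single (by grind))⟩
        · left
          obtain rfl : i = 3 := by omega
          exact ⟨g, hgA, u, huB, .cons hgD hag.symm
            (.cons (by grind) hua.symm (.single (by grind)))⟩
    · obtain ⟨L, hL, hLc, haL⟩ := exists_comp_of_mem (G := G) haD haB
      refine hn' (h.symm.span2_of_contract ih h1B hB hL hLc ⟨a, haA, haL⟩ ?_)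
      have hgL : g ∈ L := (hL.adj haL hgD hag).resolve_right hgB
      by_contra hlt
      have h1 := (h.deg g hgD).1
      have h2 := dg_le_contract h1B hL hgL
      have h4 := dg_lt_card (G := G) hgL
      simp only [rdeg, hgA, hgB, if_false] at h1
      split_ifs at h2 <;> omega
  · push Not at hBA
    by_cases hex : ∃ a ∈ B, a ∈ D ∧ ∃ g ∈ D, g ∉ A ∧ G.Adj a g
    · obtain ⟨a, haB, haD, g, hg, hgA, hag⟩ := hex
      have haA := hBA a haB haD
      obtain ⟨K, hK, hKc, hgK⟩ := exists_comp_of_mem (G := G) hg hgA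
      exact hn (span_contract_pair hK haA haB haD (ih _ _ _ (h.card_lt hK)
        (h.three_le_card_contract h1A hBA hK)
        (h.contract_pair h1A hA hBA hK hKc haA ⟨g, hgK, hag⟩)))
    push Not at hex
    obtain ⟨b, hb, hbD⟩ := h.right
    have hbA := hBA b hb hbD
    obtain ⟨a, haD, hba⟩ : ∃ a ∈ D, G.Adj b a := exists_adj_of_dg (by
      have := (h.deg b hbD).1
      unfold rdeg at this
      split_ifs at this; omega)
    have haA : a ∈ A := by
      by_contra haA
      exact hex b hb hbD a haD haA hba
    have hbu : ∀ w ∈ D, G.Adj b w → w = a := fun w hw hbw =>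
      h1A b hbD w (by by_contra hwA; exact hex b hb hbD w hw hwA hbw) a haA hw haD hbw hba
    have haB : a ∉ B := by
      intro haB
      have := h.conn.2 {a, b} (by grind) (by simp) (fun x hx w hw hxw => by
        have hx : x = a ∨ x = b := by simpa using hx
        rcases hx with rfl | rfl
        · have := h1A x haD w (by by_contra hwA; exact hex x haB haD w hw hwA hxw) b hbA hw hbD
            hxw hba.symm
          simp [this]
        · simp [hbu w hw hxw])
      have := Finset.card_le_card this
      have := Finset.card_le_two (a := a) (b := b)
      omega
    obtain ⟨g, hgD, hag, hgb⟩ := exists_adj_ne_of_dg (G := G) (D := D) (v := a) (by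
      have := (h.deg a haD).1
      unfold rdeg at this
      split_ifs at this; omega) b
    have hgA : g ∉ A := fun hgA => hgb (h1A a haD g hgA b hbA hgD hbD hag hba.symm)
    obtain ⟨K, hK, hKc, hgK⟩ := exists_comp_of_mem (G := G) hgD hgA
    have hs := ih _ _ _ (h.card_lt hK) (h.three_le_card_contract h1A hBA hK)
      (h.contract_pair h1A hA hBA hK hKc haA ⟨g, hgK, hag⟩)
    have haK := hK.notMem haA
    have hbK := hK.notMem hbA
    have hab := hba.ne
    refine hn (hs.shift 3 fun n ⟨u, hu, v, hv, hp⟩ => ?_)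
    obtain ⟨c, hc, huc⟩ := mem_nb.1 hu
    have hva : G.Adj v a := by simpa using hv
    have hcK : c ∉ K := hK.notMem (by grind)
    have hcb : c ≠ b := by
      rintro rfl
      have := hbu u (hK.subset hp.left_mem) huc.symm
      subst this
      exact haK hp.left_mem
    have h1 : PathIn G (insert a (insert b K)) u b (n + 2) := by
      refine hp.append (E := {a, b}) (m := 2) (.cons (by simp) hba.symm (.single ?_)) hva ?_ ?_ ?_
      · grind
      · rw [Finset.disjoint_left]; grind
      · intro x; grind
      · intro x; grind
    exact ⟨c, by grind, b, hb, h1.cons' (by grind) (by grind) (by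
      have := hK.subset
      intro x; grind) huc.symm⟩

theorem span2 (h : Inst G D A B 3) (h3 : 3 ≤ D.card) : Span (Len G D A B) 2 := by
  induction hN : D.card using Nat.strong_induction_on generalizing D A B with
  | _ N ih =>
    exact h.span2_aux h3 fun D' A' B' hc h3' h' => ih D'.card (hN ▸ hc) h' h3' rfl

end Inst

end Instances

section Critical

variable {V : Type*} [DecidableEq V] [Fintype V] {G : SimpleGraph V} {D A B K : Finset V}

theorem Base.of_deg (s : V) (hD : Conn G D) (hA : ∃ a ∈ A, a ∈ D) (hB : ∃ b ∈ B, b ∈ D)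
    (hdeg : ∀ v ∈ D, 3 ≤ rdeg G D A B v)
    (hcond : ∀ e F, Cl G D {e} F → ∃ u ∈ F, u ∈ A ∨ u ∈ B) : Base G D A B s := by
  refine ⟨hD, hA, hB, ?_, fun v hv _ => hdeg v hv, fun e F hF _ => hcond e F hF⟩
  obtain ⟨a, ha, haD⟩ := hA
  obtain ⟨y, hy, hay⟩ : ∃ y ∈ D, G.Adj a y := exists_adj_of_dg (by
    have := hdeg a haD
    unfold rdeg at this
    split_ifs at this <;> omega)
  obtain ⟨K, hK, -, -⟩ := exists_comp_of_mem (G := G) (Q := {a}) hy (by simpa using hay.ne')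
  obtain ⟨u, hu, h⟩ := hcond a K hK
  exact ⟨a, haD, u, hK.subset hu, by rintro rfl; exact hK.notMem (by simp) hu, .inl ha, h⟩

theorem Len.glue {E : Finset V} {e : V} {n m : ℕ} (h1 : Len G K A (nb G {e}) n)
    (h2 : Len G E (nb G {e}) B m) (heK : e ∉ K) (heE : e ∉ E) (he : e ∈ D) (hKE : Disjoint K E)
    (hK : K ⊆ D) (hE : E ⊆ D) : Len G D A B (n + m + 1) := by
  obtain ⟨u, hu, v, hv, hp⟩ := h1
  obtain ⟨w, hw, x, hx, hp'⟩ := h2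
  refine ⟨u, hu, x, hx, ?_⟩
  have h3 : PathIn G (insert e E) e x (m + 1) :=
    hp'.cons' heE (by simp) (Finset.subset_insert _ _) (mem_nb_singleton.1 hw).symm
  exact hp.append h3 (mem_nb_singleton.1 hv) (by simp [heK, hKE]) hK
    (Finset.insert_subset he hE)

theorem Cl.comp_subset {Q F : Finset V} (hF : Cl G D Q F) (hK : Cl G D Q K) (hKc : Conn G K)
    {z : V} (hz : z ∈ K) (hzF : z ∈ F) : K ⊆ F := by
  intro x hx
  by_contra hxF
  obtain ⟨u, -, v, hv, huF, hvF, ha⟩ := hKc.exists_adj hz hx hzF hxF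
  have := hF.adj huF (hK.subset hv) ha
  have := hK.notMem (x := v)
  tauto

/-- The inductive hypothesis for the three-step result. -/
def Smaller3 (G : SimpleGraph V) (D : Finset V) : Prop :=
  ∀ D' A' B' : Finset V, D'.card < D.card → Inst G D' A' B' 4 → Span (Len G D' A' B') 3

/-- A counterexample to the three-step result, with the easy reductions already made. -/
structure Crit (G : SimpleGraph V) (D A B : Finset V) : Prop where
  inst : Inst G D A B 4
  smaller : Smaller3 G D
  not_span : ¬ Span (Len G D A B) 3
  conn_erase : ∀ e ∈ D, Conn G (D.erase e)
  left : Strong G D A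
  right : Strong G D B
  left_two : ∃ q ∈ D, ∃ x ∈ A, ∃ y ∈ A, x ∈ D ∧ y ∈ D ∧ x ≠ y ∧ G.Adj q x ∧ G.Adj q y
  right_two : ∃ q ∈ D, ∃ x ∈ B, ∃ y ∈ B, x ∈ D ∧ y ∈ D ∧ x ≠ y ∧ G.Adj q x ∧ G.Adj q y

theorem Crit.symm (h : Crit G D A B) : Crit G D B A :=
  ⟨h.inst.symm, h.smaller, fun h' => h.not_span (spanLen_comm h'), h.conn_erase, h.right, h.left,
    h.right_two, h.left_two⟩

namespace Inst

theorem strong_of_not_span3 (h : Inst G D A B 4) (ih : Smaller3 G D)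
    (hn : ¬ Span (Len G D A B) 3) : Strong G D B := by
  intro e F hF
  by_contra! hB
  obtain ⟨x, hx⟩ := hF.1
  obtain ⟨K, hKF, hK, hKc, -⟩ := exists_comp hF hx
  have hB' : ∀ b ∈ B, b ∉ K := fun b hb hbK => hB b (hKF hbK) hb
  exact hn (h.span_of_cut hK hB' (ih _ _ _ (h.cut_card_lt hK hB') (h.cut hK hKc hB')))

theorem span_cut2 (h : Inst G D A B 4) (hA : Strong G D A) {e : V} (he : e ∈ D)
    (hK : Cl G D {e} K) (hKc : Conn G K) : Span (Len G K A (nb G {e})) 2 := by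
  have heK := hK.notMem (Finset.mem_singleton_self e)
  have hle : ∀ v ∈ K, rdeg G D A B v ≤ rdeg G K A (nb G {e}) v + 1 := fun v hv => by
    have := hK.dg_le_nb hv
    unfold rdeg
    split_ifs at * <;> omega
  refine span2 ⟨hKc, ?_, ?_, HDeg.of_le (k := 1) h.deg hK.subset hle, fun f F hF => ?_⟩ ?_
  · obtain ⟨u, hu, huA⟩ := hA e K hK
    exact ⟨u, huA, hu⟩
  · obtain ⟨-, u, hu, ha⟩ := hK.adj_cut h.conn he heK
    exact ⟨u, by simpa, hu⟩
  · refine cond_cut (B := ∅) hK (by simp) hF fun hc => ?_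
    obtain ⟨u, hu, huA⟩ := hA f F hc
    exact ⟨u, hu, .inl huA⟩
  · by_contra hlt
    have key : ∀ u ∈ K, G.Adj u e ∧ 1 ≤ dg G K u ∧ rdeg G D A B u ≤ 4 := by
      intro u hu
      have h1 := (h.deg u (hK.subset hu)).1
      have h2 := hK.dg_le_nb hu
      have h3 := dg_lt_card (G := G) hu
      unfold rdeg at *
      by_cases h5 : G.Adj u e
      · rw [if_pos (by simpa)] at h2
        refine ⟨h5, ?_, ?_⟩ <;> split_ifs at * <;> omega
      · rw [if_neg (by simpa)] at h2
        split_ifs at * <;> omega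
    obtain ⟨u, hu⟩ := hK.1
    obtain ⟨hue, hdu, hle⟩ := key u hu
    obtain ⟨w, hw, huw⟩ := exists_adj_of_dg hdu
    have := (h.deg u (hK.subset hu)).2 ⟨w, hK.subset hw, e, he, huw, hue, (key w hw).1⟩
    omega

theorem span3_of_atMostOne (h : Inst G D A B 4) (ih : Smaller3 G D) (hA : Strong G D A)
    (h1 : AtMostOne G D A) : Span (Len G D A B) 3 := by
  by_cases hBA : ∃ b ∈ B, b ∈ D ∧ b ∉ A
  · obtain ⟨b, hb, hbD, hbA⟩ := hBA
    obtain ⟨K, hK, hKc, hbK⟩ := exists_comp_of_mem (G := G) hbD hbA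
    exact span_contract hK (ih _ _ _ (h.card_lt hK) (h.contract h1 hA hK hKc ⟨b, hb, hbK⟩))
  · push Not at hBA
    obtain ⟨a, haB, haD⟩ := h.right
    have haA := hBA a haB haD
    have hdg : 2 ≤ dg G D a := by
      have := (h.deg a haD).1
      unfold rdeg at this
      split_ifs at this; omega
    obtain ⟨g, hg, hag, hgA⟩ : ∃ g ∈ D, G.Adj a g ∧ g ∉ A := by
      obtain ⟨x, hx, hax, -⟩ := exists_adj_ne_of_dg hdg a
      obtain ⟨y, hy, hay, hyx⟩ := exists_adj_ne_of_dg hdg x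
      by_contra! hcon
      exact hyx (h1 a haD y (hcon y hy hay) x (hcon x hx hax) hy hx hay hax)
    obtain ⟨K, hK, hKc, hgK⟩ := exists_comp_of_mem (G := G) hg hgA
    exact span_contract_pair hK haA haB haD (ih _ _ _ (h.card_lt hK)
      (h.contract_pair h1 hA hBA hK hKc haA ⟨g, hgK, hag⟩))

theorem crit (h : Inst G D A B 4) (ih : Smaller3 G D) (hn : ¬ Span (Len G D A B) 3) :
    Crit G D A B := by
  have hn' : ¬ Span (Len G D B A) 3 := fun h => hn (spanLen_comm h)
  have hB := h.strong_of_not_span3 ih hn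
  have hA := h.symm.strong_of_not_span3 ih hn'
  have hA2 : ¬ AtMostOne G D A := fun h1 => hn (h.span3_of_atMostOne ih hA h1)
  have hB2 : ¬ AtMostOne G D B := fun h1 => hn' (h.symm.span3_of_atMostOne ih hB h1)
  refine ⟨h, ih, hn, fun e he => ?_, hA, hB, ?_, ?_⟩
  · obtain ⟨x, hx, hex⟩ : ∃ x ∈ D, G.Adj e x := exists_adj_of_dg (by
      have := (h.deg e he).1
      unfold rdeg at this
      split_ifs at this <;> omega)
    obtain ⟨K, hK, hKc, hxK⟩ := exists_comp_of_mem (G := G) (Q := {e}) hx (by simpa using hex.ne')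
    by_cases hKD : K = D.erase e
    · rwa [← hKD]
    obtain ⟨y, hy, hyK⟩ : ∃ y ∈ D.erase e, y ∉ K := by
      by_contra! hcon
      refine hKD (Finset.Subset.antisymm (fun z hz => ?_) hcon)
      have := hK.2 z hz
      grind
    obtain ⟨L, hL, hLc, hyL⟩ := exists_comp_of_mem (G := G) (D := D) (Q := {e}) (u := y)
      (by grind) (by grind)
    have hKL : Disjoint K L := Finset.disjoint_left.2 fun z hzK hzL =>
      hyK (hK.comp_subset hL hLc hzL hzK hyL)
    have hs := (h.span_cut2 hA he hK hKc).add (spanLen_comm (h.symm.span_cut2 hB he hL hLc))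
      (T := fun k => Len G D A B (k + 1)) fun n m h1 h2 =>
        h1.glue h2 (hK.notMem (by simp)) (hL.notMem (by simp)) he hKL hK.subset hL.subset
    exact absurd ((hs.shift 1 fun n hn => hn).mono (fun _ h => h) (by omega)) hn
  · unfold AtMostOne at hA2
    push Not at hA2
    obtain ⟨v, hv, x, hx, y, hy, h1⟩ := hA2
    exact ⟨v, hv, x, hx, y, hy, by tauto⟩
  · unfold AtMostOne at hB2
    push Not at hB2
    obtain ⟨v, hv, x, hx, y, hy, h1⟩ := hB2
    exact ⟨v, hv, x, hx, y, hy, by tauto⟩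

end Inst

namespace Crit

theorem exists_adj_of_cut (h : Crit G D A B) {x y : V} (hx : x ∈ D) (hy : y ∈ D) (hxy : x ≠ y)
    (hK : Cl G D {x, y} K) : ∃ u ∈ K, G.Adj u x := by
  have h1 : Cl G (D.erase y) {x} K := ⟨hK.1, fun u hu => by
    have := hK.2 u hu
    grind⟩
  exact (h1.adj_cut (h.conn_erase y hy) (x := x) (by grind) (hK.notMem (by simp))).2

theorem two_cut (h : Crit G D A B) {x y : V} (hx : x ∈ D) (hy : y ∈ D) (hxy : x ≠ y)
    (hK : Cl G D {x, y} K) (hKc : Conn G K) (hKA : ∀ v ∈ K, v ∉ A) (hKB : ∀ v ∈ K, v ∉ B) :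
    Span (Len G K (nb G {x}) (nb G {y})) 3 := by
  obtain ⟨u, hu, hux⟩ := h.exists_adj_of_cut hx hy hxy hK
  obtain ⟨w, hw, hwy⟩ := h.exists_adj_of_cut hy hx hxy.symm (by rwa [Finset.pair_comm])
  refine h.smaller _ _ _ (card_lt_contract ⟨x, by simp, hx⟩ hK) ⟨hKc, ⟨u, by simpa, hu⟩,
    ⟨w, by simpa, hw⟩, HDeg.of_le (k := 0) h.inst.deg hK.subset fun v hv => ?_, fun f F hF => ?_⟩
  · have h1 : dg G D v ≤ dg G K v + dg G {x, y} v := dg_le fun w hw ha => hK.adj hv hw ha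
    have h2 : dg G {x, y} v ≤ dg G {x} v + dg G {y} v := dg_le (by simp)
    have h3 := dg_singleton_le (G := G) (e := x) (v := v)
    have h4 := dg_singleton_le (G := G) (e := y) (v := v)
    have h5 := hKA v hv
    have h6 := hKB v hv
    simp only [rdeg, h5, h6, if_false]
    omega
  · by_contra! hcon
    obtain ⟨u, hu, huA⟩ := h.left f F ⟨hF.1, fun u hu => ⟨hK.subset (hF.subset hu),
      fun he => hF.notMem he hu, fun v hv ha => by
        rcases hK.adj (hF.subset hu) hv ha with h2 | h2
        · exact hF.adj hu h2 ha
        · have := hcon u hu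
          grind [mem_nb]⟩⟩
    exact hKA u (hF.subset hu) huA

end Crit

end Critical

section CriticalFalse

variable {V : Type*} [DecidableEq V] [Fintype V] {G : SimpleGraph V} {D A B K : Finset V}

/-- Prefixing paths by `p` or by `p' q p` with `p, p' ∈ P`. -/
theorem span_prepend_skip {P : Finset V} {q : V} {t : ℕ} (hs : Span (Len G K (nb G P) B) t)
    (hK : K ⊆ D) (hP : ∀ p ∈ P, p ∈ A ∧ p ∈ D ∧ G.Adj q p ∧ p ∉ K) (hq : q ∈ D) (hqK : q ∉ K)
    (h2 : ∀ x, ∃ y ∈ P, y ≠ x) : Span (Len G D A B) (t + 2) := by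
  have hR : Span (fun m => m = 1 ∨ m = 3) 2 := Span.of_skip (n := 1) (.inl rfl) (.inr rfl)
  refine hs.add hR ?_
  rintro n m h (rfl | rfl)
  · exact h.prepend (fun p hp => ⟨(hP p hp).1, (hP p hp).2.1, (hP p hp).2.2.2⟩) hK
  · obtain ⟨u, hu, v, hv, hp⟩ := h
    obtain ⟨p, hpP, ha⟩ := mem_nb.1 hu
    obtain ⟨p', hp', hne⟩ := h2 p
    have h3 := hP p hpP
    have h4 := hP p' hp'
    have h5 := h3.2.2.1.ne
    have h6 := h4.2.2.1.ne
    have h7 : PathIn G (insert p K) p v (n + 1) :=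
      hp.cons' h3.2.2.2 (by simp) (Finset.subset_insert _ _) ha.symm
    have h8 : PathIn G (insert q (insert p K)) q v (n + 1 + 1) :=
      h7.cons' (by simp [hqK, h5]) (by simp) (Finset.subset_insert _ _) h3.2.2.1
    exact ⟨p', h4.1, v, hv, h8.cons' (by grind) h4.2.1 (by intro x; grind) h4.2.2.1.symm⟩

/-- Prefixing paths by the edge `p q`. -/
theorem Len.prepend_edge {p q : V} {n : ℕ} (h : Len G K (nb G {q}) B n) (hK : K ⊆ D)
    (hq : q ∈ D) (hqK : q ∉ K) (hp : p ∈ D) (hpA : p ∈ A) (hpK : p ∉ K) (ha : G.Adj p q) :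
    Len G D A B (n + 2) := by
  have h1 : Len G (insert q K) (nb G {p}) B (n + 1) :=
    h.prepend (by simp [hqK, ha.symm]) (Finset.subset_insert _ _)
  exact h1.prepend (by simp [hpA, hp, hpK, ha.ne]) (Finset.insert_subset hq hK)

namespace Crit

theorem cond_right (h : Crit G D A B) {e : V} {F : Finset V}
    (hF : ∀ u ∈ F, u ∈ K ∧ u ≠ e ∧ ∀ v ∈ D, G.Adj u v → v ∈ F ∨ v = e) (hK : K ⊆ D)
    (hne : F.Nonempty) : ∃ u ∈ F, u ∈ B := by
  refine h.right e F ⟨hne, fun u hu => ?_⟩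
  have := hF u hu
  refine ⟨hK this.1, by simpa using this.2.1, fun v hv ha => ?_⟩
  simpa using this.2.2 v hv ha

theorem false_of_separated_meets (h : Crit G D A B) {q d b x : V} {P D1 F : Finset V}
    (hq : q ∈ D) (hP : ∀ x, x ∈ P ↔ x ∈ A ∧ x ∈ D ∧ G.Adj q x)
    (hD1 : Cl G D (insert q P) D1) (hb : b ∈ B) (hbD1 : b ∈ D1) (hbF : b ∉ F)
    (hF : Cl G D1 {d} F) (hFc : Conn G F) (hd : d ∈ D1) (hE : Conn G (D1 \ F))
    (hFB : ∀ u ∈ F, u ∉ B) (hclF : Cl G D {q, d} F) (hFd : ∃ u ∈ F, G.Adj u d)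
    {p u : V} (hp : p ∈ P) (hu : u ∈ D1) (huF : u ∉ F) (hup : G.Adj u p)
    (hxF : x ∈ F) (hxA : x ∈ A) : False := by
  refine h.not_span ?_
  have hdF : d ∉ F := hF.notMem (by simp)
  have hqD1 : q ∉ D1 := hD1.notMem (by simp)
  have hPD1 : ∀ z ∈ P, z ∉ D1 := fun z hz => hD1.notMem (by simp [hz])
  have hqd : q ≠ d := by rintro rfl; exact hqD1 hd
  have hqF : q ∉ F := fun hh => hqD1 (hF.subset hh)
  have hdeg : HDeg G F A (nb G {d}) 3 := HDeg.of_le (k := 1) h.inst.deg hclF.subset fun v hv => by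
    have h1 : dg G D v ≤ dg G F v + dg G {q, d} v := dg_le fun w hw ha => hclF.adj hv hw ha
    have h2 : dg G {q, d} v ≤ dg G {q} v + dg G {d} v := dg_le (by simp)
    have h3 := dg_singleton_le (G := G) (e := q) (v := v)
    have h4 := dg_singleton_le (G := G) (e := d) (v := v)
    have h6 := hFB v hv
    simp only [rdeg, h6, if_false]
    split_ifs at * <;> omega
  by_cases hcond : ∀ e F', Cl G F {e} F' → ∃ u ∈ F', u ∈ A ∨ u ∈ nb G {d}
  · have hI : Inst G F A (nb G {d}) 3 := by
      refine ⟨hFc, ⟨x, hxA, hxF⟩, ?_, hdeg, hcond⟩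
      obtain ⟨u, hu, ha⟩ := hFd
      exact ⟨u, by simpa, hu⟩
    have hcard : 3 ≤ F.card := by
      have h1 := (h.inst.deg x (hclF.subset hxF)).1
      have h2 : dg G D x ≤ dg G F x + dg G {d} x := dg_le fun w hw ha => by
        have := hclF.adj hxF hw ha
        have := hP x
        have := hPD1 x
        have := hF.subset hxF
        have := hD1.subset this
        have := ha.symm
        grind
      have h3 := dg_singleton_le (G := G) (e := d) (v := x)
      have h4 := dg_lt_card (G := G) hxF
      have h6 := hFB x hxF
      simp only [rdeg, h6, if_false] at h1
      split_ifs at * <;> omega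
    have hs1 := hI.span2 hcard
    have hcl' : Cl G (D.erase d) {q} F := ⟨hF.1, fun u hu => by
      have := hclF.2 u hu
      grind⟩
    have hEc := hcl'.conn_sdiff (h.conn_erase d (hD1.subset hd)) (e := q) (by grind)
    obtain ⟨g, hg, hdg, hgq⟩ : ∃ g ∈ D.erase d \ F, G.Adj d g ∧ g ≠ q := by
      by_cases hud : u = d
      · subst hud
        have h3 := hPD1 p hp
        refine ⟨p, ?_, hup, ?_⟩
        · have := hF.subset (x := p)
          have := (hP p).1 hp
          grind
        · rintro rfl
          exact ((hP p).1 hp).2.2.ne rfl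
      · obtain ⟨y, hy, z, hz, hyd, hzd, ha⟩ := hE.exists_adj (u := d) (v := u) (S := {d})
          (by grind) (by grind) (by simp) (by simpa using hud)
        have := hD1.subset (x := z)
        exact ⟨z, by grind, by grind, by grind⟩
    have hEF : ∀ v ∈ D.erase d \ F, v ≠ q → ∀ w ∈ F, ¬ G.Adj v w := by
      intro v hv hvq w hw ha
      have := hclF.adj hw (v := v) (by grind) ha.symm
      grind
    obtain ⟨q', hq', y, hy, z, hz, hyD, hzD, hyz, hqy, hqz⟩ := h.right_two
    have hFy := hFB y
    have hFz := hFB z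
    have hr : ∃ b ∈ B, b ∈ D.erase d \ F := by
      by_cases hyd : y = d
      · exact ⟨z, hz, by grind⟩
      · exact ⟨y, hy, by grind⟩
    have hBase : Base G (D.erase d \ F) (nb G {d}) B q := by
      refine ⟨hEc, ⟨g, by simpa using hdg.symm, hg⟩, hr, ?_, fun v hv hvq => ?_,
        fun e F'' hF'' hqF'' => ?_⟩
      · by_contra! hcon
        have hone : ∀ v ∈ D.erase d \ F, G.Adj v d ∨ v ∈ B → v = g := by
          intro v hv hv'
          by_contra hvg
          have := hcon v hv g hg hvg (by simpa using hv')
          exact this.1 (by simpa using hdg.symm)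
        have e1 := hone y
        have e2 := hone z
        have e3 := hone q'
        have e4 := hone b
        have e5 := hEF g hg hgq q'
        have := hqy.symm
        have := hqz.symm
        have := hqy.ne
        have := hqz.ne
        grind
      · have h1 := (h.inst.deg v (by grind)).1
        have h2 : dg G D v ≤ dg G (D.erase d \ F) v + dg G {d} v := dg_le fun w hw ha => by
          have := hEF v hv hvq w
          grind
        have h3 := dg_singleton_le (G := G) (e := d) (v := v)
        unfold rdeg at *
        split_ifs at * <;> omega
      · by_contra! hcon
        obtain ⟨u, hu, hu'⟩ := h.cond_right (K := D.erase d \ F) (F := F'') (e := e)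
          (fun u hu => by
            have h1 := hF''.2 u hu
            have h2 := hEF u h1.1 (by rintro rfl; exact hqF'' hu)
            have h3 := (hcon u hu).1
            simp only [mem_nb_singleton] at h3
            refine ⟨h1.1, by simpa using h1.2.1, fun v hv ha => ?_⟩
            have := h1.2.2 v
            have := h2 v
            grind) (by intro z; grind) hF''.1
        exact (hcon u hu).2 hu'
    have hs := hs1.add hBase.span (T := fun k => Len G D A B (k + 1)) fun n m h1 h2 =>
      h1.glue h2 hdF (by simp) (hD1.subset hd)
        (Finset.disjoint_sdiff) hclF.subset (by intro z; grind)
    exact hs.shift 1 fun n hn => hn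
  · push Not at hcond
    obtain ⟨f, F0, hF0, hbad⟩ := hcond
    obtain ⟨y, hy⟩ := hF0.1
    obtain ⟨F', hF'F, hF', hFc', -⟩ := exists_comp hF0 hy
    have hxF' : x ∉ F' := fun hh => (hbad x (hF'F hh)).1 hxA
    obtain ⟨hfF, -⟩ := hF'.adj_cut hFc hxF hxF'
    have hcl : Cl G D {f, q} F' := ⟨hF'.1, fun u hu => by
      have h1 := hF'.2 u hu
      have h2 := hclF.2 u h1.1
      have h3 := (hbad u (hF'F hu)).2
      simp only [mem_nb_singleton] at h3
      refine ⟨h2.1, by grind, fun v hv ha => ?_⟩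
      have := h1.2.2 v
      have := h2.2.2 v hv ha
      grind⟩
    have hfq : f ≠ q := by rintro rfl; exact hqF hfF
    have hs := h.two_cut (hclF.subset hfF) hq hfq hcl hFc' (fun v hv => (hbad v (hF'F hv)).1)
      (fun v hv => hFB v (hF'.subset hv))
    have hs1 : Span (Len G F (nb G {q}) A) 3 := Len.through (spanLen_comm hs)
      (hF'.conn_sdiff hFc hfF) (by have := hF'.notMem (x := f) (by simp); grind) ⟨x, hxA, by grind⟩
      Finset.disjoint_sdiff hF'.subset Finset.sdiff_subset
    have hpq := (hP p).1 hp
    have hpD1 := hPD1 p hp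
    have hE1 : Conn G (insert q (insert p (D1 \ F))) :=
      (hE.insert_adj ⟨u, by grind, hup.symm⟩).insert_adj ⟨p, by simp, hpq.2.2⟩
    refine Len.through (spanLen_comm hs1) hE1 (by simp) ⟨b, hb, by grind⟩ ?_ hclF.subset ?_
    · have := hF.subset (x := p)
      rw [Finset.disjoint_left]; grind
    · have := hD1.subset
      intro z; grind

theorem false_of_center (h : Crit G D A B) {q b : V} {P : Finset V} (hq : q ∈ D)
    (hP : ∀ x, x ∈ P ↔ x ∈ A ∧ x ∈ D ∧ G.Adj q x) (h2 : ∀ x, ∃ y ∈ P, y ≠ x)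
    (hno : ∀ w ∈ D, w ≠ q → w ∉ P → dg G P w ≤ 2 ∧ (w ∈ A → dg G P w ≤ 1))
    (hb : b ∈ B) (hbD : b ∈ D) (hbP : b ∉ P) (hbq : b ≠ q) : False := by
  obtain ⟨D1, hD1, hD1c, hbD1⟩ := exists_comp_of_mem (G := G) (D := D) (Q := insert q P) hbD
    (by grind)
  have hqD1 : q ∉ D1 := hD1.notMem (by simp)
  have hPD1 : ∀ z ∈ P, z ∉ D1 := fun z hz => hD1.notMem (by simp [hz])
  obtain ⟨p1, hp1, -⟩ := h2 q
  obtain ⟨p, hp, u, hu, hup⟩ : ∃ p ∈ P, ∃ u ∈ D1, G.Adj u p := by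
    have h3 := (hP p1).1 hp1
    have := hD1.subset hbD1
    obtain ⟨y, hy, z, hz, hyD, hzD, ha⟩ := (h.conn_erase q hq).exists_adj (u := b) (v := p1)
      (S := D1) (by grind) (by have := h3.2.2.ne; grind) hbD1 (hPD1 p1 hp1)
    have := hD1.adj hyD (v := z) (by grind) ha
    exact ⟨z, by grind, y, hyD, ha⟩
  by_cases hcond : ∀ e F, Cl G D1 {e} F → ∃ u ∈ F, u ∈ nb G P ∨ u ∈ B
  · have hBase : Base G D1 (nb G P) B b := by
      refine Base.of_deg b hD1c ⟨u, by simpa using ⟨p, hp, hup⟩, hu⟩ ⟨b, hb, hbD1⟩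
        (fun v hv => ?_) hcond
      have hvD := hD1.subset hv
      have hvq : v ≠ q := by rintro rfl; exact hqD1 hv
      have hvP : v ∉ P := fun hh => hPD1 v hh hv
      have h1 := hno v hvD hvq hvP
      have h3 := h.inst.deg v hvD
      have h4 : dg G D v ≤ dg G D1 v + dg G (insert q P) v := dg_le fun w hw ha => hD1.adj hv hw ha
      have h5 : dg G (insert q P) v ≤ dg G {q} v + dg G P v := dg_le (by grind)
      have h6 : dg G {q} v ≤ 1 := dg_le_one (by simp)
      have h6' : ¬ G.Adj v q → dg G {q} v = 0 := fun hh => dg_eq_zero (by simpa using hh)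
      by_cases hvn : v ∈ nb G P
      · by_cases hvA : v ∈ A
        · have h7 : ¬ G.Adj v q := fun hh => hvP ((hP v).2 ⟨hvA, hvD, hh.symm⟩)
          have h8 := h1.2 hvA
          have h9 := h6' h7
          simp only [rdeg, if_pos hvA, if_pos hvn] at h3 ⊢
          omega
        · have h8 : G.Adj v q → Tri G D v := fun hh => by
            obtain ⟨p, hp, ha⟩ := mem_nb.1 hvn
            have := (hP p).1 hp
            exact ⟨q, hq, p, this.2.1, hh, ha, this.2.2⟩
          simp only [rdeg, if_neg hvA, if_pos hvn] at h3 ⊢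
          by_cases h9 : G.Adj v q
          · have := h3.2 (h8 h9)
            omega
          · have := h6' h9
            omega
      · have h7 : dg G P v = 0 := dg_eq_zero fun w hw ha => hvn (mem_nb.2 ⟨w, hw, ha⟩)
        have h8 : v ∈ A → ¬ G.Adj v q := fun hvA hh => hvP ((hP v).2 ⟨hvA, hvD, hh.symm⟩)
        simp only [rdeg, if_neg hvn] at h3 ⊢
        by_cases hvA : v ∈ A
        · have := h6' (h8 hvA)
          rw [if_pos hvA] at h3
          omega
        · rw [if_neg hvA] at h3
          omega
    exact h.not_span (span_prepend_skip hBase.span hD1.subset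
      (fun p hp => by have := (hP p).1 hp; have := hPD1 p hp; tauto) hq hqD1 h2)
  · push Not at hcond
    obtain ⟨d, F0, hF0, hbad⟩ := hcond
    obtain ⟨y, hy⟩ := hF0.1
    obtain ⟨F, hFF, hF, hFc, -⟩ := exists_comp hF0 hy
    have hbF : b ∉ F := fun hh => (hbad b (hFF hh)).2 hb
    obtain ⟨hd, hFd⟩ := hF.adj_cut hD1c hbD1 hbF
    have hE := hF.conn_sdiff hD1c hd
    have hclF : Cl G D {q, d} F := ⟨hF.1, fun u hu => by
      have h1 := hF.2 u hu
      have h2 := hD1.2 u h1.1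
      have h3 := (hbad u (hFF hu)).1
      simp only [mem_nb, not_exists, not_and] at h3
      refine ⟨h2.1, by grind, fun v hv ha => ?_⟩
      have := h1.2.2 v
      have := h2.2.2 v hv ha
      have := h3 v
      grind⟩
    have huF : u ∉ F := fun hh => (hbad u (hFF hh)).1 (mem_nb.2 ⟨p, hp, hup⟩)
    by_cases hFA : ∃ x ∈ F, x ∈ A
    · obtain ⟨x, hxF, hxA⟩ := hFA
      exact h.false_of_separated_meets hq hP hD1 hb hbD1 hbF hF hFc hd hE
        (fun u hu => (hbad u (hFF hu)).2) hclF hFd hp hu huF hup hxF hxA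
    · push Not at hFA
      have hs := h.two_cut hq (hD1.subset hd) (by rintro rfl; exact hqD1 hd) hclF hFc hFA
        (fun u hu => (hbad u (hFF hu)).2)
      have hs1 : Span (Len G D1 (nb G {q}) B) 3 := Len.through hs hE
        (by have := hF.notMem (x := d) (by simp); grind) ⟨b, hb, by grind⟩
        Finset.disjoint_sdiff hF.subset Finset.sdiff_subset
      have h3 := (hP p).1 hp
      exact h.not_span (hs1.shift 2 fun n hn => hn.prepend_edge hD1.subset hq hqD1 h3.2.1 h3.1
        (hPD1 p hp) h3.2.2.symm)

end Crit

end CriticalFalse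

section ThreeSteps

variable {V : Type*} [DecidableEq V] [Fintype V] {G : SimpleGraph V} {D A B K : Finset V}

namespace Crit

theorem false_of_common_comp (h : Crit G D A B) {q w p0 b : V} {Q : Finset V} (hq : q ∈ D)
    (hw : w ∈ D) (hwq : w ≠ q)
    (hQ : ∀ x ∈ Q, x ∈ A ∧ x ∈ D ∧ G.Adj q x ∧ G.Adj w x) (h2 : ∀ x, ∃ y ∈ Q, y ≠ x)
    (h3 : w ∈ A ∨ ∀ x y, ∃ z ∈ Q, z ≠ x ∧ z ≠ y) (hK : Cl G D {q, w} K) (hKc : Conn G K)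
    (hp0 : p0 ∈ Q) (hp0K : p0 ∈ K) (hb : b ∈ B) (hbK : b ∈ K) : False := by
  refine h.not_span ?_
  obtain ⟨p, hp, b', hb', m, hpK, hb'K, hm⟩ :=
    hKc.exists_path_from (P := Q) ⟨p0, hp0, hp0K⟩ ⟨b, hb, hbK⟩
  obtain ⟨p', hp', hne⟩ := h2 p
  have hqK : q ∉ K := hK.notMem (by simp)
  have hwK : w ∉ K := hK.notMem (by simp)
  have e1 := hQ p hp
  have e2 := hQ p' hp'
  have hKD := hK.subset
  have n1 := e1.2.2.1.ne
  have n2 := e1.2.2.2.ne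
  have n3 := e2.2.2.1.ne
  have n4 := e2.2.2.2.ne
  have s1 : PathIn G (insert q (insert p (K \ Q))) q b' (m + 1) :=
    hm.cons' (by grind) (by simp) (Finset.subset_insert _ _) e1.2.2.1
  have s2 : PathIn G (insert p' (insert q (insert p (K \ Q)))) p' b' (m + 2) :=
    s1.cons' (by grind) (by simp) (Finset.subset_insert _ _) e2.2.2.1.symm
  have s3 : PathIn G (insert w (insert p' (insert q (insert p (K \ Q))))) w b' (m + 3) :=
    s2.cons' (by grind) (by simp) (Finset.subset_insert _ _) e2.2.2.2
  have l0 : Len G D A B m := ⟨p, e1.1, b', hb', hm.mono (by intro x; grind)⟩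
  have l2 : Len G D A B (m + 2) := ⟨p', e2.1, b', hb', s2.mono (by intro x; grind)⟩
  rcases h3 with hwA | h3
  · have l3 : Len G D A B (m + 3) := ⟨w, hwA, b', hb', s3.mono (by intro x; grind)⟩
    refine ⟨m, m + 3, by omega, l0, l3, fun i _ _ => ?_⟩
    obtain rfl | rfl | rfl : i = m ∨ i = m + 1 ∨ i = m + 2 := by omega
    · exact .inl l0
    · exact .inr l2
    · exact .inl l2
  · obtain ⟨p'', hp'', ne1, ne2⟩ := h3 p p'
    have e3 := hQ p'' hp''
    have n5 := e3.2.2.1.ne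
    have n6 := e3.2.2.2.ne
    have l4 : Len G D A B (m + 4) := ⟨p'', e3.1, b', hb',
      s3.cons' (by grind) e3.2.1 (by intro x; grind) e3.2.2.2.symm⟩
    refine ⟨m, m + 4, by omega, l0, l4, fun i _ _ => ?_⟩
    obtain rfl | rfl | rfl | rfl : i = m ∨ i = m + 1 ∨ i = m + 2 ∨ i = m + 3 := by omega
    · exact .inl l0
    · exact .inr l2
    · exact .inl l2
    · exact .inr l4

theorem false_of_common (h : Crit G D A B) {q w : V} {P Q : Finset V} (hq : q ∈ D)
    (hw : w ∈ D) (hwq : w ≠ q) (hP : ∀ x, x ∈ P ↔ x ∈ A ∧ x ∈ D ∧ G.Adj q x)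
    (hQ : ∀ x, x ∈ Q ↔ x ∈ P ∧ G.Adj w x) (h2 : ∀ x, ∃ y ∈ Q, y ≠ x)
    (h3 : w ∈ A ∨ ∀ x y, ∃ z ∈ Q, z ≠ x ∧ z ≠ y) : False := by
  have hQ' : ∀ x ∈ Q, x ∈ A ∧ x ∈ D ∧ G.Adj q x ∧ G.Adj w x := fun x hx => by
    have := (hQ x).1 hx
    have := (hP x).1 this.1
    tauto
  by_cases hB : ∃ b ∈ B, b ∈ D ∧ b ∉ ({q, w} : Finset V)
  · obtain ⟨b, hb, hbD, hbqw⟩ := hB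
    obtain ⟨K, hK, hKc, hbK⟩ := exists_comp_of_mem (G := G) hbD hbqw
    have hqK : q ∉ K := hK.notMem (by simp)
    have hwK : w ∉ K := hK.notMem (by simp)
    have hQK : ∀ x ∈ Q, x ∉ K := fun x hx hxK =>
      h.false_of_common_comp hq hw hwq hQ' h2 h3 hK hKc hx hxK hb hbK
    obtain ⟨u, hu, v, hv, hvQ, ha⟩ := hK.exists_adj h.inst.conn hq hqK
    have hBase : Base G K (nb G {q, w}) B b := by
      refine Base.of_deg b hKc ⟨u, mem_nb.2 ⟨v, hvQ, ha⟩, hu⟩ ⟨b, hb, hbK⟩ (fun v hv => ?_)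
        (fun e F hF => ?_)
      · have h1 := (h.inst.deg v (hK.subset hv)).1
        have h4 : dg G D v ≤ dg G K v + dg G {q, w} v := dg_le fun x hx ha => hK.adj hv hx ha
        have h5 : dg G {q, w} v ≤ dg G {q} v + dg G {w} v := dg_le (by simp)
        have h6 : dg G {q} v ≤ 1 := dg_le_one (by simp)
        have h7 : dg G {w} v ≤ 1 := dg_le_one (by simp)
        have h8 : ¬ G.Adj v q → dg G {q} v = 0 := fun hh => dg_eq_zero (by simpa using hh)
        have h9 : ¬ G.Adj v w → dg G {w} v = 0 := fun hh => dg_eq_zero (by simpa using hh)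
        have h10 : v ∈ A → G.Adj v q → G.Adj v w → False := fun hvA hvq hvw =>
          hQK v ((hQ v).2 ⟨(hP v).2 ⟨hvA, hK.subset hv, hvq.symm⟩, hvw.symm⟩) hv
        have h11 : v ∈ nb G {q, w} ↔ G.Adj v q ∨ G.Adj v w := by simp
        unfold rdeg at *
        by_cases c1 : G.Adj v q <;> by_cases c2 : G.Adj v w <;>
          simp only [c1, c2, h11, true_or, or_true, or_self, if_true, if_false, true_imp_iff,
            imp_false, not_true_eq_false, not_false_eq_true, false_imp_iff] at * <;>
          split_ifs at * <;> omega
      · by_contra! hcon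
        obtain ⟨u, hu, hu'⟩ := h.cond_right (K := K) (F := F) (e := e)
          (fun u hu => by
            have h1 := hF.2 u hu
            have h2 := hK.2 u h1.1
            have h3 := (hcon u hu).1
            simp only [mem_nb, not_exists, not_and] at h3
            refine ⟨h1.1, by simpa using h1.2.1, fun v hv ha => ?_⟩
            have := h1.2.2 v
            have := h2.2.2 v hv ha
            have := h3 v
            grind) hK.subset hF.1
        exact (hcon u hu).2 hu'
    have hR : Span (fun m => m = 2 ∨ m = 4) 2 := Span.of_skip (n := 2) (.inl rfl) (.inr rfl)
    refine h.not_span (hBase.span.add hR ?_)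
    have key : ∀ {q w v : V} {n : ℕ}, q ∈ D → w ∈ D → w ≠ q → q ∉ K → w ∉ K →
        (∀ x ∈ Q, x ∈ A ∧ x ∈ D ∧ G.Adj q x ∧ G.Adj w x) →
        Len G K (nb G {q}) B n → Len G D A B (n + 2) ∧ Len G D A B (n + 4) := by
      intro q w v n hq hw hwq hqK hwK hQ hn
      obtain ⟨p, hp, -⟩ := h2 q
      obtain ⟨p', hp', hne⟩ := h2 p
      have e1 := hQ p hp
      have e2 := hQ p' hp'
      have n1 := e1.2.2.1.ne
      have n2 := e1.2.2.2.ne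
      have n3 := e2.2.2.1.ne
      have n4 := e2.2.2.2.ne
      have k1 := hQK p hp
      have k2 := hQK p' hp'
      refine ⟨hn.prepend_edge hK.subset hq hqK e1.2.1 e1.1 k1 e1.2.2.1.symm, ?_⟩
      have s1 : Len G (insert p (insert q K)) (nb G {w}) B (n + 2) :=
        hn.prepend_edge (by intro x; grind) (by simp) hqK (by simp) (by simpa using e1.2.2.2.symm)
          k1 e1.2.2.1.symm
      have := hK.subset
      exact s1.prepend_edge (by intro x; grind) hw (by grind) e2.2.1 e2.1 (by grind)
        e2.2.2.2.symm
    rintro n m ⟨u, hu, v, hv, hp⟩ hm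
    obtain ⟨z, hz, ha⟩ := mem_nb.1 hu
    have : Len G D A B (n + 2) ∧ Len G D A B (n + 4) := by
      rcases Finset.mem_insert.1 hz with rfl | hz
      · exact key (v := v) hq hw hwq hqK hwK hQ' ⟨u, by simpa, v, hv, hp⟩
      · obtain rfl := Finset.mem_singleton.1 hz
        exact key (v := v) hw hq hwq.symm hwK hqK (fun x hx => by have := hQ' x hx; tauto)
          ⟨u, by simpa, v, hv, hp⟩
    rcases hm with rfl | rfl
    exacts [this.1, this.2]
  · push Not at hB
    obtain ⟨r, hr, x, hx, y, hy, hxD, hyD, hxy, -, -⟩ := h.right_two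
    obtain ⟨p, hp, -⟩ := h2 q
    obtain ⟨p', hp', hne⟩ := h2 p
    have e1 := hQ' p hp
    have e2 := hQ' p' hp'
    have f1 := hB x hx hxD
    have f2 := hB y hy hyD
    have f3 : q ∈ B ∧ w ∈ B := by clear h2 h3 hQ hQ' hP hB; grind
    refine h.symm.false_of_center (q := p) (b := p') (P := {q, w}) e1.2.1 (fun z => ?_)
      (fun z => ?_) (fun v hv _ hvqw => ?_) e2.1 e2.2.1 ?_ hne
    · have := hB z
      have := e1.2.2.1.symm
      have := e1.2.2.2.symm
      clear h2 h3 hQ hQ' hP hB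
      grind
    · by_cases hz : z = q
      · exact ⟨w, by grind⟩
      · exact ⟨q, by grind⟩
    · refine ⟨(dg_le_card fun _ h _ => h).trans Finset.card_le_two, fun hvB => ?_⟩
      exact absurd (hB v hvB hv) hvqw
    · have := e2.2.2.1.ne
      have := e2.2.2.2.ne
      grind

open Classical in
theorem dg_center (h : Crit G D A B) {q : V} {P : Finset V} (hq : q ∈ D)
    (hP : ∀ x, x ∈ P ↔ x ∈ A ∧ x ∈ D ∧ G.Adj q x) {w : V} (hw : w ∈ D) (hwq : w ≠ q) :
    dg G P w ≤ 2 ∧ (w ∈ A → dg G P w ≤ 1) := by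
  have hcard : dg G P w = (P.filter (G.Adj w)).card := rfl
  have hQ : ∀ x, x ∈ P.filter (G.Adj w) ↔ x ∈ P ∧ G.Adj w x := fun x => Finset.mem_filter
  constructor
  · by_contra hlt
    have h3 : ∀ x y, ∃ z ∈ P.filter (G.Adj w), z ≠ x ∧ z ≠ y := fun x y => by
      obtain ⟨z, hz, hne⟩ := Finset.exists_mem_notMem_of_card_lt_card
        (s := {x, y}) (t := P.filter (G.Adj w)) (by
          have := Finset.card_le_two (a := x) (b := y)
          omega)
      exact ⟨z, hz, by grind⟩
    exact h.false_of_common hq hw hwq hP hQ (fun x => by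
      obtain ⟨z, hz, h, -⟩ := h3 x x
      exact ⟨z, hz, h⟩) (.inr h3)
  · intro hwA
    by_contra hlt
    exact h.false_of_common hq hw hwq hP hQ
      (fun x => Finset.exists_mem_ne (by omega) x) (.inl hwA)

theorem mem_of_center (h : Crit G D A B) {q x y b : V} (hq : q ∈ D) (hx : x ∈ A) (hxD : x ∈ D)
    (hy : y ∈ A) (hyD : y ∈ D) (hxy : x ≠ y) (hqx : G.Adj q x) (hqy : G.Adj q y) (hb : b ∈ B)
    (hbD : b ∈ D) (hbq : b ≠ q) : b ∈ A ∧ G.Adj q b := by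
  by_contra hcon
  have hP : ∀ z, z ∈ A ∩ D ∩ nb G {q} ↔ z ∈ A ∧ z ∈ D ∧ G.Adj q z := by
    simp [adj_comm]
  refine h.false_of_center hq hP (fun z => ?_) (fun w hw hwq _ => h.dg_center hq hP hw hwq)
    hb hbD (by rw [hP]; tauto) hbq
  by_cases hz : z = x
  · exact ⟨y, (hP y).2 ⟨hy, hyD, hqy⟩, by grind⟩
  · exact ⟨x, (hP x).2 ⟨hx, hxD, hqx⟩, by grind⟩

theorem false_of_three (h : Crit G D A B) {t1 t2 t3 : V} (ht1 : t1 ∈ D) (ht2 : t2 ∈ D)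
    (ht3 : t3 ∈ D) (hA : ∀ v ∈ D, v ∈ A → v ∈ ({t1, t2, t3} : Finset V))
    (hB : ∀ v ∈ D, v ∈ B → v ∈ ({t1, t2, t3} : Finset V)) (a1 : t1 ∈ A) (b2 : t2 ∈ B)
    (b3 : t3 ∈ B) (a3 : t3 ∈ A) (e12 : G.Adj t1 t2) (e13 : G.Adj t1 t3) (n23 : t2 ≠ t3)
    (h2 : t2 ∈ A ∨ G.Adj t2 t3) : False := by
  refine h.not_span ?_
  have n12 := e12.ne
  have n13 := e13.ne
  obtain ⟨v0, hv0, hv0T⟩ : ∃ v ∈ D, v ∉ ({t1, t2, t3} : Finset V) := by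
    by_contra! hcon
    have h1 := h.inst.deg t1 ht1
    have h3 := (h.inst.deg t2 ht2).1
    have d1 : dg G D t1 ≤ ({t2, t3} : Finset V).card := dg_le_card fun w hw ha => by
      have := hcon w hw
      have := ha.ne
      grind
    have c2 := Finset.card_le_two (a := t2) (b := t3)
    by_cases e23 : G.Adj t2 t3
    · have := h1.2 ⟨t2, ht2, t3, ht3, e12, e13, e23⟩
      unfold rdeg at this
      split_ifs at this <;> omega
    · have d2 : dg G D t2 ≤ ({t1} : Finset V).card := dg_le_card fun w hw ha => by
        have := hcon w hw
        have := ha.ne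
        grind
      rw [Finset.card_singleton] at d2
      unfold rdeg at h3
      split_ifs at h3 <;> omega
  obtain ⟨K, hK, hKc, -⟩ := exists_comp_of_mem (G := G) hv0 hv0T
  have hKA : ∀ v ∈ K, v ∉ A := fun v hv hvA => (hK.2 v hv).2.1 (hA v (hK.subset hv) hvA)
  have hKB : ∀ v ∈ K, v ∉ B := fun v hv hvB => (hK.2 v hv).2.1 (hB v (hK.subset hv) hvB)
  have k1 : t1 ∉ K := hK.notMem (by simp)
  have k2 : t2 ∉ K := hK.notMem (by simp)
  have k3 : t3 ∉ K := hK.notMem (by simp)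
  have cut : ∀ {x y z : V}, x ∈ D → y ∈ D → x ≠ y → x ∉ K → y ∉ K →
      (∀ w, w ∈ ({t1, t2, t3} : Finset V) → w = x ∨ w = y ∨ w = z) → x ∈ A → y ∈ B →
      z ∉ nb G K → Span (Len G D A B) 3 := by
    intro x y z hx hy hxy hxK hyK hT hxA hyB hz
    have hcl : Cl G D {x, y} K := ⟨hK.1, fun u hu => by
      have h1 := hK.2 u hu
      refine ⟨h1.1, by grind, fun v hv ha => ?_⟩
      have h2 := h1.2.2 v hv ha
      have h3 := hT v
      have h4 : v ≠ z := by rintro rfl; exact hz (mem_nb.2 ⟨u, hu, ha.symm⟩)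
      grind⟩
    have hs := h.two_cut hx hy hxy hcl hKc hKA hKB
    have h1 : Span (Len G (insert y K) (nb G {x}) B) 3 := hs.shift 1 fun n hn =>
      hn.extend (by simp [hyB, hyK]) (Finset.subset_insert _ _)
    exact h1.shift 1 fun n hn => hn.prepend (by simp [hxA, hx, hxK, hxy])
      (Finset.insert_subset hy hK.subset)
  by_cases m1 : t1 ∈ nb G K
  swap
  · exact cut (z := t1) ht3 ht2 n23.symm k3 k2 (by grind) a3 b2 m1
  by_cases m2 : t2 ∈ nb G K
  swap
  · exact cut (z := t2) ht1 ht3 n13 k1 k3 (by grind) a1 b3 m2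
  by_cases m3 : t3 ∈ nb G K
  swap
  · exact cut (z := t3) ht1 ht2 n12 k1 k2 (by grind) a1 b2 m3
  have hdeg0 : ∀ v ∈ K, 4 ≤ dg G D v ∧ (Tri G D v → 5 ≤ dg G D v) := fun v hv => by
    have := h.inst.deg v (hK.subset hv)
    simpa [rdeg, hKA v hv, hKB v hv] using this
  have hle : ∀ v ∈ K, dg G D v ≤ dg G K v + 3 := fun v hv => by
    have h1 : dg G D v ≤ dg G K v + dg G {t1, t2, t3} v := dg_le fun x hx ha => hK.adj hv hx ha
    have h2 : dg G {t1, t2, t3} v ≤ ({t1, t2, t3} : Finset V).card := dg_le_card fun _ h _ => h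
    have := Finset.card_le_three (a := t1) (b := t2) (c := t3)
    omega
  have hI : Inst G K (nb G {t1}) (nb G {t2, t3}) 3 := by
    refine ⟨hKc, ?_, ?_, HDeg.of_le (k := 1) h.inst.deg hK.subset fun v hv => ?_,
      fun e F hF => ?_⟩
    · obtain ⟨u, hu, ha⟩ := mem_nb.1 m1
      exact ⟨u, by simpa using ha.symm, hu⟩
    · obtain ⟨u, hu, ha⟩ := mem_nb.1 m2
      exact ⟨u, mem_nb.2 ⟨t2, by simp, ha.symm⟩, hu⟩
    · have h1 : dg G D v ≤ dg G K v + dg G {t1, t2, t3} v :=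
        dg_le fun x hx ha => hK.adj hv hx ha
      have h2 : dg G {t1, t2, t3} v ≤ dg G {t1} v + dg G {t2, t3} v := dg_le (by simp)
      have h3 := dg_singleton_le (G := G) (e := t1) (v := v)
      have h4 : dg G {t2, t3} v ≤ 2 := (dg_le_card fun _ h _ => h).trans Finset.card_le_two
      have h5 : v ∉ nb G {t2, t3} → dg G {t2, t3} v = 0 := fun hh =>
        dg_eq_zero fun w hw ha => hh (mem_nb.2 ⟨w, hw, ha⟩)
      simp only [rdeg, if_neg (hKA v hv), if_neg (hKB v hv)]
      split_ifs at * with c1 c2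
      · omega
      · have := h5 c2
        omega
      · omega
      · have := h5 ‹_›
        omega
    · by_contra! hcon
      obtain ⟨u, hu, hu'⟩ := h.cond_right (K := K) (F := F) (e := e)
        (fun u hu => by
          have h1 := hF.2 u hu
          have h2 := hK.2 u h1.1
          have h3 := hcon u hu
          simp only [mem_nb, not_exists, not_and] at h3
          refine ⟨h1.1, by simpa using h1.2.1, fun v hv ha => ?_⟩
          have := h1.2.2 v
          have := h2.2.2 v hv ha
          have := h3.1 v
          have := h3.2 v
          grind) hK.subset hF.1
      exact hKB u (hF.subset hu) hu'
  have hcard : 3 ≤ K.card := by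
    by_contra hlt
    have key : ∀ v ∈ K, 1 ≤ dg G K v ∧ dg G D v ≤ 4 := fun v hv => by
      have h1 := hdeg0 v hv
      have h2 := hle v hv
      have h3 := dg_lt_card (G := G) hv
      omega
    have key2 : ∀ v ∈ K, G.Adj v t1 := fun v hv => by
      by_contra hna
      have h1 : dg G D v ≤ dg G K v + dg G {t2, t3} v := dg_le fun x hx ha => by
        have := hK.adj hv hx ha
        grind
      have h4 : dg G {t2, t3} v ≤ 2 := (dg_le_card fun _ h _ => h).trans Finset.card_le_two
      have h3 := dg_lt_card (G := G) hv
      have := hdeg0 v hv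
      omega
    obtain ⟨v, hv⟩ := hK.1
    obtain ⟨w, hw, ha⟩ := exists_adj_of_dg (key v hv).1
    have h1 := (hdeg0 v hv).2 ⟨w, hK.subset hw, t1, ht1, ha, key2 v hv, key2 w hw⟩
    have := (key v hv).2
    omega
  have hR : Span (fun m => m = 2 ∨ m = 3) 1 := Span.of_step (n := 2) (.inl rfl) (.inr rfl)
  refine (hI.span2 hcard).add hR ?_
  rintro n m ⟨u, hu, v, hv, hp⟩ hm
  have hut1 : G.Adj u t1 := by simpa using hu
  obtain ⟨t, t', ht, htD, htK, ht'D, ht'K, htB, ht'B, htt', hta, ht1t', hne1, hne2⟩ : ∃ t t',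
      G.Adj v t ∧ t ∈ D ∧ t ∉ K ∧ t' ∈ D ∧ t' ∉ K ∧ t ∈ B ∧ t' ∈ B ∧ t ≠ t' ∧
      (t ∈ A ∨ G.Adj t t') ∧ G.Adj t1 t' ∧ t1 ≠ t ∧ t1 ≠ t' := by
    obtain ⟨t, ht, ha⟩ := mem_nb.1 hv
    rcases Finset.mem_insert.1 ht with rfl | ht
    · exact ⟨t, t3, ha, ht2, k2, ht3, k3, b2, b3, n23, h2, e13, n12, n13⟩
    · obtain rfl := Finset.mem_singleton.1 ht
      exact ⟨t, t2, ha, ht3, k3, ht2, k2, b3, b2, n23.symm, .inl a3, e12, n13, n12⟩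
  have s1 : PathIn G (insert t K) t u (n + 1) :=
    hp.symm.cons' htK (by simp) (Finset.subset_insert _ _) ht.symm
  have s2 : PathIn G (insert t1 (insert t K)) t1 t (n + 2) :=
    s1.symm.cons' (by grind) (by simp) (Finset.subset_insert _ _) hut1.symm
  have hKD := hK.subset
  rcases hm with rfl | rfl
  · exact ⟨t1, a1, t, htB, s2.mono (by intro x; grind)⟩
  · rcases hta with hta | hta
    · exact Len.symm ⟨t', ht'B, t, hta, s2.cons' (by grind) ht'D (by intro x; grind) ht1t'.symm⟩
    · exact ⟨t1, a1, t', ht'B, (s2.symm.cons' (by grind) ht'D (by intro x; grind) hta.symm).symm⟩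

end Crit

end ThreeSteps

section ThreeStepsEnd

variable {V : Type*} [DecidableEq V] [Fintype V] {G : SimpleGraph V} {D A B K : Finset V}

namespace Crit

theorem false_of_pair (h : Crit G D A B) {q z1 z2 : V} (hq : q ∈ D) (h1 : z1 ∈ D) (h2 : z2 ∈ D)
    (h12 : z1 ≠ z2) (hq1 : q ≠ z1) (hq2 : q ≠ z2) (a1 : z1 ∈ A) (b2 : z2 ∈ B)
    (hA : ∀ v ∈ D, v ∈ A → v = z1 ∨ v = z2) (hB : ∀ v ∈ D, v ∈ B → v = z1 ∨ v = z2) : False := by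
  obtain ⟨K, hK, hKc, hqK⟩ := exists_comp_of_mem (G := G) (D := D) (Q := {z1, z2}) hq
    (by simp [hq1, hq2])
  have k1 : z1 ∉ K := hK.notMem (by simp)
  have k2 : z2 ∉ K := hK.notMem (by simp)
  have hs := h.two_cut h1 h2 h12 hK hKc
    (fun v hv hvA => by have := hA v (hK.subset hv) hvA; grind)
    (fun v hv hvA => by have := hB v (hK.subset hv) hvA; grind)
  have hs1 : Span (Len G (insert z2 K) (nb G {z1}) B) 3 := hs.shift 1 fun n hn =>
    hn.extend (by simp [b2, k2]) (Finset.subset_insert _ _)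
  exact h.not_span (hs1.shift 1 fun n hn => hn.prepend (by simp [a1, h1, k1, h12])
    (Finset.insert_subset h2 hK.subset))

theorem false_of_star (h : Crit G D A B) {q : V} {S : Finset V} (hq : q ∈ D) (hqS : q ∉ S)
    (hS : ∀ x ∈ S, x ∈ A ∧ x ∈ B ∧ x ∈ D ∧ G.Adj q x)
    (hA : ∀ x ∈ D, x ∈ A → x ∈ insert q S) (hB : ∀ x ∈ D, x ∈ B → x ∈ insert q S)
    (hno : ∀ w ∈ D, w ≠ q → dg G S w ≤ 2) (h3 : ∀ x y, ∃ z ∈ S, z ≠ x ∧ z ≠ y) : False := by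
  refine h.not_span ?_
  obtain ⟨z0, hz0, -, -⟩ := h3 q q
  by_cases hDS : ∀ v ∈ D, v ∈ insert q S
  · have e0 := hS z0 hz0
    have hdg : 2 ≤ dg G D z0 := by
      have := (h.inst.deg z0 e0.2.2.1).1
      unfold rdeg at this
      split_ifs at this <;> omega
    obtain ⟨z1, hz1D, ha, hz1q⟩ := exists_adj_ne_of_dg hdg q
    have hz1 : z1 ∈ S := by have := hDS z1 hz1D; grind
    have e1 := hS z1 hz1
    obtain ⟨z2, hz2, n20, n21⟩ := h3 z0 z1
    have e2 := hS z2 hz2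
    have n01 := ha.ne
    have l1 : Len G D A B 1 := ⟨z0, e0.1, z0, e0.2.1, .single e0.2.2.1⟩
    have s0 : PathIn G {z0} z0 z0 1 := .single (by simp)
    have s1 : PathIn G {z1, z0} z1 z0 2 := s0.cons' (by grind) (by simp) (by simp) ha.symm
    have s2 : PathIn G {q, z0} q z0 2 := s0.cons' (by grind) (by simp) (by simp) e0.2.2.2
    have s3 : PathIn G {q, z1, z0} q z0 3 := s1.cons' (by grind) (by simp) (by simp) e1.2.2.2
    have l2 : Len G D A B 2 := ⟨z1, e1.1, z0, e0.2.1, s1.mono (by intro x; grind)⟩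
    have l3 : Len G D A B 3 := ⟨z2, e2.1, z0, e0.2.1, s2.cons' (by grind) e2.2.2.1
      (by intro x; grind) e2.2.2.2.symm⟩
    have l4 : Len G D A B 4 := ⟨z2, e2.1, z0, e0.2.1, s3.cons' (by grind) e2.2.2.1
      (by intro x; grind) e2.2.2.2.symm⟩
    refine ⟨1, 4, by omega, l1, l4, fun i _ _ => ?_⟩
    interval_cases i
    exacts [.inl l1, .inl l2, .inl l3]
  push Not at hDS
  obtain ⟨v0, hv0, hv0S⟩ := hDS
  obtain ⟨K, hK, hKc, -⟩ := exists_comp_of_mem (G := G) hv0 hv0S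
  have hqK : q ∉ K := hK.notMem (by simp)
  have hSK : ∀ x ∈ S, x ∉ K := fun x hx => hK.notMem (by simp [hx])
  have hKA : ∀ v ∈ K, v ∉ A := fun v hv hvA => (hK.2 v hv).2.1 (hA v (hK.subset hv) hvA)
  have hKB : ∀ v ∈ K, v ∉ B := fun v hv hvB => (hK.2 v hv).2.1 (hB v (hK.subset hv) hvB)
  obtain ⟨z1, hz1, u1, hu1, ha1⟩ : ∃ z ∈ S, ∃ u ∈ K, G.Adj u z := by
    by_contra! hcon
    obtain ⟨u, hu, huA⟩ := h.left q K ⟨hK.1, fun u hu => ⟨hK.subset hu, by grind, fun v hv ha => by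
      have := hK.adj hu hv ha
      have := hcon v
      grind⟩⟩
    exact hKA u hu huA
  have e1 := hS z1 hz1
  by_cases hone : ∀ z ∈ S, ∀ u ∈ K, G.Adj u z → z = z1
  · have hcl : Cl G D {z1, q} K := ⟨hK.1, fun u hu => by
      have h1 := hK.2 u hu
      have h2 := fun v hv => hone v hv u hu
      refine ⟨h1.1, by grind, fun v hv ha => ?_⟩
      have := h1.2.2 v hv ha
      grind⟩
    have hs := h.two_cut e1.2.2.1 hq e1.2.2.2.ne' hcl hKc hKA hKB
    obtain ⟨z2, hz2, hne, -⟩ := h3 z1 z1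
    have e2 := hS z2 hz2
    have hs1 : Span (Len G (insert z2 (insert q K)) (nb G {z1}) B) 3 := by
      refine (spanLen_comm hs).shift 2 fun n hn => Len.symm ?_
      exact hn.prepend_edge (by intro x; grind) (by simp) hqK (by simp) e2.2.1 (hSK z2 hz2)
        e2.2.2.2.symm
    refine hs1.shift 1 fun n hn => hn.prepend (by
      have := hSK z1 hz1
      have := e1.2.2.2.ne
      grind) (by have := hK.subset; intro x; grind)
  push Not at hone
  obtain ⟨z2, hz2, u2, hu2, ha2, hz21⟩ := hone
  have e2 := hS z2 hz2
  by_cases hcond : ∀ e F, Cl G K {e} F → ∃ u ∈ F, u ∈ nb G {z1} ∨ u ∈ nb G (S.erase z1)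
  · have hBase : Base G K (nb G {z1}) (nb G (S.erase z1)) q := by
      refine Base.of_deg q hKc ⟨u1, by simpa, hu1⟩ ⟨u2, mem_nb.2 ⟨z2, by grind, ha2⟩, hu2⟩
        (fun v hv => ?_) hcond
      have hvD := hK.subset hv
      have h1 := h.inst.deg v hvD
      have h4 := hno v hvD (by rintro rfl; exact hqK hv)
      have h5 : dg G D v ≤ dg G K v + dg G (insert q S) v := dg_le fun w hw ha => hK.adj hv hw ha
      have h6 : dg G (insert q S) v ≤ dg G {q} v + dg G S v := dg_le (by grind)
      have h7 : dg G {q} v ≤ 1 := dg_le_one (by simp)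
      have h8 : ¬ G.Adj v q → dg G {q} v = 0 := fun hh => dg_eq_zero (by simpa using hh)
      have h9 : v ∉ nb G {z1} → v ∉ nb G (S.erase z1) → dg G S v = 0 := fun n1 n2 =>
        dg_eq_zero fun w hw ha => by
          simp only [mem_nb, not_exists, not_and] at n1 n2
          have := n1 w
          have := n2 w
          grind
      have h10 : G.Adj v q → ∀ z ∈ S, G.Adj v z → Tri G D v := fun hh z hz ha =>
        ⟨q, hq, z, (hS z hz).2.2.1, hh, ha, (hS z hz).2.2.2⟩
      have h11 : G.Adj v q → v ∈ nb G {z1} ∨ v ∈ nb G (S.erase z1) → Tri G D v := by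
        rintro hh (hh' | hh')
        · exact h10 hh z1 hz1 (by simpa using hh')
        · obtain ⟨z, hz, ha⟩ := mem_nb.1 hh'
          exact h10 hh z (Finset.mem_of_mem_erase hz) ha
      simp only [rdeg, if_neg (hKA v hv), if_neg (hKB v hv)] at h1 ⊢
      by_cases n1 : v ∈ nb G {z1} <;> by_cases n2 : v ∈ nb G (S.erase z1) <;>
        by_cases n3 : G.Adj v q <;> simp only [n1, n2, n3, true_or, or_true, if_true, if_false,
          true_imp_iff, not_true_eq_false, not_false_eq_true, or_self, false_imp_iff,
          imp_true_iff] at * <;> first | omega | (have := h1.2 h11; omega)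
    have hR : Span (fun m => m = 2 ∨ m = 4) 2 := Span.of_skip (n := 2) (.inl rfl) (.inr rfl)
    refine hBase.span.add hR ?_
    rintro n m ⟨u, hu, v, hv, hp⟩ hm
    obtain ⟨z, hz, hvz⟩ := mem_nb.1 hv
    have hz' := Finset.mem_of_mem_erase hz
    have hzne := Finset.ne_of_mem_erase hz
    have e := hS z hz'
    have hzK := hSK z hz'
    have hz1K := hSK z1 hz1
    have s1 : PathIn G (insert z K) z u (n + 1) :=
      hp.symm.cons' hzK (by simp) (Finset.subset_insert _ _) hvz.symm
    have s2 : PathIn G (insert z1 (insert z K)) z1 z (n + 2) :=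
      s1.symm.cons' (by grind) (by simp) (Finset.subset_insert _ _) (by simpa using hu : G.Adj u z1).symm
    have hKD := hK.subset
    rcases hm with rfl | rfl
    · exact ⟨z1, e1.1, z, e.2.1, s2.mono (by intro x; grind)⟩
    · obtain ⟨z3, hz3, n1, n2⟩ := h3 z1 z
      have e3 := hS z3 hz3
      have := hSK z3 hz3
      have s3 : PathIn G (insert q (insert z1 (insert z K))) q z (n + 3) :=
        s2.cons' (by grind) (by simp) (Finset.subset_insert _ _) e1.2.2.2
      exact ⟨z3, e3.1, z, e.2.1, s3.cons' (by grind) e3.2.2.1 (by intro x; grind)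
        e3.2.2.2.symm⟩
  push Not at hcond
  obtain ⟨d, F0, hF0, hbad⟩ := hcond
  obtain ⟨y, hy⟩ := hF0.1
  obtain ⟨F, hFF, hF, hFc, -⟩ := exists_comp hF0 hy
  have hu1F : u1 ∉ F := fun hh => (hbad u1 (hFF hh)).1 (by simpa)
  obtain ⟨hd, hFd⟩ := hF.adj_cut hKc hu1 hu1F
  have hclF : Cl G D {q, d} F := ⟨hF.1, fun u hu => by
    have h1 := hF.2 u hu
    have h2 := hK.2 u h1.1
    have h3 := hbad u (hFF hu)
    simp only [mem_nb, not_exists, not_and] at h3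
    refine ⟨h2.1, by grind, fun v hv ha => ?_⟩
    have := h1.2.2 v
    have := h2.2.2 v hv ha
    have := h3.1 v
    have := h3.2 v
    grind⟩
  have hs := h.two_cut hq (hK.subset hd) (by rintro rfl; exact hqK hd) hclF hFc
    (fun v hv => hKA v (hF.subset hv)) (fun v hv => hKB v (hF.subset hv))
  have hs1 : Span (Len G K (nb G {q}) (nb G {z1})) 3 := Len.through hs (hF.conn_sdiff hKc hd)
    (by have := hF.notMem (x := d) (by simp); grind) ⟨u1, by simpa, by grind⟩
    Finset.disjoint_sdiff hF.subset Finset.sdiff_subset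
  have hz1K := hSK z1 hz1
  have hz2K := hSK z2 hz2
  have hs2 : Span (Len G (insert z1 K) (nb G {q}) B) 3 := hs1.shift 1 fun n hn =>
    hn.extend (by simp [e1.2.1, hz1K]) (Finset.subset_insert _ _)
  have := e1.2.2.2.ne
  exact hs2.shift 2 fun n hn => hn.prepend_edge (Finset.insert_subset e1.2.2.1 hK.subset) hq
    (by grind) e2.2.2.1 e2.1 (by grind) e2.2.2.2.symm

protected theorem false (h : Crit G D A B) : False := by
  obtain ⟨q, hq, x, hx, y, hy, hxD, hyD, hxy, hqx, hqy⟩ := h.left_two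
  have hBq : ∀ b ∈ B, b ∈ D → b ≠ q → b ∈ A ∧ G.Adj q b := fun b hb hbD hbq =>
    h.mem_of_center hq hx hxD hy hyD hxy hqx hqy hb hbD hbq
  by_cases h2 : ∃ s ∈ B, ∃ t ∈ B, s ∈ D ∧ t ∈ D ∧ s ≠ q ∧ t ≠ q ∧ s ≠ t
  · obtain ⟨s, hs, t, ht, hsD, htD, hsq, htq, hst⟩ := h2
    have hs' := hBq s hs hsD hsq
    have ht' := hBq t ht htD htq
    have hAq : ∀ a ∈ A, a ∈ D → a ≠ q → a ∈ B ∧ G.Adj q a := fun a ha haD haq =>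
      h.symm.mem_of_center hq hs hsD ht htD hst hs'.2 ht'.2 ha haD haq
    by_cases h3 : ∀ x y, ∃ z ∈ (A ∩ D).erase q, z ≠ x ∧ z ≠ y
    · refine h.false_of_star hq (S := (A ∩ D).erase q) (by simp) (fun z hz => ?_)
        (fun z hzD hz => ?_) (fun z hzD hz => ?_) (fun w hw hwq => ?_) h3
      · have := hAq z
        grind
      · grind
      · have := hBq z
        grind
      · have hP : ∀ z, z ∈ A ∩ D ∩ nb G {q} ↔ z ∈ A ∧ z ∈ D ∧ G.Adj q z := by
          simp [adj_comm]
        refine le_trans (dg_mono fun z hz ha => ?_) (h.dg_center hq hP hw hwq).1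
        have := hAq z
        rw [hP]
        grind
    · push Not at h3
      obtain ⟨a, b, hab⟩ := h3
      have hAst : ∀ v ∈ D, v ∈ A → v = q ∨ v = s ∨ v = t := fun v hv hvA => by
        have hm : ∀ z ∈ D, z ∈ A → z ≠ q → z = a ∨ z = b := fun z hz hzA hzq => by
          have := hab z
          grind
        have h1 := hm s hsD hs'.1 hsq
        have h2 := hm t htD ht'.1 htq
        have h3 := hm v hv hvA
        clear hab hm hAq hBq
        grind
      have hBst : ∀ v ∈ D, v ∈ B → v = q ∨ v = s ∨ v = t := fun v hv hvB => by
        have := hBq v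
        have := hAst v
        grind
      by_cases hqA : q ∈ A
      · exact h.false_of_three hq hsD htD (by simpa using hAst) (by simpa using hBst) hqA hs ht
          ht'.1 hs'.2 ht'.2 hst (.inl hs'.1)
      by_cases hqB : q ∈ B
      · exact h.symm.false_of_three hq hsD htD (by simpa using hBst) (by simpa using hAst) hqB
          hs'.1 ht'.1 ht hs'.2 ht'.2 hst (.inl hs)
      exact h.false_of_pair hq hsD htD hst hsq.symm htq.symm hs'.1 ht
        (fun v hv hvA => by have := hAst v hv hvA; grind)
        (fun v hv hvA => by have := hBst v hv hvA; grind)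
  · push Not at h2
    obtain ⟨r, hr, s, hs, t, ht, hsD, htD, hst, hrs, hrt⟩ := h.right_two
    have hAr : ∀ a ∈ A, a ∈ D → a ≠ r → a ∈ B ∧ G.Adj r a := fun a ha haD har =>
      h.symm.mem_of_center hr hs hsD ht htD hst hrs hrt ha haD har
    obtain ⟨b, hb, hbD, hbq, hqB, hrq, hrb⟩ : ∃ b ∈ B, b ∈ D ∧ b ≠ q ∧ q ∈ B ∧ G.Adj r q ∧
        G.Adj r b := by
      have := h2 s hs t ht hsD htD
      by_cases hsq : s = q
      · exact ⟨t, ht, htD, by grind, by grind, by grind, hrt⟩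
      · exact ⟨s, hs, hsD, by grind, by grind, by grind, hrs⟩
    have hB' : ∀ v ∈ D, v ∈ B → v = q ∨ v = b := fun v hv hvB => by
      have := h2 v hvB b hb hv hbD
      grind
    have hA' : ∀ v ∈ D, v ∈ A → v = r ∨ v = q ∨ v = b := fun v hv hvA => by
      have := hAr v hvA hv
      have := hB' v hv
      grind
    have hbA := hBq b hb hbD hbq
    have hrA : r ∈ A := by
      have := hA' x hxD hx
      have := hA' y hyD hy
      have := hqx.ne
      have := hqy.ne
      grind
    exact h.false_of_three hr hq hbD (by simpa using hA') (fun v hv hvB => by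
      have := hB' v hv hvB
      grind) hrA hqB hb hbA.1 hrq hrb hbq.symm (.inr hbA.2)

end Crit

theorem Inst.span3 (h : Inst G D A B 4) : Span (Len G D A B) 3 := by
  induction hn : D.card using Nat.strong_induction_on generalizing D A B with
  | _ n ih =>
    subst hn
    by_contra hcon
    exact (h.crit (fun D' A' B' hlt h' => ih _ hlt h' rfl) hcon).false

end ThreeStepsEnd

section

variable {V : Type*} [DecidableEq V] [Fintype V] {G : SimpleGraph V} {D W A B X : Finset V}

/-- The hypotheses of the main theorem other than nonbipartiteness, in terms of finite sets. -/
structure Big (G : SimpleGraph V) : Prop where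
  attach : ∀ F Q : Finset V, F.Nonempty → (∀ x ∈ F, x ∉ Q) → Q.card ≤ 2 → ∀ v, v ∉ F → v ∉ Q →
    ∃ u ∈ F, ∃ w, w ∉ F ∧ w ∉ Q ∧ G.Adj u w
  deg : ∀ v, 5 ≤ dg G Finset.univ v
  card : 7 ≤ Fintype.card V

theorem Big.of_kConnected (h3 : KConnected G 3) (hdeg : ∀ v, 5 ≤ (G.neighborSet v).ncard)
    (hcard : 7 ≤ Nat.card V) : Big G where
  attach F Q hF hQ hc v hvF hvQ := by
    obtain ⟨u, hu⟩ := hF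
    have hcon := h3.2 (Q : Set V) Q.finite_toSet (by rw [Set.ncard_coe_finset]; omega)
    obtain ⟨p⟩ := hcon.preconnected ⟨u, by simpa using hQ u hu⟩ ⟨v, by simpa using hvQ⟩
    by_contra! hno
    have key : ∀ (a b : ((Q : Set V)ᶜ : Set V)), (G.induce (Q : Set V)ᶜ).Walk a b →
        (a : V) ∈ F → (b : V) ∈ F := by
      intro a b p
      induction p with
      | nil => exact id
      | @cons a b c hab _ ih =>
        intro ha
        refine ih ?_
        have hbQ : (b : V) ∉ Q := fun hh => b.2 hh
        by_contra hb
        exact hno a ha b hb hbQ (by simpa using hab)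
    exact hvF (key _ _ p hu)
  deg v := by
    refine (hdeg v).trans (le_of_eq ?_)
    classical
    rw [dg, ← Set.ncard_coe_finset]
    congr 1
    ext
    simp
  card := by rwa [← Nat.card_eq_fintype_card]

theorem hasConsecCycles_of_span {t j c : ℕ} (hs : Span (Len G D A B) t) (htj : 4 ≤ t + j)
    (hj : 1 ≤ j) (hc : 2 ≤ c) (hDW : Disjoint D W)
    (hW : ∀ u ∈ A, ∀ v ∈ B, ∀ i ≤ j, ∃ x y, G.Adj v x ∧ G.Adj y u ∧ PathIn G W x y (c + i)) :
    HasConsecCycles G 5 := by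
  have key : ∀ n, Len G D A B n → ∀ i ≤ j, HasCycleLength G (n + (c + i)) := by
    rintro n ⟨u, hu, v, hv, hp⟩ i hi
    obtain ⟨x, y, hx, hy, hq⟩ := hW u hu v hv i hi
    have := hp.pos
    exact (hp.append hq hx hDW Finset.subset_union_left Finset.subset_union_right).hasCycleLength
      (by omega) hy
  obtain ⟨a, b, hab, ha, hb, h⟩ := hs
  refine ⟨a + c, fun i hi => ?_⟩
  rcases Nat.eq_zero_or_pos i with rfl | hi0
  · exact key a ha 0 (by omega)
  rcases Nat.lt_or_ge (a + i - 1) b with hlt | hge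
  · rcases h (a + i - 1) (by omega) hlt with h1 | h1
    · convert key _ h1 1 hj using 1; omega
    · convert key _ h1 0 (by omega) using 1; omega
  · convert key b hb (a + i - b) (by omega) using 1; omega

theorem PathIn.of_list {D : Finset V} (l : List V) : ∀ a : V, (a :: l).Nodup →
    (a :: l).IsChain G.Adj → (∀ x ∈ a :: l, x ∈ D) →
    PathIn G D a ((a :: l).getLast (by simp)) (l.length + 1) := by
  induction l generalizing D with
  | nil => exact fun a _ _ h => .single (h a (by simp))
  | cons b l ih =>
    intro a hn hc hD
    rw [List.isChain_cons_cons] at hc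
    rw [List.nodup_cons] at hn
    refine .cons (hD a (by simp)) hc.1 ?_
    have := ih (D := D.erase a) b hn.2 hc.2 (fun x hx => by
      have := hD x (List.mem_cons_of_mem _ hx)
      have : x ≠ a := by rintro rfl; exact hn.1 hx
      grind)
    simpa using this

namespace Big

variable (h : Big G)
include h

theorem exists_adj_sdiff {F Q : Finset V} (hF : F.Nonempty) (hFQ : ∀ x ∈ F, x ∉ Q)
    (hFc : ∀ u ∈ F, ∀ v, G.Adj u v → v ∈ F ∨ v ∈ W ∨ v ∈ Q)
    (hQ : Q.card ≤ 2) (hW : ∃ w, w ∉ F ∧ w ∉ Q) :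
    ∃ u ∈ F, ∃ w ∈ W, w ∉ Q ∧ G.Adj u w := by
  obtain ⟨w, hw, hw'⟩ := hW
  obtain ⟨u, hu, x, hx, hxQ, ha⟩ := h.attach F Q hF hFQ hQ w hw hw'
  exact ⟨u, hu, x, by have := hFc u hu x ha; grind, hxQ, ha⟩

/-- A component of the complement of `W` has a neighbour in `W` outside any given pair. -/
theorem exists_adj_comp {F Q : Finset V} (hF : Cl G Finset.univ W F) (hQF : ∀ x ∈ F, x ∉ Q)
    (hQ : Q.card ≤ 2) (hW : 3 ≤ W.card) : ∃ u ∈ F, ∃ w ∈ W, w ∉ Q ∧ G.Adj u w := by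
  refine h.exists_adj_sdiff hF.1 hQF (fun u hu v ha => ?_) hQ ?_
  · have := hF.adj hu (Finset.mem_univ v) ha
    grind
  · obtain ⟨w, hw, hwQ⟩ : ∃ w ∈ W, w ∉ Q :=
      Finset.not_subset.1 fun hh => by have := Finset.card_le_card hh; omega
    exact ⟨w, fun hh => hF.notMem hw hh, hwQ⟩

theorem exists_adj_cut {D F : Finset V} {e x : V} (hD : Cl G Finset.univ W D) (hF : Cl G D {e} F)
    (hxF : x ∉ F) (hW : 3 ≤ W.card) : ∃ u ∈ F, ∃ w ∈ W, w ≠ x ∧ G.Adj u w := by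
  obtain ⟨w, hw, hwQ⟩ : ∃ w ∈ W, w ∉ ({e, x} : Finset V) :=
    Finset.not_subset.1 fun hh => by
      have := Finset.card_le_card hh
      have : ({e, x} : Finset V).card ≤ 2 := Finset.card_le_two
      omega
  obtain ⟨u, hu, w, hw, hwQ, ha⟩ := h.exists_adj_sdiff (W := W) (Q := {e, x}) hF.1
    (fun y hy => by have := hF.2 y hy; grind) (fun u hu v ha => by
      have := hD.adj (hF.subset hu) (Finset.mem_univ v) ha
      have := fun hh => hF.adj hu hh ha
      grind) Finset.card_le_two ⟨w, fun hh => hD.notMem hw (hF.subset hh), hwQ⟩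
  exact ⟨u, hu, w, hw, by grind, ha⟩

theorem deg_comp {D : Finset V} (hD : Cl G Finset.univ W D) {v : V} (hv : v ∈ D) :
    5 ≤ dg G D v + dg G W v :=
  (h.deg v).trans (dg_le fun _ hw ha => hD.adj hv hw ha)

end Big

end

section

variable {V : Type*} [DecidableEq V] [Fintype V] {G : SimpleGraph V} {D X : Finset V} {d e : V}

theorem dg_le_mul {P : Finset V} {v : V} :
    dg G P v ≤ P.card * if v ∈ nb G P then 1 else 0 := by
  split_ifs with hv
  · simpa using dg_le_card (fun _ hw _ => hw)
  · have : dg G P v = 0 := dg_eq_zero fun w hw ha => hv (mem_nb.2 ⟨w, hw, ha⟩)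
    omega

/-- `X` is a clique all of whose vertices are adjacent to `d` and `e`. -/
structure Book (G : SimpleGraph V) (X : Finset V) (d e : V) : Prop where
  ne : d ≠ e
  clique : ∀ x ∈ X, ∀ y ∈ X, x ≠ y → G.Adj x y
  adj : ∀ x ∈ X, G.Adj x d ∧ G.Adj x e

namespace Book

theorem symm (h : Book G X d e) : Book G X e d :=
  ⟨h.ne.symm, h.clique, fun x hx => (h.adj x hx).symm⟩

theorem left_notMem (h : Book G X d e) : d ∉ X := fun hd => (h.adj d hd).1.ne rfl

theorem insert_vertex (h : Book G X d e) {v : V} (hv : ∀ x ∈ X ∪ {d, e}, G.Adj v x) :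
    Book G (insert v X) d e := by
  refine ⟨h.ne, fun x hx y hy hxy => ?_, fun x hx => ?_⟩
  · have := h.clique x
    have h1 := hv x
    have h2 := hv y
    rcases Finset.mem_insert.1 hx with rfl | hx' <;> rcases Finset.mem_insert.1 hy with rfl | hy'
    · exact absurd rfl hxy
    · exact h2 (by simp [hy'])
    · exact (h1 (by simp [hx'])).symm
    · exact this hx' y hy' hxy
  · rcases Finset.mem_insert.1 hx with rfl | hx
    · exact ⟨hv d (by simp), hv e (by simp)⟩
    · exact h.adj x hx

theorem path_side (h : Book G X d e) {x y : V} (hx : x ∈ X) (hy : y ∈ ({d, e} : Finset V)) {n : ℕ}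
    (hn : 2 ≤ n) (hX : X.card = 2 ∧ n ≤ 4 ∨ X.card = 3 ∧ n ≤ 5 ∨ X.card = 4 ∧ n ≤ 6) :
    PathIn G (X ∪ {d, e}) x y n := by
  wlog hyd : y = d generalizing d e
  · rw [Finset.pair_comm]
    exact this h.symm (by rwa [Finset.pair_comm]) (by grind)
  subst hyd
  obtain ⟨h1, h2, h3⟩ := h
  have h4 : ∀ z ∈ X, z ≠ y ∧ z ≠ e := fun z hz => ⟨(h3 z hz).1.ne, (h3 z hz).2.ne⟩
  obtain ⟨p, hp, hpx⟩ : ∃ p ∈ X, p ≠ x := Finset.exists_mem_ne (by omega) x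
  have hyx := h4 x hx
  have hyp := h4 p hp
  have hAx := h3 x hx
  have hAp := h3 p hp
  have hxp := h2 x hx p hp hpx.symm
  obtain rfl | rfl | rfl | hn : n = 2 ∨ n = 3 ∨ n = 4 ∨ 5 ≤ n := by omega
  · exact PathIn.of_list [y] x (by simp; grind) (by simp; grind) (by simp; grind)
  · exact PathIn.of_list [p, y] x (by simp; grind) (by simp; grind) (by simp; grind)
  · exact PathIn.of_list [e, p, y] x (by simp; grind) (by simp; grind [adj_comm]) (by simp; grind)
  obtain ⟨q, hq, hqx⟩ : ∃ q ∈ X, q ∉ ({x, p} : Finset V) := Finset.not_subset.1 fun hh => by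
    have := Finset.card_le_card hh
    have : ({x, p} : Finset V).card ≤ 2 := Finset.card_le_two
    omega
  have hyq := h4 q hq
  have hAq := h3 q hq
  have hpq := h2 p hp q hq (by grind)
  obtain rfl | rfl : n = 5 ∨ n = 6 := by omega
  · exact PathIn.of_list [p, e, q, y] x (by simp; grind) (by simp; grind [adj_comm])
      (by simp; grind)
  obtain ⟨r, hr, hrx⟩ : ∃ r ∈ X, r ∉ ({x, p, q} : Finset V) := Finset.not_subset.1 fun hh => by
    have := Finset.card_le_card hh
    have : ({x, p, q} : Finset V).card ≤ 3 := Finset.card_le_three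
    omega
  have hyr := h4 r hr
  have hAr := h3 r hr
  exact PathIn.of_list [p, q, e, r, y] x (by simp; grind) (by simp; grind [adj_comm])
    (by simp; grind)

theorem path_clique (h : Book G X d e) {x w : V} (hx : x ∈ X) (hw : w ∈ X) (hxw : x ≠ w) {n : ℕ}
    (hn : 2 ≤ n) (hX : X.card = 3 ∧ n ≤ 5 ∨ X.card = 4 ∧ n ≤ 6) :
    PathIn G (X ∪ {d, e}) x w n := by
  obtain ⟨h1, h2, h3⟩ := h
  have h4 : ∀ z ∈ X, z ≠ d ∧ z ≠ e := fun z hz => ⟨(h3 z hz).1.ne, (h3 z hz).2.ne⟩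
  obtain ⟨p, hp, hpx⟩ : ∃ p ∈ X, p ∉ ({x, w} : Finset V) := Finset.not_subset.1 fun hh => by
    have := Finset.card_le_card hh
    have : ({x, w} : Finset V).card ≤ 2 := Finset.card_le_two
    omega
  have hyx := h4 x hx
  have hyw := h4 w hw
  have hyp := h4 p hp
  have hAx := h3 x hx
  have hAw := h3 w hw
  have hAp := h3 p hp
  have hxw' := h2 x hx w hw hxw
  have hxp := h2 x hx p hp (by grind)
  have hpw := h2 p hp w hw (by grind)
  obtain rfl | rfl | rfl | rfl | hn : n = 2 ∨ n = 3 ∨ n = 4 ∨ n = 5 ∨ 6 ≤ n := by omega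
  · exact PathIn.of_list [w] x (by simp; grind) (by simp; grind) (by simp; grind)
  · exact PathIn.of_list [p, w] x (by simp; grind) (by simp; grind) (by simp; grind)
  · exact PathIn.of_list [d, p, w] x (by simp; grind) (by simp; grind [adj_comm]) (by simp; grind)
  · exact PathIn.of_list [d, p, e, w] x (by simp; grind) (by simp; grind [adj_comm])
      (by simp; grind)
  obtain ⟨q, hq, hqx⟩ : ∃ q ∈ X, q ∉ ({x, w, p} : Finset V) := Finset.not_subset.1 fun hh => by
    have := Finset.card_le_card hh
    have : ({x, w, p} : Finset V).card ≤ 3 := Finset.card_le_three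
    omega
  have hyq := h4 q hq
  have hAq := h3 q hq
  obtain rfl : n = 6 := by omega
  exact PathIn.of_list [p, d, q, e, w] x (by simp; grind) (by simp; grind [adj_comm])
    (by simp; grind)

theorem card_le (X : Finset V) (d e : V) : (X ∪ {d, e}).card ≤ X.card + 2 :=
  (Finset.card_union_le _ _).trans (Nat.add_le_add_left Finset.card_le_two _)

theorem le_card (h : Book G X d e) : X.card + 1 ≤ (X ∪ {d, e}).card := by
  refine Finset.card_lt_card ⟨Finset.subset_union_left, fun hh => ?_⟩
  exact h.left_notMem (hh (by simp))

theorem exists_comp (hG : Big G) (hX : X.card ≤ 4) (d e : V) :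
    ∃ D, Cl G Finset.univ (X ∪ {d, e}) D ∧ Conn G D := by
  have := hG.card
  have := card_le X d e
  obtain ⟨v, -, hv⟩ : ∃ v ∈ Finset.univ, v ∉ X ∪ {d, e} := Finset.not_subset.1 fun hh => by
    have := Finset.card_le_card hh
    rw [Finset.card_univ] at this
    omega
  obtain ⟨D, hD, hDc, -⟩ := exists_comp_of_mem (G := G) (Finset.mem_univ v) hv
  exact ⟨D, hD, hDc⟩

theorem cond (hG : Big G) (h : Book G X d e) (hX : 2 ≤ X.card)
    (hD : Cl G Finset.univ (X ∪ {d, e}) D) {A B : Finset V}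
    (hAB : ∀ u ∈ D, ∀ w ∈ X ∪ {d, e}, G.Adj u w → u ∈ A ∨ u ∈ B) :
    ∀ e F, Cl G D {e} F → ∃ u ∈ F, u ∈ A ∨ u ∈ B := by
  intro x F hF
  obtain ⟨u, hu, w, hw, -, ha⟩ := hG.exists_adj_cut hD hF (x := d)
    (fun hh => hD.notMem (x := d) (by simp) (hF.subset hh)) (by have := h.le_card; omega)
  exact ⟨u, hu, hAB u (hF.subset hu) w hw ha⟩

theorem left (hG : Big G) (h : Book G X d e) (hX : 2 ≤ X.card)
    (hD : Cl G Finset.univ (X ∪ {d, e}) D) : ∃ u ∈ nb G X, u ∈ D := by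
  obtain ⟨u, hu, w, hw, hwQ, ha⟩ := hG.exists_adj_comp (Q := {d, e}) hD
    (fun x hx hh => hD.notMem (Finset.mem_union_right _ hh) hx) Finset.card_le_two (by have := h.le_card; omega)
  exact ⟨u, mem_nb.2 ⟨w, by grind, ha⟩, hu⟩

theorem four (hG : Big G) (h : Book G X d e) (hX : X.card = 4) : HasConsecCycles G 5 := by
  obtain ⟨D, hD, hDc⟩ := exists_comp (X := X) hG (by omega) d e
  have hdis : Disjoint D (X ∪ {d, e}) := Finset.disjoint_left.2 fun x hx hh => hD.notMem hh hx
  obtain ⟨u, hu, huD⟩ := h.left hG (by omega) hD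
  obtain ⟨x, hx, ha⟩ := mem_nb.1 hu
  obtain ⟨v, hv, w, hw, hwx, hvw⟩ := hG.exists_adj_comp (Q := {x}) hD
    (fun y hy hh => hD.notMem (x := y) (by simp at hh; simp [hh, hx]) hy) (by simp)
    (by have := h.le_card; omega)
  obtain ⟨m, hm⟩ := hDc.exists_path huD hv
  refine hasConsecCycles_of_span (A := {u}) (B := {v}) (t := 0) (j := 4) (c := 2)
    ⟨m, m, le_rfl, ⟨u, by simp, v, by simp, hm⟩, ⟨u, by simp, v, by simp, hm⟩, by omega⟩
    (by omega) (by omega) le_rfl hdis ?_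
  intro u' hu' v' hv' i hi
  obtain rfl := Finset.mem_singleton.1 hu'
  obtain rfl := Finset.mem_singleton.1 hv'
  refine ⟨w, x, hvw, ha.symm, ?_⟩
  rcases Finset.mem_union.1 hw with hw | hw
  · exact h.path_clique hw hx (by simpa using hwx) (by omega) (by omega)
  · exact (h.path_side hx hw (by omega) (by omega)).symm

theorem dg_le_of_not_all {v : V} {W : Finset V} (hv : ¬ ∀ x ∈ W, G.Adj v x) :
    dg G W v + 1 ≤ W.card := by
  push Not at hv
  obtain ⟨x, hx, ha⟩ := hv
  have := dg_le_card (G := G) (D := W) (E := W.erase x) (v := v) (by grind)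
  rw [Finset.card_erase_of_mem hx] at this
  have := Finset.card_pos.2 ⟨x, hx⟩
  omega

theorem three (hG : Big G) (h : Book G X d e) (hX : X.card = 3) : HasConsecCycles G 5 := by
  by_cases hall : ∃ v ∉ X ∪ {d, e}, ∀ x ∈ X ∪ {d, e}, G.Adj v x
  · obtain ⟨v, hv, hv'⟩ := hall
    exact (h.insert_vertex hv').four hG (by rw [Finset.card_insert_of_notMem (by grind), hX])
  push Not at hall
  obtain ⟨D, hD, hDc⟩ := exists_comp (X := X) hG (by omega) d e
  have hdis : Disjoint D (X ∪ {d, e}) := Finset.disjoint_left.2 fun x hx hh => hD.notMem hh hx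
  have hcard := card_le X d e
  by_cases hY : ∃ u ∈ nb G {d, e}, u ∈ D
  · have hb : Base G D (nb G X) (nb G {d, e}) d := by
      refine Base.of_deg d hDc (h.left hG (by omega) hD) hY (fun v hv => ?_)
        (h.cond hG (by omega) hD fun u _ w hw ha => ?_)
      · have h1 := hG.deg_comp hD hv
        have h2 := dg_le_of_not_all (G := G) (v := v) (W := X ∪ {d, e}) (by
          have := hall v fun hh => hD.notMem hh hv
          push Not
          exact this)
        have h3 : dg G (X ∪ {d, e}) v ≤ dg G X v + dg G {d, e} v :=
          dg_le fun w hw _ => Finset.mem_union.1 hw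
        have h4 := dg_le_mul (G := G) (P := X) (v := v)
        have h5 := dg_le_mul (G := G) (P := {d, e}) (v := v)
        rw [Finset.card_pair h.ne] at h5
        unfold rdeg
        split_ifs at * <;> omega
      · rcases Finset.mem_union.1 hw with hw | hw
        · exact .inl (mem_nb.2 ⟨w, hw, ha⟩)
        · exact .inr (mem_nb.2 ⟨w, hw, ha⟩)
    refine hasConsecCycles_of_span hb.span (j := 3) (c := 2) le_rfl (by omega) le_rfl hdis ?_
    intro u hu v hv i hi
    obtain ⟨x, hx, hx'⟩ := mem_nb.1 hu
    obtain ⟨y, hy, hy'⟩ := mem_nb.1 hv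
    exact ⟨y, x, hy', hx'.symm, (h.path_side hx hy (by omega) (by omega)).symm⟩
  · push Not at hY
    obtain ⟨b, c, f, hbc, hbf, hcf, rfl⟩ := Finset.card_eq_three.1 hX
    have hY' : ∀ v ∈ D, ∀ w ∈ ({b, c, f} ∪ {d, e} : Finset V), G.Adj v w → w = b ∨ w = c ∨ w = f :=
      fun v hv w hw ha => by
        rcases Finset.mem_union.1 hw with hw | hw
        · simpa using hw
        · exact absurd hv (hY v (mem_nb.2 ⟨w, hw, ha⟩))
    have hb : Base G D (nb G {b}) (nb G {c, f}) d := by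
      refine Base.of_deg d hDc ?_ ?_ (fun v hv => ?_)
        (h.cond hG (by omega) hD fun u hu w hw ha => ?_)
      · obtain ⟨u, hu, w, hw, hwQ, ha⟩ := hG.exists_adj_comp (Q := {c, f}) hD
          (fun x hx hh => hD.notMem (by grind) hx) Finset.card_le_two
          (by have := h.le_card; omega)
        exact ⟨u, mem_nb.2 ⟨w, by have := hY' u hu w hw ha; grind, ha⟩, hu⟩
      · obtain ⟨u, hu, w, hw, hwQ, ha⟩ := hG.exists_adj_comp (Q := {b}) hD
          (fun x hx hh => hD.notMem (by grind) hx) (by simp)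
          (by have := h.le_card; omega)
        exact ⟨u, mem_nb.2 ⟨w, by have := hY' u hu w hw ha; grind, ha⟩, hu⟩
      · have h1 := hG.deg_comp hD hv
        have h3 : dg G ({b, c, f} ∪ {d, e}) v ≤ dg G {b} v + dg G {c, f} v :=
          dg_le fun w hw ha => by have := hY' v hv w hw ha; grind
        have h4 := dg_le_mul (G := G) (P := {b}) (v := v)
        have h5 := dg_le_mul (G := G) (P := {c, f}) (v := v)
        rw [Finset.card_pair hcf] at h5
        rw [Finset.card_singleton] at h4
        unfold rdeg
        split_ifs at * <;> omega
      · have := hY' u hu w hw ha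
        simp only [mem_nb]
        grind
    refine hasConsecCycles_of_span hb.span (j := 3) (c := 2) le_rfl (by omega) le_rfl hdis ?_
    intro u hu v hv i hi
    obtain ⟨y, hy, hy'⟩ := mem_nb.1 hv
    have := mem_nb_singleton.1 hu
    exact ⟨y, b, hy', this.symm, (h.path_clique (by simp) (by grind) (by grind)
      (by omega) (by omega)).symm⟩

theorem two (hG : Big G) (h : Book G X d e) (hX : X.card = 2) : HasConsecCycles G 5 := by
  by_cases hall : ∃ v ∉ X ∪ {d, e}, ∀ x ∈ X ∪ {d, e}, G.Adj v x
  · obtain ⟨v, hv, hv'⟩ := hall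
    exact (h.insert_vertex hv').three hG (by rw [Finset.card_insert_of_notMem (by grind), hX])
  push Not at hall
  obtain ⟨D, hD, hDc⟩ := exists_comp (X := X) hG (by omega) d e
  have hdis : Disjoint D (X ∪ {d, e}) := Finset.disjoint_left.2 fun x hx hh => hD.notMem hh hx
  have hcard := card_le X d e
  have hdeg : ∀ v ∈ D, 4 ≤ rdeg G D (nb G X) (nb G {d, e}) v ∧ 2 ≤ dg G D v := fun v hv => by
    have h1 := hG.deg_comp hD hv
    have h2 := dg_le_of_not_all (G := G) (v := v) (W := X ∪ {d, e}) (by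
      have := hall v fun hh => hD.notMem hh hv
      push Not
      exact this)
    have h3 : dg G (X ∪ {d, e}) v ≤ dg G X v + dg G {d, e} v :=
      dg_le fun w hw _ => Finset.mem_union.1 hw
    have h4 := dg_le_mul (G := G) (P := X) (v := v)
    have h5 := dg_le_mul (G := G) (P := {d, e}) (v := v)
    rw [Finset.card_pair h.ne] at h5
    unfold rdeg
    split_ifs at * <;> omega
  have hI : Inst G D (nb G X) (nb G {d, e}) 3 := by
    refine ⟨hDc, h.left hG (by omega) hD, ?_, fun v hv => ?_,
      h.cond hG (by omega) hD fun u _ w hw ha => ?_⟩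
    · obtain ⟨u, hu, w, hw, hwQ, ha⟩ := hG.exists_adj_comp (Q := X) hD
        (fun x hx hh => hD.notMem (by simp [hh]) hx) (by omega) (by have := h.le_card; omega)
      exact ⟨u, mem_nb.2 ⟨w, by grind, ha⟩, hu⟩
    · have := hdeg v hv
      omega
    · rcases Finset.mem_union.1 hw with hw | hw
      · exact .inl (mem_nb.2 ⟨w, hw, ha⟩)
      · exact .inr (mem_nb.2 ⟨w, hw, ha⟩)
  obtain ⟨v, hv⟩ := hDc.1
  have hcD := dg_lt_card (G := G) hv
  have := hdeg v hv
  refine hasConsecCycles_of_span (hI.span2 (by omega)) (j := 2) (c := 2) le_rfl (by omega) le_rfl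
    hdis ?_
  intro u hu v hv i hi
  obtain ⟨x, hx, hx'⟩ := mem_nb.1 hu
  obtain ⟨y, hy, hy'⟩ := mem_nb.1 hv
  exact ⟨y, x, hy', hx'.symm, (h.path_side hx hy (by omega) (by omega)).symm⟩

end Book

end

section

variable {V : Type*} [DecidableEq V] [Fintype V] {G : SimpleGraph V}

theorem Big.hasConsecCycles_of_triangle (hG : Big G) {a b c : V} (hab : G.Adj a b)
    (hac : G.Adj a c) (hbc : G.Adj b c) : HasConsecCycles G 5 := by
  by_cases hJ : ∃ b c d e, G.Adj b c ∧ d ≠ e ∧ G.Adj b d ∧ G.Adj c d ∧ G.Adj b e ∧ G.Adj c e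
  · obtain ⟨b, c, d, e, hbc, hde, h1, h2, h3, h4⟩ := hJ
    exact (show Book G {b, c} d e from ⟨hde, by grind [adj_comm], by grind⟩).two hG
      (Finset.card_pair hbc.ne)
  have hW3 : ({a, b, c} : Finset V).card = 3 :=
    Finset.card_eq_three.2 ⟨a, b, c, hab.ne, hac.ne, hbc.ne, rfl⟩
  obtain ⟨v, -, hv⟩ : ∃ v ∈ Finset.univ, v ∉ ({a, b, c} : Finset V) :=
    Finset.not_subset.1 fun hh => by
      have := Finset.card_le_card hh
      have := hG.card
      rw [Finset.card_univ] at *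
      omega
  obtain ⟨D, hD, hDc, -⟩ := exists_comp_of_mem (G := G) (Finset.mem_univ v) hv
  have hdis : Disjoint D {a, b, c} := Finset.disjoint_left.2 fun x hx hh => hD.notMem hh hx
  have hI : Inst G D (nb G {a}) (nb G {b, c}) 4 := by
    refine ⟨hDc, ?_, ?_, fun v hv => ?_, fun x F hF => ?_⟩
    · obtain ⟨u, hu, w, hw, hwQ, ha⟩ := hG.exists_adj_comp (Q := {b, c}) hD
        (fun x hx hh => hD.notMem (by grind) hx) Finset.card_le_two hW3.ge
      exact ⟨u, mem_nb.2 ⟨w, by grind, ha⟩, hu⟩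
    · obtain ⟨u, hu, w, hw, hwQ, ha⟩ := hG.exists_adj_comp (Q := {a}) hD
        (fun x hx hh => hD.notMem (by grind) hx) (by simp) hW3.ge
      exact ⟨u, mem_nb.2 ⟨w, by grind, ha⟩, hu⟩
    · have h1 := hG.deg_comp hD hv
      have h2 : dg G {a, b, c} v ≤ dg G {a} v + dg G {b, c} v := dg_le fun w hw _ => by grind
      have h3 : dg G {a} v ≤ if v ∈ nb G {a} then 1 else 0 := dg_singleton_le
      have h4 : dg G {b, c} v ≤ if v ∈ nb G {b, c} then 1 else 0 := dg_le_nb fun x hx y hy hvx hvy => by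
        have hva : a ≠ v := by
          rintro rfl
          exact hD.notMem (by simp) hv
        by_contra hxy
        refine hJ ⟨b, c, a, v, hbc, hva, hab.symm, hac.symm, ?_⟩
        grind [adj_comm]
      unfold rdeg
      omega
    · obtain ⟨u, hu, w, hw, -, ha⟩ := hG.exists_adj_cut hD hF (x := a)
        (fun hh => hD.notMem (x := a) (by simp) (hF.subset hh)) hW3.ge
      refine ⟨u, hu, ?_⟩
      simp only [mem_nb]
      grind
  refine hasConsecCycles_of_span hI.span3 (j := 1) (c := 2) le_rfl le_rfl le_rfl hdis ?_
  intro u hu v hv i hi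
  have hua := mem_nb_singleton.1 hu
  obtain ⟨y, hy, hvy⟩ := mem_nb.1 hv
  refine ⟨y, a, hvy, hua.symm, ?_⟩
  clear hJ
  obtain ⟨z, hzW, hyz, hza, hya⟩ : ∃ z ∈ ({a, b, c} : Finset V), G.Adj y z ∧ G.Adj z a ∧
      G.Adj y a := by
    rcases Finset.mem_insert.1 hy with rfl | hy
    · exact ⟨c, by simp, hbc, hac.symm, hab.symm⟩
    · obtain rfl := Finset.mem_singleton.1 hy
      exact ⟨b, by simp, hbc.symm, hab.symm, hac.symm⟩
  have hyW : y ∈ ({a, b, c} : Finset V) := Finset.mem_insert_of_mem hy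
  have := hyz.ne
  have := hza.ne
  have := hya.ne
  obtain rfl | rfl : i = 0 ∨ i = 1 := by omega
  · exact PathIn.of_list [a] y (by simp; grind) (by simp; grind) (by simp; grind)
  · exact PathIn.of_list [z, a] y (by simp; grind) (by simp; grind) (by simp; grind)

end

section

variable {V : Type*} [DecidableEq V] {G : SimpleGraph V} {c : ℕ → V} {l : ℕ}

/-- `c 0, c 1, …, c (l - 1)` is a cycle of `G`, and `c` is extended periodically. -/
structure Cyc (G : SimpleGraph V) (c : ℕ → V) (l : ℕ) : Prop where
  per : Function.Periodic c l
  inj : ∀ i j, i < l → j < l → c i = c j → i = j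
  adj : ∀ i, G.Adj (c i) (c (i + 1))

/-- `G` has an odd cycle with all vertices in `E`. -/
def OddCyc (G : SimpleGraph V) (E : Finset V) : Prop :=
  ∃ u v n, PathIn G E u v n ∧ Odd n ∧ 3 ≤ n ∧ G.Adj v u

theorem periodic_segment {f : ℕ → V} {i m : ℕ} (hm : 0 < m) (hf : f (i + m) = f i)
    (ha : ∀ x, x < m → G.Adj (f (i + x)) (f (i + x + 1))) :
    Function.Periodic (fun x => f (i + x % m)) m ∧
      ∀ x, G.Adj (f (i + x % m)) (f (i + (x + 1) % m)) := by
  refine ⟨fun x => by simp, fun x => ?_⟩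
  have h1 := Nat.mod_lt x hm
  have h2 := ha _ h1
  rcases Nat.lt_or_ge (x % m + 1) m with h3 | h3
  · rwa [Nat.add_mod, Nat.mod_eq_of_lt (a := 1) (by omega), Nat.mod_eq_of_lt h3]
  · have h4 : x % m + 1 = m := by omega
    have h5 : (x + 1) % m = 0 := by
      rw [← Nat.mod_add_mod, h4, Nat.mod_self]
    rw [h5, Nat.add_zero, ← hf]
    rw [add_assoc, h4] at h2
    exact h2

theorem PathIn.exists_fun {D : Finset V} {u v : V} {n : ℕ} (h : PathIn G D u v n) :
    ∃ f : ℕ → V, f 0 = u ∧ f (n - 1) = v ∧ (∀ i < n, f i ∈ D) ∧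
      (∀ i j, i < n → j < n → f i = f j → i = j) ∧ ∀ i, i + 1 < n → G.Adj (f i) (f (i + 1)) := by
  induction h with
  | @single D u hu => exact ⟨fun _ => u, rfl, rfl, fun _ _ => hu, by omega, by omega⟩
  | @cons D u w v n hu ha hp ih =>
    obtain ⟨f, h0, h1, h2, h3, h4⟩ := ih
    have hn := hp.pos
    refine ⟨fun i => Nat.casesOn i u f, rfl, ?_, ?_, ?_, ?_⟩
    · obtain ⟨m, rfl⟩ : ∃ m, n = m + 1 := ⟨n - 1, by omega⟩
      exact h1
    · rintro (_ | i) hi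
      · exact hu
      · exact Finset.mem_of_mem_erase (h2 i (by omega))
    · rintro (_ | i) (_ | j) hi hj hij
      · rfl
      · have := h2 j (by omega)
        exact absurd hij.symm (Finset.ne_of_mem_erase this)
      · have := h2 i (by omega)
        exact absurd hij (Finset.ne_of_mem_erase this)
      · rw [h3 i j (by omega) (by omega) hij]
    · rintro (_ | i) hi
      · simpa [h0] using ha
      · exact h4 i (by omega)

theorem OddCyc.exists_cyc {E : Finset V} (h : OddCyc G E) :
    ∃ c l, Cyc G c l ∧ Odd l ∧ 3 ≤ l ∧ ∀ i, c i ∈ E := by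
  obtain ⟨u, v, n, hp, hn, hn3, ha⟩ := h
  obtain ⟨f, h0, h1, h2, h3, h4⟩ := hp.exists_fun
  obtain ⟨h5, h6⟩ := periodic_segment (G := G) (f := fun i => f (i % n)) (i := 0) (m := n)
    (by omega) (by simp) (fun x hx => by
      simp only [zero_add]
      rw [Nat.mod_eq_of_lt hx]
      rcases Nat.lt_or_ge (x + 1) n with h | h
      · rw [Nat.mod_eq_of_lt h]
        exact h4 x h
      · obtain rfl : n = x + 1 := by omega
        simpa [h0, ← h1] using ha)
  refine ⟨_, n, ⟨h5, fun i j hi hj hij => ?_, h6⟩, hn, hn3, fun i => ?_⟩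
  · simp only [zero_add, Nat.mod_eq_of_lt hi, Nat.mod_eq_of_lt hj] at hij
    exact h3 i j hi hj hij
  · exact h2 _ (Nat.mod_lt _ (by omega))

theorem exists_cyc_of_not_colorable (h : ¬ G.Colorable 2) : ∃ c l, Cyc G c l ∧ Odd l := by
  have hex : ∃ n, Odd n ∧ ∃ f : ℕ → V, Function.Periodic f n ∧ ∀ i, G.Adj (f i) (f (i + 1)) := by
    rw [two_colorable_iff_forall_loop_even] at h
    push Not at h
    obtain ⟨u, w, hw⟩ := h
    rw [Nat.not_even_iff_odd] at hw
    obtain ⟨h1, h2⟩ := periodic_segment (G := G) (f := w.getVert) (i := 0) (m := w.length) hw.pos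
      (by simp) (fun x hx => by simpa using w.adj_getVert_succ hx)
    exact ⟨_, hw, _, h1, h2⟩
  classical
  obtain ⟨hodd, f, hper, ha⟩ := Nat.find_spec hex
  have hmin := fun m hm => Nat.find_min hex (m := m) hm
  generalize Nat.find hex = n at *
  have key : ∀ i j, i < j → j < n → f i ≠ f j := by
    intro i j hij hj he
    rcases Nat.even_or_odd (j - i) with h1 | h1
    · obtain ⟨h2, h3⟩ := periodic_segment (G := G) (f := f) (i := j) (m := n - (j - i)) (by omega)
        (by rw [← he, show j + (n - (j - i)) = i + n by omega]; exact hper i) (fun x _ => ha _)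
      exact hmin (n - (j - i)) (by omega) ⟨Nat.Odd.sub_even (by omega) hodd h1, _, h2, h3⟩
    · obtain ⟨h2, h3⟩ := periodic_segment (G := G) (f := f) (i := i) (m := j - i) (by omega)
        (by rw [he, show i + (j - i) = j by omega]) (fun x _ => ha _)
      exact hmin (j - i) (by omega) ⟨h1, _, h2, h3⟩
  refine ⟨f, n, ⟨hper, fun i j hi hj hij => ?_, ha⟩, hodd⟩
  by_contra hne
  rcases Nat.lt_or_gt_of_ne hne with h1 | h1
  · exact key i j h1 hj hij
  · exact key j i h1 hi hij.symm

namespace Cyc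

theorem succ (h : Cyc G c l) (hl : 0 < l) : Cyc G (fun i => c (i + 1)) l := by
  have h0 : c l = c 0 := by simpa using h.per 0
  refine ⟨fun i => by
    rw [add_right_comm]
    exact h.per (i + 1), fun i j hi hj hij => ?_,
    fun i => h.adj _⟩
  replace hij : c (i + 1) = c (j + 1) := hij
  rcases Nat.lt_or_ge (i + 1) l with h1 | h1 <;> rcases Nat.lt_or_ge (j + 1) l with h2 | h2
  · have := h.inj _ _ h1 h2 hij
    omega
  · obtain rfl : l = j + 1 := by omega
    rw [h0] at hij
    have := h.inj _ _ h1 (by omega) hij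
    omega
  · obtain rfl : l = i + 1 := by omega
    rw [h0] at hij
    have := h.inj _ _ (by omega) h2 hij
    omega
  · omega

theorem shift (h : Cyc G c l) (hl : 0 < l) (m : ℕ) : Cyc G (fun i => c (m + i)) l := by
  induction m with
  | zero => simpa using h
  | succ m ih =>
    have := ih.succ hl
    simpa only [Nat.add_assoc, Nat.add_comm 1] using this

theorem ne (h : Cyc G c l) {i k : ℕ} (hk : 0 < k) (hkl : k < l) : c (i + k) ≠ c i := by
  intro he
  have := (h.shift (by omega) i).inj k 0 hkl (by omega) he
  omega

theorem eq_iff (h : Cyc G c l) {i k m : ℕ} (hk : k < l) (hm : m < l) :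
    c (i + k) = c (i + m) ↔ k = m :=
  ⟨fun he => (h.shift (by omega) i).inj k m hk hm he, fun he => by rw [he]⟩

theorem exists_eq (h : Cyc G c l) (hl : 0 < l) (i j : ℕ) : ∃ k < l, c j = c (i + k) := by
  refine ⟨(j + i * l - i) % l, Nat.mod_lt _ hl, ?_⟩
  have h1 : c (j + i * l) = c j := h.per.nat_mul i j
  have h2 : c (i + (j + i * l - i) % l) = c (i + (j + i * l - i)) :=
    (h.shift hl i).per.map_mod_nat (j + i * l - i)
  rw [h2, ← h1]
  congr 1
  have : i ≤ i * l := Nat.le_mul_of_pos_right i hl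
  omega

theorem arc (h : Cyc G c l) {k : ℕ} (hk : k < l) (a : ℕ) :
    PathIn G ((Finset.Icc a (a + k)).image c) (c a) (c (a + k)) (k + 1) := by
  induction k generalizing a with
  | zero => exact .single (by simp)
  | succ k ih =>
    have h1 := ih (by omega) (a + 1)
    rw [show a + 1 + k = a + (k + 1) by omega] at h1
    refine h1.cons' ?_ ?_ ?_ (h.adj a)
    · intro hh
      obtain ⟨j, hj, hj'⟩ := Finset.mem_image.1 hh
      rw [Finset.mem_Icc] at hj
      refine h.ne (i := a) (k := j - a) (by omega) (by omega) ?_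
      rw [← hj']
      congr 1
      omega
    · exact Finset.mem_image_of_mem _ (by simp)
    · exact Finset.image_subset_image (Finset.Icc_subset_Icc (by omega) le_rfl)

/-- Closing one of the two arcs of an odd cycle between `c 0` and `c k` by a path. -/
theorem ear (h : Cyc G c l) (hl : Odd l) {k m : ℕ} (hk : 2 ≤ k) (hkl : k + 2 ≤ l) {P : Finset V}
    {u : V} (hP : PathIn G (insert (c 0) P) (c 0) u m) (hPc : ∀ i, c i ∉ P)
    (ha : G.Adj u (c k)) :
    ∃ E, OddCyc G E ∧ (∀ x ∈ E, x ∈ P ∨ ∃ i, x = c i) ∧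
      ((∀ i, 0 < i → i < k → c i ∉ E) ∨ ∀ i, k < i → i < l → c i ∉ E) := by
  have hdis : ∀ a b, 1 ≤ a → b < l →
      Disjoint (insert (c 0) P) ((Finset.Icc a b).image c) := by
    intro a b ha hb
    rw [Finset.disjoint_left]
    intro x hx hx'
    obtain ⟨j, hj, rfl⟩ := Finset.mem_image.1 hx'
    rw [Finset.mem_Icc] at hj
    rcases Finset.mem_insert.1 hx with h1 | h1
    · have := h.inj j 0 (by omega) (by omega) h1
      omega
    · exact hPc j h1
  have hno : ∀ a b i, 1 ≤ a → b < l → 0 < i → i < l → (i < a ∨ b < i) →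
      c i ∉ insert (c 0) P ∪ (Finset.Icc a b).image c := by
    intro a b i ha hb hi hil hab hh
    rcases Finset.mem_union.1 hh with hh | hh
    · rcases Finset.mem_insert.1 hh with hh | hh
      · have := h.inj i 0 hil (by omega) hh
        omega
      · exact hPc i hh
    · obtain ⟨j, hj, hj'⟩ := Finset.mem_image.1 hh
      rw [Finset.mem_Icc] at hj
      have := h.inj j i (by omega) hil hj'
      omega
  have hsub : ∀ a b, ∀ x ∈ insert (c 0) P ∪ (Finset.Icc a b).image c, x ∈ P ∨ ∃ i, x = c i := by
    intro a b x hx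
    simp only [Finset.mem_union, Finset.mem_insert, Finset.mem_image] at hx
    grind
  have hm := hP.pos
  have h0 : c l = c 0 := by simpa using h.per 0
  have harc1 := h.arc (k := k - 1) (by omega) 1
  have harc2 := h.arc (k := l - 1 - k) (by omega) k
  rw [show 1 + (k - 1) = k by omega, show k - 1 + 1 = k by omega] at harc1
  rw [show k + (l - 1 - k) = l - 1 by omega] at harc2
  have h3 : G.Adj (c (l - 1)) (c 0) := by
    have := h.adj (l - 1)
    rwa [show l - 1 + 1 = l by omega, h0] at this
  rcases Nat.even_or_odd (m + k) with hpar | hpar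
  · refine ⟨insert (c 0) P ∪ (Finset.Icc k (l - 1)).image c, ?_, hsub _ _,
      .inl fun i hi hik => hno _ _ _ (by omega) (by omega) hi (by omega) (by omega)⟩
    refine ⟨_, _, _, hP.append harc2 ha (hdis _ _ (by omega) (by omega))
      Finset.subset_union_left Finset.subset_union_right, ?_, by omega, h3⟩
    obtain ⟨a, ha⟩ := hpar
    obtain ⟨b, hb⟩ := hl
    exact ⟨b + m - a, by omega⟩
  · refine ⟨insert (c 0) P ∪ (Finset.Icc 1 k).image c, ?_, hsub _ _,
      .inr fun i hi hik => hno _ _ _ (by omega) (by omega) (by omega) (by omega) (by omega)⟩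
    exact ⟨_, _, _, hP.append harc1.symm ha (hdis _ _ (by omega) (by omega))
      Finset.subset_union_left Finset.subset_union_right, hpar, by omega, (h.adj 0).symm⟩

end Cyc

end

section

variable {V : Type*} [DecidableEq V] [Fintype V] {G : SimpleGraph V} {c : ℕ → V} {l : ℕ}
  {D : Finset V}

theorem Conn.union_of_forall_adj {S : Finset V} (hD : Conn G D)
    (hS : ∀ s ∈ S, ∃ d ∈ D, G.Adj s d) : Conn G (D ∪ S) := by
  induction S using Finset.induction_on with
  | empty => simpa
  | insert a S ha ih =>
    rw [Finset.union_insert]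
    refine (ih fun s hs => hS s (Finset.mem_insert_of_mem hs)).insert_adj ?_
    obtain ⟨d, hd, h⟩ := hS a (Finset.mem_insert_self _ _)
    exact ⟨d, Finset.mem_union_left _ hd, h⟩

/-- `c` is an odd cycle in a triangle-free graph, and `D` is a connected set disjoint from it,
where the pair is chosen to make `D` as large as possible. -/
structure Max (G : SimpleGraph V) (c : ℕ → V) (l : ℕ) (D : Finset V) : Prop where
  big : Big G
  free : ∀ x y z, G.Adj x y → G.Adj x z → ¬ G.Adj y z
  cyc : Cyc G c l
  odd : Odd l
  conn : Conn G D
  disj : ∀ i, c i ∉ D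
  max : ∀ E D', OddCyc G E → Conn G D' → Disjoint D' E → D'.card ≤ D.card

namespace Max

theorem five_le (h : Max G c l D) : 5 ≤ l := by
  by_contra hl
  have h0 : c l = c 0 := by simpa using h.cyc.per 0
  have := h.odd
  obtain rfl | rfl : l = 1 ∨ l = 3 := by
    rcases h.odd with ⟨a, rfl⟩
    omega
  · exact (h.cyc.adj 0).ne h0.symm
  · exact h.free _ _ _ (h.cyc.adj 0) (h0 ▸ (h.cyc.adj 2).symm) (h.cyc.adj 1)

theorem shift (h : Max G c l D) (m : ℕ) : Max G (fun i => c (m + i)) l D where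
  big := h.big
  free := h.free
  cyc := h.cyc.shift h.odd.pos m
  odd := h.odd
  conn := h.conn
  disj _ := h.disj _
  max := h.max

theorem not_extend (h : Max G c l D) {E : Finset V} (hE : OddCyc G E) (hDE : Disjoint D E) {z : V}
    (hz : z ∉ D) (hzE : z ∉ E) (ha : ∃ d ∈ D, G.Adj z d) : False := by
  have := h.max E (insert z D) hE (h.conn.insert_adj ha) (by
    rw [Finset.disjoint_left] at *
    grind)
  rw [Finset.card_insert_of_notMem hz] at this
  omega

theorem oddCyc (h : Max G c l D) : OddCyc G ((Finset.range l).image c) := by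
  have h5 := h.five_le
  have h1 := h.cyc.arc (k := l - 1) (by omega) 0
  have h2 := h.cyc.adj (l - 1)
  have h0 : c l = c 0 := by simpa using h.cyc.per 0
  rw [show l - 1 + 1 = l by omega] at h1 h2
  rw [h0] at h2
  rw [zero_add] at h1
  refine ⟨_, _, _, h1.mono (Finset.image_subset_image fun x => ?_), h.odd, by omega, h2⟩
  rw [Finset.mem_Icc, Finset.mem_range]
  omega

theorem eq_of_adj (h : Max G c l D) {d v : V} (hd : d ∈ D) (hv : v ∉ D) (ha : G.Adj d v) :
    ∃ i, v = c i := by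
  by_contra! hno
  refine h.not_extend h.oddCyc ?_ hv ?_ ⟨d, hd, ha.symm⟩
  · rw [Finset.disjoint_left]
    intro x hx hh
    obtain ⟨i, -, rfl⟩ := Finset.mem_image.1 hh
    exact h.disj i hx
  · intro hh
    obtain ⟨i, -, rfl⟩ := Finset.mem_image.1 hh
    exact hno i rfl

theorem false_of_gap (h : Max G c l D) {p : ℕ} (hp : 2 ≤ p) (hpl : p < l)
    (h0 : ∃ d ∈ D, G.Adj (c 0) d) (hpN : ∃ d ∈ D, G.Adj (c p) d)
    (hno : ∀ i, 0 < i → i < p → ∀ d ∈ D, ¬ G.Adj (c i) d) : False := by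
  set I := (Finset.Icc 1 (p - 1)).image c with hI
  have hmI : ∀ x, x ∈ I ↔ ∃ i, 0 < i ∧ i < p ∧ c i = x := by
    intro x
    simp only [hI, Finset.mem_image, Finset.mem_Icc]
    exact exists_congr fun i => by constructor <;> rintro h <;> exact ⟨by omega, by grind⟩
  set U := Finset.univ \ ((Finset.range l).image c ∪ D) ∪ I with hU
  have hmU : ∀ x, x ∈ U ↔ ((∀ i, x ≠ c i) ∧ x ∉ D) ∨ x ∈ I := by
    intro x
    have : x ∈ (Finset.range l).image c ↔ ∃ i, x = c i := by
      simp only [Finset.mem_image, Finset.mem_range]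
      constructor
      · rintro ⟨i, -, rfl⟩
        exact ⟨i, rfl⟩
      · rintro ⟨i, rfl⟩
        obtain ⟨k, hk, hk'⟩ := h.cyc.exists_eq h.odd.pos 0 i
        exact ⟨k, hk, by rw [hk', zero_add]⟩
    simp [hU, this]
  have hIc : ∀ i, i < l → c i ∈ I → 0 < i ∧ i < p := by
    intro i hi hh
    obtain ⟨j, hj, hjp, he⟩ := (hmI _).1 hh
    have := h.cyc.inj j i (by omega) hi he
    omega
  have hUc : ∀ i, c i ∈ U → c i ∈ I := fun i hi => by
    have := (hmU _).1 hi
    grind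
  have hUD : ∀ x ∈ U, x ∉ D := fun x hx hxD => by
    rcases (hmU _).1 hx with h1 | h1
    · exact h1.2 hxD
    · obtain ⟨i, -, -, rfl⟩ := (hmI _).1 h1
      exact h.disj i hxD
  obtain ⟨K, hK, hKc, h1K⟩ := exists_comp_of_mem (G := G) (D := U) (u := c 1) (Q := ∅)
    ((hmU _).2 (.inr ((hmI _).2 ⟨1, by omega, by omega, rfl⟩))) (by simp)
  obtain ⟨d, hd⟩ := h.conn.1
  obtain ⟨u, hu, w, hwK, hwQ, ha⟩ := h.big.attach K {c 0, c p} ⟨_, h1K⟩ (fun x hx hh => by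
    have hxU := hK.subset hx
    rcases Finset.mem_insert.1 hh with rfl | hh
    · have := hIc 0 (by omega) (hUc _ hxU)
      omega
    · obtain rfl := Finset.mem_singleton.1 hh
      have := hIc p hpl (hUc _ hxU)
      omega) Finset.card_le_two d (fun hh => hUD _ (hK.subset hh) hd) (fun hh => by
      rcases Finset.mem_insert.1 hh with rfl | hh
      · exact h.disj _ hd
      · obtain rfl := Finset.mem_singleton.1 hh
        exact h.disj _ hd)
  have huU := hK.subset hu
  have hwU : w ∉ U := fun hh => by simpa [hwK] using hK.adj hu hh ha
  have hwD : w ∉ D := fun hh => by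
    obtain ⟨i, rfl⟩ := h.eq_of_adj hh (hUD u huU) ha.symm
    obtain ⟨j, hj, hjp, he⟩ := (hmI _).1 (hUc i huU)
    exact hno j hj hjp w hh (by rwa [he])
  obtain ⟨j, rfl⟩ : ∃ j, w = c j := by
    by_contra! hno'
    exact hwU ((hmU _).2 (.inl ⟨hno', hwD⟩))
  obtain ⟨k, hk, hk'⟩ := h.cyc.exists_eq h.odd.pos 0 j
  rw [zero_add] at hk'
  rw [hk'] at hwK hwQ ha hwU
  have hpk : p < k := by
    by_contra hle
    have : k ≠ 0 := by rintro rfl; simp at hwQ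
    have : k ≠ p := by rintro rfl; simp at hwQ
    exact hwU ((hmU _).2 (.inr ((hmI _).2 ⟨k, by omega, by omega, rfl⟩)))
  obtain ⟨x, hx, b, hb, m, hxK, hbK, hm⟩ := hKc.exists_path_from (P := I) (B := {u})
    ⟨c 1, (hmI _).2 ⟨1, by omega, by omega, rfl⟩, h1K⟩ ⟨u, by simp, hu⟩
  obtain rfl := Finset.mem_singleton.1 hb
  obtain ⟨i, hi, hip, rfl⟩ := (hmI _).1 hx
  have hPU : ∀ x ∈ K \ I, x ∉ D ∧ ∀ i, x ≠ c i := fun x hx => by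
    have hx' := Finset.mem_sdiff.1 hx
    have hxU := hK.subset hx'.1
    refine ⟨hUD _ hxU, fun i hi => ?_⟩
    subst hi
    exact hx'.2 (hUc _ hxU)
  obtain ⟨E, hE, hEs, hEm⟩ := (h.cyc.shift h.odd.pos i).ear h.odd (k := k - i) (m := m)
    (P := K \ I) (u := b) (by omega) (by omega) hm (fun j hj => (hPU _ hj).2 _ rfl)
    (by rwa [show i + (k - i) = k by omega])
  have hDE : Disjoint D E := by
    rw [Finset.disjoint_left]
    intro x hx hxE
    rcases hEs x hxE with h1 | ⟨j, rfl⟩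
    · exact (hPU x h1).1 hx
    · exact h.disj _ hx
  rcases hEm with h1 | h1
  · have := h1 (p - i) (by omega) (by omega)
    rw [show i + (p - i) = p by omega] at this
    exact h.not_extend hE hDE (h.disj p) this hpN
  · have := h1 (l - i) (by omega) (by omega)
    rw [show i + (l - i) = 0 + l by omega, h.cyc.per] at this
    exact h.not_extend hE hDE (h.disj 0) this h0

theorem exists_adj (h : Max G c l D) (t : ℕ) : ∃ d ∈ D, G.Adj (c t) d := by
  classical
  by_contra ht
  have hl := h.five_le
  have hperN : ∀ i j, c i = c j → (∃ d ∈ D, G.Adj (c i) d) → ∃ d ∈ D, G.Adj (c j) d :=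
    fun i j hij hi => hij ▸ hi
  obtain ⟨v, -, hv⟩ : ∃ v ∈ Finset.univ, v ∉ D := ⟨c 0, Finset.mem_univ _, h.disj 0⟩
  obtain ⟨u, hu, w, hw, -, ha⟩ := h.big.attach D ∅ h.conn.1 (by simp) (by simp) v hv (by simp)
  obtain ⟨i0, rfl⟩ := h.eq_of_adj hu hw ha
  set N : ℕ → Prop := fun i => ∃ d ∈ D, G.Adj (c i) d with hN
  set n0 := t + (i0 + 1) * l with hn0
  have hin : i0 ≤ n0 := by
    have : (i0 + 1) * 1 ≤ (i0 + 1) * l := Nat.mul_le_mul_left _ (by omega)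
    omega
  have hn0N : ¬ N n0 := fun hh => ht (hperN n0 t (h.cyc.per.nat_mul (i0 + 1) t) hh)
  have hm := Nat.findGreatest_spec (P := N) hin ⟨u, hu, ha.symm⟩
  have hmle := Nat.findGreatest_le (P := N) n0
  have hgt := fun x hx hx' => Nat.findGreatest_is_greatest (P := N) (n := n0) (k := x) hx hx'
  generalize Nat.findGreatest N n0 = m at *
  have hmn : m < n0 := lt_of_le_of_ne hmle (by rintro rfl; exact hn0N hm)
  have hex : ∃ p, 0 < p ∧ N (m + p) := ⟨l, by omega, hperN m (m + l) (h.cyc.per m).symm hm⟩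
  obtain ⟨hp0, hpN⟩ := Nat.find_spec hex
  have hmin := fun x hx => Nat.find_min hex (m := x) hx
  generalize Nat.find hex = p at *
  have hp2 : 2 ≤ p := by
    by_contra hlt
    obtain rfl : p = 1 := by omega
    exact hgt (m + 1) (by omega) (by omega) hpN
  have hpl : p < l := by
    have hex : ∃ v, v ∉ D ∧ v ∉ ({c m} : Finset V) :=
      ⟨c (m + 1), h.disj _, by
        rw [Finset.mem_singleton]
        exact h.cyc.ne (by omega) (by omega)⟩
    obtain ⟨v, hv, hv'⟩ := hex
    obtain ⟨u, hu, w, hw, hwQ, ha⟩ := h.big.attach D {c m} h.conn.1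
      (fun x hx hh => by
        obtain rfl := Finset.mem_singleton.1 hh
        exact h.disj _ hx) (by simp) v hv hv'
    obtain ⟨j, rfl⟩ := h.eq_of_adj hu hw ha
    obtain ⟨k, hk, hk'⟩ := h.cyc.exists_eq h.odd.pos m j
    by_contra hlt
    refine hmin k (by omega) ⟨?_, u, hu, by rw [← hk']; exact ha.symm⟩
    rcases Nat.eq_zero_or_pos k with rfl | h1
    · simp [hk'] at hwQ
    · exact h1
  refine (h.shift m).false_of_gap hp2 hpl hm hpN fun i hi hip d hd ha => ?_
  exact hmin i hip ⟨hi, d, hd, ha⟩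

theorem not_ear (h : Max G c l D) {i k m : ℕ} (hk : 2 ≤ k) (hkl : k + 2 ≤ l) {P : Finset V} {u : V}
    (hP : PathIn G (insert (c i) P) (c i) u m) (hPc : ∀ j, c j ∉ P) (hPD : Disjoint D P)
    (ha : G.Adj u (c (i + k))) : False := by
  obtain ⟨E, hE, hEs, hEm⟩ := (h.cyc.shift h.odd.pos i).ear h.odd hk hkl hP (fun j => hPc _) ha
  have hDE : Disjoint D E := by
    rw [Finset.disjoint_left] at *
    intro x hx hxE
    rcases hEs x hxE with h1 | ⟨j, rfl⟩
    · exact hPD hx h1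
    · exact h.disj _ hx
  rcases hEm with h1 | h1
  · exact h.not_extend hE hDE (h.disj _) (h1 1 (by omega) (by omega)) (h.exists_adj _)
  · exact h.not_extend hE hDE (h.disj _) (h1 (k + 1) (by omega) (by omega)) (h.exists_adj _)

theorem cover (h : Max G c l D) (v : V) : v ∈ D ∨ ∃ i, v = c i := by
  by_contra! hv
  have hl := h.five_le
  have hZ : ∀ i, c i ∈ (Finset.range l).image c := fun i => by
    obtain ⟨k, hk, hk'⟩ := h.cyc.exists_eq h.odd.pos 0 i
    exact Finset.mem_image.2 ⟨k, by simpa using hk, by rw [hk', zero_add]⟩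
  obtain ⟨K, hK, hKc, hvK⟩ := exists_comp_of_mem (G := G) (D := Finset.univ)
    (Q := (Finset.range l).image c ∪ D) (Finset.mem_univ v) (by
      simp only [Finset.mem_union, Finset.mem_image, not_or]
      refine ⟨?_, hv.1⟩
      rintro ⟨i, -, rfl⟩
      exact hv.2 i rfl)
  have hKZ : ∀ i, c i ∉ K := fun i hi => hK.notMem (Finset.mem_union_left _ (hZ i)) hi
  have hKD : Disjoint D K := Finset.disjoint_left.2 fun x hx hi =>
    hK.notMem (Finset.mem_union_right _ hx) hi
  have hno : ∀ i k, 2 ≤ k → k + 2 ≤ l → (∃ u ∈ K, G.Adj u (c i)) → (∃ u ∈ K, G.Adj u (c (i + k))) →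
      False := by
    rintro i k hk hkl ⟨u, hu, hui⟩ ⟨v, hv, hvi⟩
    obtain ⟨m, hm⟩ := hKc.exists_path hu hv
    exact h.not_ear hk hkl (hm.cons' (hKZ i) (Finset.mem_insert_self _ _)
      (Finset.subset_insert _ _) hui.symm) hKZ hKD hvi
  have hatt : ∀ i a b, ∃ k < l, c (i + k) ≠ c a ∧ c (i + k) ≠ c b ∧
      ∃ u ∈ K, G.Adj u (c (i + k)) := by
    intro i a b
    obtain ⟨d, hd⟩ := h.conn.1
    have hdc : ∀ i, d ≠ c i := fun i hi => h.disj i (hi ▸ hd)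
    obtain ⟨u, hu, w, hw, hwQ, ha⟩ := h.big.attach K {c a, c b} ⟨v, hvK⟩ (fun x hx hh => by
      have := hKZ a
      have := hKZ b
      grind) Finset.card_le_two d (Finset.disjoint_left.1 hKD hd) (by
      have := hdc a
      have := hdc b
      grind)
    have hwD : w ∉ D := fun hwD => by
      obtain ⟨i, rfl⟩ := h.eq_of_adj hwD (Finset.disjoint_right.1 hKD hu) ha.symm
      exact hKZ i hu
    obtain ⟨j, rfl⟩ : ∃ j, w = c j := by
      have := (hK.adj hu (Finset.mem_univ w) ha).resolve_left hw
      rw [Finset.mem_union, Finset.mem_image] at this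
      rcases this with ⟨j, -, rfl⟩ | h1
      · exact ⟨j, rfl⟩
      · exact absurd h1 hwD
    obtain ⟨k, hk, hk'⟩ := h.cyc.exists_eq h.odd.pos i j
    exact ⟨k, hk, by grind, by grind, u, hu, hk' ▸ ha⟩
  obtain ⟨i, -, -, -, hi⟩ := hatt 0 0 0
  generalize 0 + i = i at hi
  obtain ⟨k, hk, hk1, hk2, hkN⟩ := hatt i i (i + 1)
  have h0 : k ≠ 0 := by rintro rfl; exact hk1 rfl
  have h1 : k ≠ 1 := by rintro rfl; exact hk2 rfl
  by_cases hkl : k + 2 ≤ l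
  · exact hno i k (by omega) hkl hi hkN
  obtain rfl : l = k + 1 := by omega
  obtain ⟨k', hk', hk1', hk2', hkN'⟩ := hatt i i (i + k)
  have h0 : k' ≠ 0 := by rintro rfl; exact hk1' rfl
  have h1 : k' ≠ k := by rintro rfl; exact hk2' rfl
  by_cases h2 : k' = 1
  · subst h2
    refine hno (i + 1) (k - 1) (by omega) (by omega) hkN' ?_
    rwa [show i + 1 + (k - 1) = i + k by omega]
  · exact hno i k' (by omega) (by omega) hi hkN'

theorem three_le_dg (h : Max G c l D) (i : ℕ) : 3 ≤ dg G D (c i) := by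
  have hl := h.five_le
  have h1 := h.big.deg (c i)
  have h2 : dg G Finset.univ (c i) ≤ dg G D (c i) + dg G {c (i + 1), c (i + (l - 1))} (c i) := by
    refine dg_le fun w _ ha => ?_
    rcases h.cover w with hw | ⟨j, rfl⟩
    · exact .inl hw
    obtain ⟨k, hk, hk'⟩ := h.cyc.exists_eq h.odd.pos i j
    rw [hk'] at ha ⊢
    right
    have hk0 : k ≠ 0 := by rintro rfl; exact ha.ne rfl
    by_cases hk1 : k = 1
    · simp [hk1]
    by_cases hk2 : k = l - 1
    · simp [hk2]
    exact (h.not_ear (i := i) (k := k) (P := ∅) (by omega) (by omega) (.single (by simp)) (by simp)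
      (by simp) ha).elim
  have h3 : dg G {c (i + 1), c (i + (l - 1))} (c i) ≤ 2 :=
    (dg_le_card fun _ hw _ => hw).trans Finset.card_le_two
  omega

theorem dist_le_two (h : Max G c l D) {w : V} (hw : w ∈ D) (hDw : Conn G (D.erase w)) {i k : ℕ}
    (hkl : k < l) (hk : Odd k) (h1 : G.Adj w (c i)) (h2 : G.Adj w (c (i + k))) : l ≤ k + 2 := by
  have harc := h.cyc.arc hkl i
  have hE : OddCyc G (insert w ((Finset.Icc i (i + k)).image c)) := by
    refine ⟨_, _, _, harc.cons' ?_ (Finset.mem_insert_self _ _) (Finset.subset_insert _ _) h1, ?_,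
      ?_, h2.symm⟩
    · intro hh
      obtain ⟨j, -, rfl⟩ := Finset.mem_image.1 hh
      exact h.disj j hw
    · obtain ⟨a, rfl⟩ := hk
      exact ⟨a + 1, by omega⟩
    · have := hk.pos
      omega
  have hmem : ∀ x ∈ Finset.Icc (i + k + 1) (i + (l - 1)), ∃ y, x = i + y ∧ k < y ∧ y < l :=
    fun x hx => by
      rw [Finset.mem_Icc] at hx
      exact ⟨x - i, by omega, by omega, by omega⟩
  have hcard : ((Finset.Icc (i + k + 1) (i + (l - 1))).image c).card = l - 1 - k := by
    rw [Finset.card_image_of_injOn, Nat.card_Icc]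
    · omega
    · intro x hx y hy hxy
      obtain ⟨x', rfl, -, hx'⟩ := hmem x hx
      obtain ⟨y', rfl, -, hy'⟩ := hmem y hy
      rw [(h.cyc.eq_iff hx' hy').1 hxy]
  have hm := h.max _ (D.erase w ∪ (Finset.Icc (i + k + 1) (i + (l - 1))).image c) hE
    (hDw.union_of_forall_adj fun s hs => ?_) ?_
  · rw [Finset.card_union_of_disjoint, Finset.card_erase_of_mem hw, hcard] at hm
    · have := Finset.card_pos.2 ⟨w, hw⟩
      omega
    · rw [Finset.disjoint_left]
      intro x hx hh
      obtain ⟨j, -, rfl⟩ := Finset.mem_image.1 hh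
      exact h.disj j (Finset.mem_of_mem_erase hx)
  · obtain ⟨j, -, rfl⟩ := Finset.mem_image.1 hs
    obtain ⟨d, hd, ha, hdw⟩ := exists_adj_ne_of_dg (G := G) (D := D) (v := c j)
      (by have := h.three_le_dg j; omega) w
    exact ⟨d, Finset.mem_erase.2 ⟨hdw, hd⟩, ha⟩
  · rw [Finset.disjoint_left]
    intro x hx hh
    rcases Finset.mem_insert.1 hh with rfl | hh
    · rcases Finset.mem_union.1 hx with h3 | h3
      · simp at h3
      · obtain ⟨j, -, rfl⟩ := Finset.mem_image.1 h3
        exact h.disj j hw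
    · obtain ⟨a, ha, rfl⟩ := Finset.mem_image.1 hh
      rcases Finset.mem_union.1 hx with h3 | h3
      · exact h.disj a (Finset.mem_of_mem_erase h3)
      · obtain ⟨b, hb, he⟩ := Finset.mem_image.1 h3
        obtain ⟨b', rfl, hb1, hb2⟩ := hmem b hb
        rw [Finset.mem_Icc] at ha
        obtain ⟨a', rfl⟩ : ∃ a', a = i + a' := ⟨a - i, by omega⟩
        have := (h.cyc.eq_iff hb2 (by omega)).1 he
        omega

theorem dist_eq_two (h : Max G c l D) {w : V} (hw : w ∈ D) (hDw : Conn G (D.erase w)) {i k : ℕ}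
    (hk0 : 0 < k) (hkl : k < l) (h1 : G.Adj w (c i)) (h2 : G.Adj w (c (i + k))) :
    k = 2 ∨ k + 2 = l := by
  have ho := h.odd
  rcases Nat.even_or_odd k with hk | hk
  · have := h.dist_le_two hw hDw (i := i + k) (k := l - k) (by omega)
      (Nat.Odd.sub_even (by omega) ho hk) h2
      (by rw [show i + k + (l - k) = i + l by omega, h.cyc.per]; exact h1)
    obtain ⟨a, rfl⟩ := hk
    omega
  · have := h.dist_le_two hw hDw hkl hk h1 h2
    obtain ⟨a, rfl⟩ := hk
    obtain ⟨b, rfl⟩ := ho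
    omega

end Max

end

section

variable {V : Type*} [DecidableEq V] [Fintype V] {G : SimpleGraph V} {c : ℕ → V} {l : ℕ}
  {D : Finset V}

namespace Max

theorem dg_or_exists_adj (h : Max G c l D) {w : V} (hw : w ∈ D) (hDw : Conn G (D.erase w)) :
    4 ≤ dg G D w ∨ 3 ≤ dg G D w ∧ ∃ i, G.Adj w (c i) ∧ G.Adj w (c (i + 2)) := by
  have hl := h.five_le
  have h5 := h.big.deg w
  set Z := (Finset.range l).image c with hZ
  have hle : dg G Finset.univ w ≤ dg G D w + dg G Z w := dg_le fun v _ _ => by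
    refine (h.cover v).imp_right ?_
    rintro ⟨j, rfl⟩
    obtain ⟨k, hk, hk'⟩ := h.cyc.exists_eq h.odd.pos 0 j
    rw [zero_add] at hk'
    rw [hk', hZ]
    exact Finset.mem_image_of_mem _ (Finset.mem_range.2 hk)
  by_cases h1 : dg G Z w ≤ 1
  · left
    omega
  right
  obtain ⟨x, hx, hwx⟩ := exists_adj_of_dg (G := G) (D := Z) (v := w) (by omega)
  obtain ⟨y, hy, hwy, hyx⟩ := exists_adj_ne_of_dg (G := G) (D := Z) (v := w) (by omega) x
  obtain ⟨i, -, rfl⟩ := Finset.mem_image.1 hx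
  obtain ⟨j, -, rfl⟩ := Finset.mem_image.1 hy
  obtain ⟨k, hk, hk'⟩ := h.cyc.exists_eq h.odd.pos i j
  rw [hk'] at hwy hyx
  have hk0 : 0 < k := by
    rcases Nat.eq_zero_or_pos k with rfl | hk0
    · exact absurd rfl hyx
    · exact hk0
  obtain ⟨i, hi, hi2⟩ : ∃ i, G.Adj w (c i) ∧ G.Adj w (c (i + 2)) := by
    rcases h.dist_eq_two hw hDw hk0 hk hwx hwy with rfl | hkl
    · exact ⟨i, hwx, hwy⟩
    · refine ⟨i + k, hwy, ?_⟩
      rwa [show i + k + 2 = i + l by omega, h.cyc.per]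
  refine ⟨?_, i, hi, hi2⟩
  have h2 : dg G Z w ≤ ({c i, c (i + 2)} : Finset V).card := dg_le_card fun v hv ha => by
    obtain ⟨j, -, rfl⟩ := Finset.mem_image.1 hv
    obtain ⟨k, hk, hk'⟩ := h.cyc.exists_eq h.odd.pos i j
    rw [hk'] at ha ⊢
    rcases Nat.eq_zero_or_pos k with rfl | hk0
    · simp
    rcases h.dist_eq_two hw hDw hk0 hk hi ha with rfl | hkl
    · simp
    · have := h.dist_eq_two hw hDw (i := i + 2) (k := k - 2) (by omega) (by omega) hi2
        (by rwa [show i + 2 + (k - 2) = i + k by omega])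
      have := h.odd
      obtain ⟨a, rfl⟩ := this
      omega
  have h3 : ({c i, c (i + 2)} : Finset V).card ≤ 2 := Finset.card_le_two
  omega

theorem three_le_dg_of_conn (h : Max G c l D) {w : V} (hw : w ∈ D) (hDw : Conn G (D.erase w)) :
    3 ≤ dg G D w := by
  rcases h.dg_or_exists_adj hw hDw with h1 | h1
  · omega
  · exact h1.1

theorem hasConsecCycles_of_span_one (h : Max G c l D) {E : Finset V} {w : V} {i s : ℕ}
    (hl : l = 2 * s + 1) (hw : w ∈ D) (hi : G.Adj w (c i)) (hi2 : G.Adj w (c (i + 2)))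
    (hE : E ⊆ D) (hwE : w ∉ E) (hs : Span (Len G E (nb G {w}) (nb G {c (i + 1 + s)})) 1) :
    HasConsecCycles G 5 := by
  have h5 := h.five_le
  set Z := Finset.univ \ D with hZ
  have hcZ : ∀ j, c j ∈ Z := fun j => by simpa [hZ] using h.disj j
  have himg : ∀ I : Finset ℕ, I.image c ⊆ Z := fun I x hx => by
    obtain ⟨j, -, rfl⟩ := Finset.mem_image.1 hx
    exact hcZ j
  have harc : ∀ a k, k < l → PathIn G Z (c a) (c (a + k)) (k + 1) := fun a k hk =>
    (h.cyc.arc hk a).mono (himg _)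
  have hdisj : Disjoint Z {w} := by simpa [hZ] using hw
  have hend : ∀ j n, PathIn G Z (c (i + 1 + s)) (c j) n → G.Adj w (c j) →
      PathIn G (Z ∪ {w}) (c (i + 1 + s)) w (n + 1) := fun j n hp ha =>
    hp.append (.single (Finset.mem_singleton_self w)) ha.symm hdisj Finset.subset_union_left
      Finset.subset_union_right
  refine hasConsecCycles_of_span (j := 3) (c := s + 1) (W := Z ∪ {w}) hs (by omega) (by omega)
    (by omega) ?_ ?_
  · rw [Finset.disjoint_left]
    grind
  intro u hu v hv n hn
  rw [mem_nb_singleton] at hu hv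
  refine ⟨_, _, hv, hu.symm, ?_⟩
  obtain rfl | rfl | rfl | rfl : n = 0 ∨ n = 1 ∨ n = 2 ∨ n = 3 := by omega
  · have := harc (i + 2) (s - 1) (by omega)
    rw [show i + 2 + (s - 1) = i + 1 + s by omega, show s - 1 + 1 = s by omega] at this
    exact hend _ _ this.symm hi2
  · have := harc (i + 1 + s) s (by omega)
    rw [show i + 1 + s + s = i + l by omega, h.cyc.per] at this
    exact hend _ _ this hi
  · have := harc i (s + 1) (by omega)
    rw [show i + (s + 1) = i + 1 + s by omega] at this
    exact hend _ _ this.symm hi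
  · have := harc (i + 1 + s) (s + 2) (by omega)
    rw [show i + 1 + s + (s + 2) = i + 2 + l by omega, h.cyc.per] at this
    exact hend _ _ this hi2

theorem hasConsecCycles_of_span_three (h : Max G c l D) {i s : ℕ} (hl : l = 2 * s + 1)
    (hs : Span (Len G D (nb G {c i}) (nb G {c (i + s)})) 3) : HasConsecCycles G 5 := by
  have h5 := h.five_le
  set Z := Finset.univ \ D with hZ
  have hcZ : ∀ j, c j ∈ Z := fun j => by simpa [hZ] using h.disj j
  have himg : ∀ I : Finset ℕ, I.image c ⊆ Z := fun I x hx => by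
    obtain ⟨j, -, rfl⟩ := Finset.mem_image.1 hx
    exact hcZ j
  have harc : ∀ a k, k < l → PathIn G Z (c a) (c (a + k)) (k + 1) := fun a k hk =>
    (h.cyc.arc hk a).mono (himg _)
  refine hasConsecCycles_of_span (j := 1) (c := s + 1) (W := Z) hs (by omega) (by omega)
    (by omega) Finset.disjoint_sdiff ?_
  intro u hu v hv n hn
  rw [mem_nb_singleton] at hu hv
  refine ⟨_, _, hv, hu.symm, ?_⟩
  obtain rfl | rfl : n = 0 ∨ n = 1 := by omega
  · exact (harc i s (by omega)).symm
  · have := harc (i + s) (s + 1) (by omega)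
    rwa [show i + s + (s + 1) = i + l by omega, h.cyc.per] at this

end Max

theorem Base.of_erase {B T : Finset V} {w b : V} (hB : ∀ e ∈ B, Conn G (B.erase e)) (hw : w ∈ B)
    (hb : b ∈ B) (hbw : b ≠ w) (hdw : 2 ≤ dg G B w) (hdeg : ∀ v ∈ B, v ≠ b → 3 ≤ dg G B v)
    (hT : ∃ t ∈ T, t ∈ B.erase w) : Base G (B.erase w) (nb G {w}) T b := by
  obtain ⟨x, hx, hwx⟩ := exists_adj_of_dg (G := G) (D := B) (v := w) (by omega)
  obtain ⟨y, hy, hwy, hyx⟩ := exists_adj_ne_of_dg hdw x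
  have hmem : ∀ z ∈ B, G.Adj w z → z ∈ B.erase w := fun z hz ha =>
    Finset.mem_erase.2 ⟨ha.ne', hz⟩
  refine ⟨hB w hw, ⟨x, mem_nb_singleton.2 hwx.symm, hmem x hx hwx⟩, hT,
    ⟨x, hmem x hx hwx, y, hmem y hy hwy, hyx.symm, .inl (mem_nb_singleton.2 hwx.symm),
      .inl (mem_nb_singleton.2 hwy.symm)⟩, fun v hv hvb => ?_, fun e F hF hbF => ?_⟩
  · have h1 := hdeg v (Finset.mem_of_mem_erase hv) hvb
    have h2 : dg G B v ≤ dg G (B.erase w) v + dg G {w} v := dg_le fun z hz _ => by grind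
    have h3 := dg_singleton_le (G := G) (e := w) (v := v)
    unfold rdeg
    omega
  · obtain ⟨u, hu⟩ := hF.1
    have huB := hF.subset hu
    by_cases hew : e ∈ B.erase w
    · obtain ⟨x, hx, y, hy, hxF, hyF, ha⟩ := (hB e (Finset.mem_of_mem_erase hew)).exists_adj
        (S := F) (u := u) (v := w) (Finset.mem_erase.2 ⟨fun hh => hF.notMem (by simp [hh]) hu,
          Finset.mem_of_mem_erase huB⟩)
        (Finset.mem_erase.2 ⟨(Finset.ne_of_mem_erase hew).symm, hw⟩) hu
        (fun hh => by simpa using hF.subset hh)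
      refine ⟨x, hxF, .inl (mem_nb_singleton.2 ?_)⟩
      by_cases hyw : y = w
      · rwa [hyw] at ha
      · have := hF.adj hxF (Finset.mem_erase.2 ⟨hyw, Finset.mem_of_mem_erase hy⟩) ha
        grind
    · obtain ⟨x, hx, y, hy, hxF, hyF, ha⟩ := (hB w hw).exists_adj (S := F) huB
        (Finset.mem_erase.2 ⟨hbw, hb⟩) hu hbF
      have := hF.adj hxF hy ha
      grind

end

section

variable {V : Type*} [DecidableEq V] [Fintype V] {G : SimpleGraph V} {c : ℕ → V} {l : ℕ}
  {D : Finset V}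

theorem exists_cl_of_not_conn {e b : V} (hb : b ∈ D) (hbe : b ≠ e)
    (hD : ¬ Conn G (D.erase e)) : ∃ F, Cl G D {e} F ∧ b ∉ F := by
  have hbD : b ∈ D.erase e := Finset.mem_erase.2 ⟨hbe, hb⟩
  simp only [Conn, not_and, not_forall] at hD
  obtain ⟨S, hS, hSn, hSc, hDS⟩ := hD ⟨b, hbD⟩
  by_cases hbS : b ∈ S
  · obtain ⟨x, hx, hxS⟩ := Finset.not_subset.1 hDS
    refine ⟨D.erase e \ S, ⟨⟨x, Finset.mem_sdiff.2 ⟨hx, hxS⟩⟩, fun u hu => ?_⟩, by grind⟩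
    obtain ⟨hu, huS⟩ := Finset.mem_sdiff.1 hu
    refine ⟨Finset.mem_of_mem_erase hu, by grind, fun v hv ha => ?_⟩
    by_cases hve : v = e
    · simp [hve]
    · have := fun hvS => huS (hSc v hvS u hu ha.symm)
      grind
  · refine ⟨S, ⟨hSn, fun u hu => ?_⟩, hbS⟩
    have := hS hu
    refine ⟨by grind, by grind, fun v hv ha => ?_⟩
    by_cases hve : v = e
    · simp [hve]
    · exact .inl (hSc u hu v (by grind) ha)

/-- A connected set with a cutvertex has an end block `insert b F`. -/
theorem Conn.exists_end (hD : Conn G D) (h2 : 2 ≤ D.card) (hcut : ∃ e ∈ D, ¬ Conn G (D.erase e)) :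
    ∃ b ∈ D, ∃ F, Cl G D {b} F ∧ (∃ x ∈ D, x ≠ b ∧ x ∉ F) ∧ Conn G F ∧
      (∀ v ∈ F, Conn G (D.erase v)) ∧ ∀ e ∈ insert b F, Conn G ((insert b F).erase e) := by
  have hex : ∃ n, ∃ b ∈ D, ∃ F, Cl G D {b} F ∧ (∃ x ∈ D, x ≠ b ∧ x ∉ F) ∧ F.card = n := by
    obtain ⟨e, he, hDe⟩ := hcut
    obtain ⟨x, hx, hxe⟩ := Finset.exists_mem_ne h2 e
    obtain ⟨F, hF, hxF⟩ := exists_cl_of_not_conn hx hxe hDe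
    exact ⟨_, e, he, F, hF, ⟨x, hx, hxe, hxF⟩, rfl⟩
  classical
  obtain ⟨b, hb, F, hF, ⟨x, hx, hxb, hxF⟩, hcard⟩ := Nat.find_spec hex
  have hmin : ∀ e ∈ D, ∀ K, Cl G D {e} K → ∀ x ∈ D, x ≠ e → x ∉ K → F.card ≤ K.card := by
    intro e he K hK x hx hxe hxK
    rw [hcard]
    exact Nat.find_min' hex ⟨e, he, K, hK, ⟨x, hx, hxe, hxK⟩, rfl⟩
  have hbF : b ∉ F := hF.notMem (by simp)
  have hFc : Conn G F := by
    obtain ⟨u, hu⟩ := hF.1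
    obtain ⟨K, hKF, hK, hKc, -⟩ := exists_comp hF hu
    rwa [← Finset.eq_of_subset_of_card_le hKF (hmin b hb K hK x hx hxb fun hh => hxF (hKF hh))]
  have hno : ∀ v ∈ F, ∀ K ⊆ F, Cl G D {v} K → b ∉ K → False := by
    intro v hv K hKF hK hbK
    have h1 := hmin v (hF.subset hv) K hK b hb (fun hh => hbF (hh ▸ hv)) hbK
    exact hK.notMem (by simp) (Finset.eq_of_subset_of_card_le hKF h1 ▸ hv)
  refine ⟨b, hb, F, hF, ⟨x, hx, hxb, hxF⟩, hFc, fun v hv => ?_, fun e he => ?_⟩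
  · by_contra hDv
    obtain ⟨K, hK, hbK⟩ := exists_cl_of_not_conn hb (by rintro rfl; exact hbF hv) hDv
    refine hno v hv K (fun y hy => ?_) hK hbK
    by_contra hyF
    obtain ⟨p, hp, q, hq, hpK, hqK, ha⟩ := (hF.conn_sdiff hD hb).exists_adj (S := K)
      (Finset.mem_sdiff.2 ⟨hK.subset hy, hyF⟩) (Finset.mem_sdiff.2 ⟨hb, hbF⟩) hy hbK
    have := hK.adj hpK (Finset.mem_sdiff.1 hq).1 ha
    grind
  · rcases Finset.mem_insert.1 he with rfl | heF
    · rwa [Finset.erase_insert hbF]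
    by_contra hBe
    obtain ⟨K, hK, hbK⟩ := exists_cl_of_not_conn (Finset.mem_insert_self b F)
      (by rintro rfl; exact hbF heF) hBe
    have hKF : K ⊆ F := fun y hy => by
      have := hK.subset hy
      grind
    refine hno e heF K hKF ⟨hK.1, fun u hu => ⟨hF.subset (hKF hu), (hK.2 u hu).2.1,
      fun v hv ha => hK.adj hu ?_ ha⟩⟩ hbK
    have := hF.adj (hKF hu) hv ha
    grind

namespace Max

theorem hdeg (h : Max G c l D) {E A B : Finset V} (hE : ∀ v ∈ E, 4 ≤ rdeg G E A B v) :
    HDeg G E A B 4 := by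
  refine fun v hv => ⟨hE v hv, ?_⟩
  rintro ⟨x, -, y, -, hx, hy, hxy⟩
  exact absurd hxy (h.free _ _ _ hx hy)

theorem hasConsecCycles_of_conn (h : Max G c l D) (hD : ∀ e ∈ D, Conn G (D.erase e)) :
    HasConsecCycles G 5 := by
  obtain ⟨s, hl⟩ := h.odd
  have h3 : ∀ v ∈ D, 3 ≤ dg G D v := fun v hv => h.three_le_dg_of_conn hv (hD v hv)
  by_cases hall : ∀ v ∈ D, 4 ≤ dg G D v
  · refine h.hasConsecCycles_of_span_three (i := 0) hl (Inst.span3 ⟨h.conn, ?_, ?_,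
      h.hdeg fun v hv => (hall v hv).trans (by unfold rdeg; omega), fun e F hF => ?_⟩)
    · obtain ⟨d, hd, ha⟩ := h.exists_adj 0
      exact ⟨d, mem_nb_singleton.2 ha.symm, hd⟩
    · obtain ⟨d, hd, ha⟩ := h.exists_adj (0 + s)
      exact ⟨d, mem_nb_singleton.2 ha.symm, hd⟩
    · obtain ⟨u, hu⟩ := hF.1
      have hF' : F ⊆ D.erase e := fun y hy =>
        Finset.mem_erase.2 ⟨fun hh => hF.notMem (by simp [hh]) hy, hF.subset hy⟩
      by_cases heD : e ∈ D
      · obtain ⟨d, hd, ha, hde⟩ := exists_adj_ne_of_dg (G := G) (D := D) (v := c 0)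
          (by have := h.three_le_dg 0; omega) e
        refine ⟨d, (hD e heD).2 F hF' hF.1 (fun x hx y hy hxy => ?_)
          (Finset.mem_erase.2 ⟨hde, hd⟩), .inl (mem_nb_singleton.2 ha.symm)⟩
        have := hF.adj hx (Finset.mem_of_mem_erase hy) hxy
        grind
      · obtain ⟨d, hd, ha⟩ := h.exists_adj 0
        refine ⟨d, h.conn.2 F hF.subset hF.1 (fun x hx y hy hxy => ?_) hd,
          .inl (mem_nb_singleton.2 ha.symm)⟩
        have := hF.adj hx hy hxy
        grind
  · push Not at hall
    obtain ⟨w, hw, hlt⟩ := hall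
    rcases h.dg_or_exists_adj hw (hD w hw) with h1 | ⟨hdw, i, hi, hi2⟩
    · omega
    obtain ⟨b, hb, hwb⟩ := exists_adj_of_dg (G := G) (D := D) (v := w) (by omega)
    obtain ⟨d, hd, ha, hdw'⟩ := exists_adj_ne_of_dg (G := G) (D := D) (v := c (i + 1 + s))
      (by have := h.three_le_dg (i + 1 + s); omega) w
    exact h.hasConsecCycles_of_span_one hl hw hi hi2 (Finset.erase_subset _ _) (by simp)
      (Base.of_erase hD hw hb hwb.ne' (by omega) (fun v hv _ => h3 v hv)
        ⟨d, mem_nb_singleton.2 ha.symm, Finset.mem_erase.2 ⟨hdw', hd⟩⟩).span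

theorem exists_antipodal {P R : ℕ → Prop} {s : ℕ} (hl : l = 2 * s + 1)
    (hP : ∀ i, P (i + l) ↔ P i) (hR : ∀ i, R (i + l) ↔ R i) (hPR : ∀ i, P i ∨ R i)
    (hP0 : ∃ i, P i) (hR0 : ∃ i, R i) : ∃ i, P i ∧ R (i + s) ∨ R i ∧ P (i + s) := by
  by_contra! hno
  have h1 : ∀ i, P i → ¬ R (i + s) := fun i => (hno i).1
  have h2 : ∀ i, P i → ¬ R (i + s + 1) := fun i hi hh => by
    refine (hno (i + s + 1)).2 hh ?_
    rw [show i + s + 1 + s = i + l by omega]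
    exact (hP i).2 hi
  have hstep : ∀ i, P i → P (i + 1) := fun i hi => by
    have h3 := (hPR _).resolve_right (h2 i hi)
    have h4 := (hPR _).resolve_right (h2 _ h3)
    rwa [show i + s + 1 + s + 1 = i + 1 + l by omega, hP] at h4
  obtain ⟨i, hi⟩ := hP0
  obtain ⟨j, hj⟩ := hR0
  have hall : ∀ k, P (i + k) := fun k => by
    induction k with
    | zero => exact hi
    | succ k ih => exact hstep _ ih
  have hRl : ∀ k, R (j + k * l) := fun k => by
    induction k with
    | zero => simpa using hj
    | succ k ih => rwa [show j + (k + 1) * l = j + k * l + l by ring, hR]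
  have hle : (i + s + 1) * 1 ≤ (i + s + 1) * l := Nat.mul_le_mul_left _ (by omega)
  obtain ⟨k, hk⟩ : ∃ k, j + (i + s + 1) * l = i + k + s :=
    ⟨j + (i + s + 1) * l - i - s, by omega⟩
  exact h1 _ (hall k) (hk ▸ hRl _)

theorem hasConsecCycles_of_cut (h : Max G c l D) (hcut : ∃ e ∈ D, ¬ Conn G (D.erase e)) :
    HasConsecCycles G 5 := by
  obtain ⟨s, hl⟩ := h.odd
  have hD2 : 2 ≤ D.card := by
    have h1 := h.three_le_dg 0
    have h2 : dg G D (c 0) ≤ D.card := dg_le_card fun _ hw _ => hw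
    omega
  obtain ⟨b, hb, F, hF, ⟨x, hx, hxb, hxF⟩, hFc, hDv, hB⟩ := h.conn.exists_end hD2 hcut
  have hbF : b ∉ F := hF.notMem (by simp)
  have hFD := hF.subset
  have hFB : ∀ v ∈ F, ∀ y ∈ D, G.Adj v y → y ∈ insert b F := fun v hv y hy ha => by
    have := hF.adj hv hy ha
    grind
  have hBD : insert b F ⊆ D := Finset.insert_subset hb hFD
  have hdB : ∀ v ∈ F, 3 ≤ dg G (insert b F) v := fun v hv =>
    (h.three_le_dg_of_conn (hFD hv) (hDv v hv)).trans (dg_mono (hFB v hv))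
  by_cases hall : ∀ v ∈ F, 4 ≤ dg G D v
  · have hinst : ∀ i, (∃ d ∈ F, G.Adj (c i) d) → Span (Len G F (nb G {c i}) (nb G {b})) 3 := by
      rintro i ⟨d, hd, ha⟩
      obtain ⟨-, a, haF, hab⟩ := hF.adj_cut h.conn hb hbF
      refine Inst.span3 ⟨hFc, ⟨d, mem_nb_singleton.2 ha.symm, hd⟩,
        ⟨a, mem_nb_singleton.2 hab, haF⟩, h.hdeg fun v hv => ?_, fun e K hK => ?_⟩
      · have h1 := hall v hv
        have h2 := hF.dg_le_nb hv
        unfold rdeg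
        omega
      · obtain ⟨u, hu⟩ := hK.1
        have huF := hK.subset hu
        by_cases heF : e ∈ F
        · obtain ⟨p, hp, q, hq, hpK, hqK, hpq⟩ :=
            (hB e (Finset.mem_insert_of_mem heF)).exists_adj (S := K) (u := u) (v := b)
            (Finset.mem_erase.2 ⟨fun hh => hK.notMem (by simp [hh]) hu,
              Finset.mem_insert_of_mem huF⟩)
            (Finset.mem_erase.2 ⟨by rintro rfl; exact hbF heF, Finset.mem_insert_self _ _⟩) hu
            (fun hh => hbF (hK.subset hh))
          refine ⟨p, hpK, .inr (mem_nb_singleton.2 ?_)⟩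
          by_cases hqb : q = b
          · rwa [← hqb]
          · have := hK.adj hpK (v := q) (by grind) hpq
            grind
        · refine ⟨a, hFc.2 K hK.subset hK.1 (fun x hx y hy hxy => ?_) haF,
            .inr (mem_nb_singleton.2 hab)⟩
          have := hK.adj hx hy hxy
          grind
    have hthrough : ∀ i j, (∃ d ∈ F, G.Adj (c i) d) → (∃ d ∈ D \ F, G.Adj (c j) d) →
        Span (Len G D (nb G {c i}) (nb G {c j})) 3 := by
      rintro i j hi ⟨d, hd, ha⟩
      exact Len.through (hinst i hi) (hF.conn_sdiff h.conn hb) (Finset.mem_sdiff.2 ⟨hb, hbF⟩)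
        ⟨d, mem_nb_singleton.2 ha.symm, hd⟩ Finset.disjoint_sdiff hFD Finset.sdiff_subset
    have hcb : ∀ i, c i ≠ b := fun i hi => h.disj i (hi ▸ hb)
    have hatt : ∀ E ⊆ D, E.Nonempty → b ∉ E →
        ∃ u ∈ E, ∃ v, v ∉ E ∧ v ≠ b ∧ G.Adj u v := by
      intro E hED hE hbE
      obtain ⟨u, hu, v, hv, hvb, ha⟩ := h.big.attach E {b} hE (by grind) (by simp) (c 0)
        (fun hh => h.disj 0 (hED hh)) (by simpa using hcb 0)
      exact ⟨u, hu, v, hv, by simpa using hvb, ha⟩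
    obtain ⟨i, hi⟩ := exists_antipodal (P := fun i => ∃ d ∈ F, G.Adj (c i) d)
      (R := fun i => ∃ d ∈ D \ F, G.Adj (c i) d) hl
      (fun i => by rw [h.cyc.per]) (fun i => by rw [h.cyc.per])
      (fun i => by
        obtain ⟨d, hd, ha⟩ := h.exists_adj i
        by_cases hdF : d ∈ F
        · exact .inl ⟨d, hdF, ha⟩
        · exact .inr ⟨d, Finset.mem_sdiff.2 ⟨hd, hdF⟩, ha⟩)
      (by
        obtain ⟨u, hu, v, hv, hvb, ha⟩ := hatt F hFD hF.1 hbF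
        have hvD : v ∉ D := fun hvD => by
          have := hF.adj hu hvD ha
          grind
        obtain ⟨j, rfl⟩ := h.eq_of_adj (hFD hu) hvD ha
        exact ⟨j, u, hu, ha.symm⟩)
      (by
        obtain ⟨u, hu, v, hv, hvb, ha⟩ := hatt (D \ insert b F) Finset.sdiff_subset
          ⟨x, by grind⟩ (by grind)
        have hvD : v ∉ D := fun hvD => by
          have hvF : v ∈ F := by grind
          have := hFB v hvF u (by grind) ha.symm
          grind
        obtain ⟨j, rfl⟩ := h.eq_of_adj (D := D) (by grind) hvD ha
        exact ⟨j, u, by grind, ha.symm⟩)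
    rcases hi with ⟨h1, h2⟩ | ⟨h1, h2⟩
    · exact h.hasConsecCycles_of_span_three hl (hthrough _ _ h1 h2)
    · exact h.hasConsecCycles_of_span_three hl (spanLen_comm (hthrough _ _ h2 h1))
  · push Not at hall
    obtain ⟨w, hw, hlt⟩ := hall
    rcases h.dg_or_exists_adj (hFD hw) (hDv w hw) with h1 | ⟨-, i, hi, hi2⟩
    · omega
    have hbw : b ≠ w := by
      rintro rfl
      exact hbF hw
    have hbase : ∀ T : Finset V, (∃ t ∈ T, t ∈ (insert b F).erase w) →
        Span (Len G ((insert b F).erase w) (nb G {w}) T) 1 := fun T hT =>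
      (Base.of_erase hB (Finset.mem_insert_of_mem hw) (Finset.mem_insert_self _ _) hbw
        (by have := hdB w hw; omega) (fun v hv hvb => hdB v (by grind)) hT).span
    obtain ⟨d, hd, ha, hdw⟩ := exists_adj_ne_of_dg (G := G) (D := D) (v := c (i + 1 + s))
      (by have := h.three_le_dg (i + 1 + s); omega) w
    by_cases hdB' : d ∈ insert b F
    · exact h.hasConsecCycles_of_span_one hl (hFD hw) hi hi2
        ((Finset.erase_subset _ _).trans hBD) (by simp)
        (hbase _ ⟨d, mem_nb_singleton.2 ha.symm, Finset.mem_erase.2 ⟨hdw, hdB'⟩⟩)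
    · obtain ⟨K, hK, hKc, hdK⟩ := exists_comp_of_mem (G := G) hd hdB'
      have hKB : ∀ y ∈ K, y ∉ insert b F := fun y hy hh => hK.notMem hh hy
      obtain ⟨u, hu, v, hv, hvB, huv⟩ := hK.exists_adj h.conn hb
        (hK.notMem (Finset.mem_insert_self _ _))
      have hvb : v = b := by
        by_contra hvb
        exact hKB u hu (hFB v (by grind) u (hK.subset hu) huv.symm)
      subst hvb
      obtain ⟨m, hm⟩ := hKc.exists_path hu hdK
      refine h.hasConsecCycles_of_span_one (E := (insert v F).erase w ∪ K) hl (hFD hw) hi hi2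
        (Finset.union_subset ((Finset.erase_subset _ _).trans hBD) hK.subset) ?_
        ((hbase {v} ⟨v, by simp, Finset.mem_erase.2 ⟨hbw, Finset.mem_insert_self _ _⟩⟩).shift m ?_)
      · have := hKB w
        grind
      · rintro n ⟨p, hp, q, hq, hpq⟩
        obtain rfl := Finset.mem_singleton.1 hq
        refine ⟨p, hp, d, mem_nb_singleton.2 ha.symm, hpq.append hm huv.symm ?_
          Finset.subset_union_left Finset.subset_union_right⟩
        rw [Finset.disjoint_left]
        grind

theorem hasConsecCycles (h : Max G c l D) : HasConsecCycles G 5 := by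
  by_cases hD : ∀ e ∈ D, Conn G (D.erase e)
  · exact h.hasConsecCycles_of_conn hD
  · push Not at hD
    exact h.hasConsecCycles_of_cut hD

end Max

theorem Cyc.exists_oddCyc_ne_univ (hc : Cyc G c l) (hl : Odd l) (h5 : 5 ≤ l)
    (hdeg : ∀ v, 5 ≤ dg G Finset.univ v) : ∃ E, OddCyc G E ∧ ∃ z, z ∉ E := by
  have hE : OddCyc G ((Finset.range l).image c) := by
    have h1 := hc.arc (k := l - 1) (by omega) 0
    have h2 := hc.adj (l - 1)
    have h0 : c l = c 0 := by simpa using hc.per 0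
    rw [show l - 1 + 1 = l by omega] at h1 h2
    rw [h0] at h2
    rw [zero_add] at h1
    refine ⟨_, _, _, h1.mono (Finset.image_subset_image fun x => ?_), hl, by omega, h2⟩
    rw [Finset.mem_Icc, Finset.mem_range]
    omega
  by_cases hz : ∃ z, z ∉ (Finset.range l).image c
  · exact ⟨_, hE, hz⟩
  push Not at hz
  obtain ⟨k, hk, hkl, ha⟩ : ∃ k, 2 ≤ k ∧ k + 2 ≤ l ∧ G.Adj (c 0) (c k) := by
    by_contra! hno
    have h1 : dg G Finset.univ (c 0) ≤ ({c 1, c (l - 1)} : Finset V).card :=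
      dg_le_card fun v _ ha => by
        obtain ⟨k, hk, rfl⟩ := Finset.mem_image.1 (hz v)
        rw [Finset.mem_range] at hk
        have hk0 : k ≠ 0 := by rintro rfl; exact ha.ne rfl
        by_cases hk1 : k = 1
        · simp [hk1]
        by_cases hk2 : k = l - 1
        · simp [hk2]
        exact absurd ha (hno k (by omega) (by omega))
    have h2 : ({c 1, c (l - 1)} : Finset V).card ≤ 2 := Finset.card_le_two
    have := hdeg (c 0)
    omega
  obtain ⟨E, hE, -, hEm⟩ := hc.ear hl (P := ∅) hk hkl (.single (by simp)) (by simp) ha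
  rcases hEm with h1 | h1
  · exact ⟨E, hE, c 1, h1 1 (by omega) (by omega)⟩
  · exact ⟨E, hE, c (k + 1), h1 (k + 1) (by omega) (by omega)⟩

theorem Big.hasConsecCycles (hG : Big G) (hnb : ¬ G.Colorable 2) : HasConsecCycles G 5 := by
  by_cases htri : ∃ x y z, G.Adj x y ∧ G.Adj x z ∧ G.Adj y z
  · obtain ⟨x, y, z, hxy, hxz, hyz⟩ := htri
    exact hG.hasConsecCycles_of_triangle hxy hxz hyz
  have hfree : ∀ x y z, G.Adj x y → G.Adj x z → ¬ G.Adj y z := fun x y z h1 h2 h3 =>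
    htri ⟨x, y, z, h1, h2, h3⟩
  have hex : ∃ n, ∃ E D, OddCyc G E ∧ Conn G D ∧ Disjoint D E ∧ D.card = n := by
    obtain ⟨c, l, hc, hl⟩ := exists_cyc_of_not_colorable hnb
    have h5 : 5 ≤ l := by
      by_contra hlt
      have h0 : c l = c 0 := by simpa using hc.per 0
      obtain rfl | rfl : l = 1 ∨ l = 3 := by
        rcases hl with ⟨a, rfl⟩
        omega
      · exact (hc.adj 0).ne h0.symm
      · exact hfree _ _ _ (hc.adj 0) (h0 ▸ (hc.adj 2).symm) (hc.adj 1)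
    obtain ⟨E, hE, z, hz⟩ := hc.exists_oddCyc_ne_univ hl h5 hG.deg
    exact ⟨_, E, {z}, hE, .singleton z, by simpa using hz, rfl⟩
  classical
  have hbd : ∀ n, (∃ E D, OddCyc G E ∧ Conn G D ∧ Disjoint D E ∧ D.card = n) →
      n ≤ Fintype.card V := by
    rintro n ⟨E, D, -, -, -, rfl⟩
    exact Finset.card_le_univ D
  obtain ⟨n, hn⟩ := hex
  obtain ⟨E, D, hE, hD, hDE, hcard⟩ := Nat.findGreatest_spec
    (P := fun n => ∃ E D, OddCyc G E ∧ Conn G D ∧ Disjoint D E ∧ D.card = n) (hbd n hn) hn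
  obtain ⟨c, l, hc, hl, -, hcE⟩ := hE.exists_cyc
  refine Max.hasConsecCycles (c := c) (l := l) (D := D)
    ⟨hG, hfree, hc, hl, hD, fun i hi => Finset.disjoint_left.1 hDE hi (hcE i), ?_⟩
  intro E' D' hE' hD' hDE'
  have h : ∃ E D, OddCyc G E ∧ Conn G D ∧ Disjoint D E ∧ D.card = D'.card :=
    ⟨E', D', hE', hD', hDE', rfl⟩
  rw [hcard]
  exact Nat.le_findGreatest (hbd _ h) h

end

end ConsecCycles

/-- Every 3-connected nonbipartite graph of minimum degree at least 5 and order at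
least 7 contains 5 cycles of consecutive lengths. -/
theorem consec_cycles_5 {V : Type*} [Fintype V] (G : SimpleGraph V)
    (h3 : KConnected G 3) (hnb : ¬ G.Colorable 2)
    (hdeg : ∀ v, 5 ≤ (G.neighborSet v).ncard) (hcard : 7 ≤ Nat.card V) :
    HasConsecCycles G 5 := by
  classical
  exact (ConsecCycles.Big.of_kConnected h3 hdeg hcard).hasConsecCycles hnb
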